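/- arXiv:2207.09972 — 2 statements merged into one kernel-verified Lean document; each statement's English description precedes it below -/
import Mathlib

section
/- There is an absolute constant C such that for every integer k ≥ 3 and every n ≥ 2, the mixing time of the lazy k-angulation flip walk on the k-angulations of the convex ((k−2)n+2)-gon is at most n^{C·k·log n}; that is, for every integer t ≥ n^{C·k·log n} and every starting k-angulation x, the total variation distance between the distribution of the walk after t steps and the uniform distribution on all k-angulations is at most 1/4. -/
open Finset

/-- `x` lies strictly between `a` and `b` in cyclic (counterclockwise) order
on the vertices `0, 1, …, m-1` of a convex `m`-gon. -/
def CycBtw {m : ℕ} (a b x : Fin m) : Prop :=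
  0 < (x - a).val ∧ (x - a).val < (b - a).val

/-- `a` and `b` are adjacent (cyclically consecutive) vertices of the convex `m`-gon. -/
def PolyAdj {m : ℕ} (a b : Fin m) : Prop :=
  (b - a).val = 1 ∨ (a - b).val = 1

/-- `e` is a side of the convex `m`-gon. -/
def IsSide {m : ℕ} (e : Sym2 (Fin m)) : Prop :=
  ∃ a b : Fin m, e = s(a, b) ∧ PolyAdj a b

/-- `e` is a diagonal of the convex `m`-gon: a pair of distinct non-adjacent vertices. -/
def IsDiagonal {m : ℕ} (e : Sym2 (Fin m)) : Prop :=
  ¬ e.IsDiag ∧ ∀ a b : Fin m, e = s(a, b) → ¬ PolyAdj a b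

/-- Two chords cross iff exactly one endpoint of one lies strictly between the
endpoints of the other (for every representation of the endpoints). -/
def Crosses {m : ℕ} (e f : Sym2 (Fin m)) : Prop :=
  ∀ a b : Fin m, e = s(a, b) →
    ∃ c d : Fin m, f = s(c, d) ∧ Xor' (CycBtw a b c) (CycBtw a b d)

/-- `e` is an edge of the dissection given by the diagonal set `t`:
a polygon side or a diagonal of `t`. -/
def EdgeOfD {m : ℕ} (t : Finset (Sym2 (Fin m))) (e : Sym2 (Fin m)) : Prop :=
  IsSide e ∨ e ∈ t

/-- `b` is the cyclic successor of `a` among the elements of `F`. -/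
def NextIn {m : ℕ} (F : Finset (Fin m)) (a b : Fin m) : Prop :=
  a ∈ F ∧ b ∈ F ∧ a ≠ b ∧ ∀ x ∈ F, ¬ CycBtw a b x

/-- `F` is the vertex set of a cell (face) of the dissection of the convex `m`-gon by the
pairwise non-crossing diagonal set `t`: every pair of cyclically consecutive vertices of
`F` is joined by an edge of the dissection, and no diagonal of `t` joins two
non-consecutive vertices of `F`. -/
def IsFaceSet {m : ℕ} (t : Finset (Sym2 (Fin m))) (F : Finset (Fin m)) : Prop :=
  3 ≤ F.card ∧
  (∀ a b : Fin m, NextIn F a b → EdgeOfD t s(a, b)) ∧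
  (∀ e ∈ t, ∀ a b : Fin m, e = s(a, b) → a ∈ F → b ∈ F → NextIn F a b ∨ NextIn F b a)

/-- `t` is a `k`-angulation of the convex `((k-2)n+2)`-gon: a set of `n - 1` pairwise
non-crossing diagonals subdividing the polygon into cells that are all `k`-gons. -/
def IsKAngulation (k n : ℕ) (t : Finset (Sym2 (Fin ((k - 2) * n + 2)))) : Prop :=
  (∀ e ∈ t, IsDiagonal e) ∧
  (∀ e ∈ t, ∀ f ∈ t, ¬ Crosses e f) ∧
  t.card = n - 1 ∧
  (∀ F : Finset (Fin ((k - 2) * n + 2)), IsFaceSet t F → F.card = k)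

/-- The type of `k`-angulations of the convex `((k-2)n+2)`-gon. -/
def KAngulation (k n : ℕ) : Type :=
  {t : Finset (Sym2 (Fin ((k - 2) * n + 2))) // IsKAngulation k n t}

instance (k n : ℕ) : DecidableEq (KAngulation k n) := fun a b =>
  decidable_of_iff (a.val = b.val) Subtype.ext_iff.symm

noncomputable instance (k n : ℕ) : Fintype (KAngulation k n) := by
  classical exact Subtype.fintype _

/-- The `k`-angulation flip graph `K_{k,(k-2)n+2}`: vertices are the `k`-angulations of
the convex `((k-2)n+2)`-gon, two of them adjacent iff they differ in exactly one
diagonal (a flip). -/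
def kAngGraph (k n : ℕ) : SimpleGraph (KAngulation k n) where
  Adj s t := (s.val \ t.val).card = 1 ∧ (t.val \ s.val).card = 1
  symm := ⟨fun s t h => ⟨h.2, h.1⟩⟩
  loopless := ⟨fun s h => by simp at h⟩

open Classical in
/-- The transition matrix of the lazy `k`-angulation flip walk: from a `k`-angulation,
with probability 1/2 stay put, otherwise pick one of the `n - 1` diagonals uniformly at
random and apply one of its `k - 2` possible flips chosen uniformly at random. -/
noncomputable def kFlipWalkMatrix (k n : ℕ) :
    Matrix (KAngulation k n) (KAngulation k n) ℝ := fun s t =>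
  if (kAngGraph k n).Adj s t then 1 / (2 * ((n : ℝ) - 1) * ((k : ℝ) - 2))
  else if s = t then 1 / 2 else 0

/-!
A `(κ + 2)`-angulation of the polygon with vertices `0, …, κ n + 1` is stored as the set of its
diagonals together with the root side, as ordered pairs. The numbers of chords whose left endpoint
is smaller than `j` form, as a function of `j`, a monotone lattice path above a fixed barrier, and
this is a bijection between angulations and lattice paths.

Resampling a random height of a lattice path is a Markov chain for which the monotone coupling
contracts a weighted area distance, the weight `a (M - a)` having constant discrete Laplacian.
Since the chain is reversible, this contraction gives a Poincaré inequality, which telescopes to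
one for moves changing a single height by one. Such a move is simulated by a ladder of at most
`κ n + 2` flips. A rung of a ladder, together with three vertices, determines the ladder, so the
Poincaré inequality carries over to flips with a loss polynomial in `κ n`. As the flip graph is
regular, the lazy flip walk is doubly stochastic with inverse spectral gap polynomial in
`m = (k - 2) n + 2`, and since there are at most `2 ^ (m ^ 2)` angulations it mixes in time
`m ^ 15`.
-/

/-! ### Mixing of lazy doubly stochastic chains -/

section LazyChain

open Matrix

variable {V : Type*} [Fintype V] [DecidableEq V] {P : Matrix V V ℝ}

/-- The Dirichlet form of the chain with transition matrix `P` and uniform stationary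
distribution, without the normalising factor `1 / card V`. -/
noncomputable def dirichletForm (P : Matrix V V ℝ) (g : V → ℝ) : ℝ :=
  1 / 2 * ∑ x, ∑ y, P x y * (g x - g y) ^ 2

theorem vecMul_dotProduct_self_le (hP : P ∈ doublyStochastic ℝ V) (g : V → ℝ) :
    (g ᵥ* P) ⬝ᵥ (g ᵥ* P) ≤ g ⬝ᵥ g := by
  have jensen (y : V) : (g ᵥ* P) y ^ 2 ≤ ∑ x, P x y * g x ^ 2 := by
    have h := Real.pow_arith_mean_le_arith_mean_pow_of_even univ (fun x => P x y) g
      (fun _ _ => nonneg_of_mem_doublyStochastic hP) (sum_col_of_mem_doublyStochastic hP y)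
      even_two
    simpa only [vecMul, dotProduct, mul_comm] using h
  calc (g ᵥ* P) ⬝ᵥ (g ᵥ* P) = ∑ y, (g ᵥ* P) y ^ 2 := by simp only [dotProduct, sq]
    _ ≤ ∑ y, ∑ x, P x y * g x ^ 2 := sum_le_sum fun y _ => jensen y
    _ = g ⬝ᵥ g := by
        rw [sum_comm]
        simp only [← sum_mul, sum_row_of_mem_doublyStochastic hP, one_mul, dotProduct, sq]

theorem two_smul_sub_one_mem_doublyStochastic (hP : P ∈ doublyStochastic ℝ V)
    (hlazy : ∀ x, 1 / 2 ≤ P x x) : (2 : ℝ) • P - 1 ∈ doublyStochastic ℝ V := by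
  refine mem_doublyStochastic_iff_sum.2 ⟨fun x y => ?_, fun x => ?_, fun y => ?_⟩
  · rcases eq_or_ne x y with rfl | hxy
    · simp only [Matrix.sub_apply, Matrix.smul_apply, one_apply_eq, smul_eq_mul]
      linarith [hlazy x]
    · simpa [one_apply_ne hxy] using nonneg_of_mem_doublyStochastic hP
  · simp only [Matrix.sub_apply, Matrix.smul_apply, smul_eq_mul, sum_sub_distrib,
      ← mul_sum, sum_row_of_mem_doublyStochastic hP, one_apply, sum_ite_eq, mem_univ, if_true]
    norm_num
  · simp only [Matrix.sub_apply, Matrix.smul_apply, smul_eq_mul, sum_sub_distrib,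
      ← mul_sum, sum_col_of_mem_doublyStochastic hP, one_apply, sum_ite_eq', mem_univ, if_true]
    norm_num

-- `2P - 1` is a contraction, and `‖(2P - 1)g‖² ≤ ‖g‖²` expands to this inequality.
theorem vecMul_dotProduct_self_le_vecMul_dotProduct (hP : P ∈ doublyStochastic ℝ V)
    (hlazy : ∀ x, 1 / 2 ≤ P x x) (g : V → ℝ) : (g ᵥ* P) ⬝ᵥ (g ᵥ* P) ≤ (g ᵥ* P) ⬝ᵥ g := by
  have h := vecMul_dotProduct_self_le (two_smul_sub_one_mem_doublyStochastic hP hlazy) g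
  simp only [vecMul_sub, vecMul_smul, vecMul_one, sub_dotProduct, dotProduct_sub, smul_dotProduct,
    dotProduct_smul, smul_eq_mul] at h
  rw [dotProduct_comm g (g ᵥ* P)] at h
  linarith

theorem vecMul_dotProduct_eq_sub_dirichletForm (hP : P ∈ doublyStochastic ℝ V) (g : V → ℝ) :
    (g ᵥ* P) ⬝ᵥ g = g ⬝ᵥ g - dirichletForm P g := by
  have hrow : ∑ x, ∑ y, P x y * g x ^ 2 = g ⬝ᵥ g := by
    simp only [← sum_mul, sum_row_of_mem_doublyStochastic hP, one_mul, dotProduct, sq]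
  have hcol : ∑ x, ∑ y, P x y * g y ^ 2 = g ⬝ᵥ g := by
    rw [sum_comm]
    simp only [← sum_mul, sum_col_of_mem_doublyStochastic hP, one_mul, dotProduct, sq]
  have hcross : ∑ x, ∑ y, P x y * (g x * g y) = (g ᵥ* P) ⬝ᵥ g := by
    rw [sum_comm]
    simp only [vecMul, dotProduct, sum_mul]
    exact sum_congr rfl fun y _ => sum_congr rfl fun x _ => by ring
  have hexpand : ∑ x, ∑ y, P x y * (g x - g y) ^ 2 =
      ∑ x, ∑ y, P x y * g x ^ 2 + ∑ x, ∑ y, P x y * g y ^ 2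
        - 2 * ∑ x, ∑ y, P x y * (g x * g y) := by
    simp only [mul_sum, ← sum_add_distrib, ← sum_sub_distrib]
    exact sum_congr rfl fun x _ => sum_congr rfl fun y _ => by ring
  rw [dirichletForm, hexpand, hrow, hcol, hcross]
  ring

theorem sum_vecMul_of_mem_doublyStochastic (hP : P ∈ doublyStochastic ℝ V) (g : V → ℝ) :
    ∑ y, (g ᵥ* P) y = ∑ x, g x := by
  simpa only [mulVec_transpose] using
    sum_mulVec_of_mem_doublyStochastic (x := g) (transpose_mem_doublyStochastic_iff.2 hP)

theorem vecMul_pow_dotProduct_self_le (hP : P ∈ doublyStochastic ℝ V)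
    (hlazy : ∀ x, 1 / 2 ≤ P x x) {γ : ℝ} (hγ : γ ≤ 1)
    (hgap : ∀ g : V → ℝ, ∑ x, g x = 0 → γ * g ⬝ᵥ g ≤ dirichletForm P g)
    {g : V → ℝ} (hg : ∑ x, g x = 0) (t : ℕ) :
    (g ᵥ* P ^ t) ⬝ᵥ (g ᵥ* P ^ t) ≤ (1 - γ) ^ t * g ⬝ᵥ g := by
  induction t with
  | zero => simp
  | succ t ih =>
    set h := g ᵥ* P ^ t
    have hh : ∑ x, h x = 0 := by
      rw [← hg]; exact sum_vecMul_of_mem_doublyStochastic (pow_mem hP t) g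
    calc (g ᵥ* P ^ (t + 1)) ⬝ᵥ (g ᵥ* P ^ (t + 1)) = (h ᵥ* P) ⬝ᵥ (h ᵥ* P) := by
          rw [pow_succ, ← vecMul_vecMul]
      _ ≤ (h ᵥ* P) ⬝ᵥ h := vecMul_dotProduct_self_le_vecMul_dotProduct hP hlazy h
      _ = h ⬝ᵥ h - dirichletForm P h := vecMul_dotProduct_eq_sub_dirichletForm hP h
      _ ≤ (1 - γ) * h ⬝ᵥ h := by linarith [hgap h hh]
      _ ≤ (1 - γ) * ((1 - γ) ^ t * g ⬝ᵥ g) :=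
          mul_le_mul_of_nonneg_left ih (sub_nonneg.2 hγ)
      _ = (1 - γ) ^ (t + 1) * g ⬝ᵥ g := by ring

theorem sum_sq_pow_apply_sub_le (hP : P ∈ doublyStochastic ℝ V)
    (hlazy : ∀ x, 1 / 2 ≤ P x x) {γ : ℝ} (hγ : γ ≤ 1)
    (hgap : ∀ g : V → ℝ, ∑ x, g x = 0 → γ * g ⬝ᵥ g ≤ dirichletForm P g) (x : V) (t : ℕ) :
    ∑ y, ((P ^ t) x y - 1 / (Fintype.card V : ℝ)) ^ 2 ≤ (1 - γ) ^ t := by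
  have hN : (0 : ℝ) < Fintype.card V := by exact_mod_cast Fintype.card_pos_iff.2 ⟨x⟩
  set c : ℝ := 1 / (Fintype.card V : ℝ)
  have hcN : (Fintype.card V : ℝ) * c = 1 := mul_one_div_cancel hN.ne'
  set g : V → ℝ := Pi.single x 1 - fun _ => c with hg
  have hg0 : ∑ y, g y = 0 := by
    simp [hg, hcN]
  have hconst : (fun _ => c) ᵥ* P ^ t = fun _ => c := by
    ext y
    simp only [vecMul, dotProduct, ← mul_sum, sum_col_of_mem_doublyStochastic (pow_mem hP t),
      mul_one]
  have hstep : g ᵥ* P ^ t = fun y => (P ^ t) x y - c := by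
    rw [hg, sub_vecMul, single_one_vecMul, hconst]
    rfl
  have hnorm : g ⬝ᵥ g ≤ 1 := by
    have : g ⬝ᵥ g = 1 - c := by
      rw [hg, dotProduct_sub, dotProduct_single, sub_dotProduct, single_dotProduct]
      simp [dotProduct, ← mul_assoc, hcN]
    have : 0 < c := by positivity
    linarith
  have h := vecMul_pow_dotProduct_self_le hP hlazy hγ hgap hg0 t
  rw [hstep] at h
  simp only [dotProduct, ← sq] at h
  exact h.trans (mul_le_of_le_one_right (pow_nonneg (sub_nonneg.2 hγ) t)
    (by simpa only [dotProduct, ← sq] using hnorm))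

theorem exp_neg_two_le_one_div_four : Real.exp (-2) ≤ 1 / 4 := by
  have h1 : (2 : ℝ) ≤ Real.exp 1 := by linarith [Real.add_one_le_exp (1 : ℝ)]
  have h2 : Real.exp 2 = Real.exp 1 * Real.exp 1 := by rw [← Real.exp_add]; norm_num
  rw [Real.exp_neg, inv_eq_one_div]
  exact one_div_le_one_div_of_le (by norm_num) (by nlinarith)

theorem tv_dist_uniform_le_of_poincare (hP : P ∈ doublyStochastic ℝ V)
    (hlazy : ∀ x, 1 / 2 ≤ P x x) {γ B : ℝ} (hγ : γ ≤ 1)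
    (hgap : ∀ g : V → ℝ, ∑ x, g x = 0 → γ * g ⬝ᵥ g ≤ dirichletForm P g)
    (hcard : (Fintype.card V : ℝ) ≤ Real.exp B) {t : ℕ} (ht : B + 2 ≤ γ * t) (x : V) :
    (1 / 2 : ℝ) * ∑ y, |(P ^ t) x y - 1 / (Fintype.card V : ℝ)| ≤ 1 / 4 := by
  set D := ∑ y, |(P ^ t) x y - 1 / (Fintype.card V : ℝ)|
  have hdecay : (1 - γ) ^ t ≤ Real.exp (-(γ * t)) :=
    calc (1 - γ) ^ t ≤ Real.exp (-γ) ^ t :=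
          pow_le_pow_left₀ (sub_nonneg.2 hγ) (Real.one_sub_le_exp_neg γ) t
      _ = Real.exp (-(γ * t)) := by rw [← Real.exp_nat_mul]; congr 1; ring
  have hsq : D ^ 2 ≤ 1 / 4 :=
    calc D ^ 2 ≤ Fintype.card V * ∑ y, ((P ^ t) x y - 1 / (Fintype.card V : ℝ)) ^ 2 := by
          simpa only [sq_abs, card_univ] using sq_sum_le_card_mul_sum_sq (s := (univ : Finset V))
            (f := fun y => |(P ^ t) x y - 1 / (Fintype.card V : ℝ)|)
      _ ≤ Real.exp B * Real.exp (-(γ * t)) :=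
          mul_le_mul hcard ((sum_sq_pow_apply_sub_le hP hlazy hγ hgap x t).trans hdecay)
            (sum_nonneg fun _ _ => sq_nonneg _) (Real.exp_pos _).le
      _ = Real.exp (B - γ * t) := by rw [← Real.exp_add, sub_eq_add_neg]
      _ ≤ Real.exp (-2) := Real.exp_le_exp.2 (by linarith)
      _ ≤ 1 / 4 := exp_neg_two_le_one_div_four
  have hD0 : 0 ≤ D := sum_nonneg fun _ _ => abs_nonneg _
  nlinarith

end LazyChain

/-! ### Log-convexity, monotone coupling, telescoping -/

section AnalyticTools

open scoped BigOperators

theorem le_mul_of_logConvex_of_le_geometric {b : ℕ → ℝ} (hb : ∀ t, 0 ≤ b t)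
    (hlc : ∀ t, b (t + 1) ^ 2 ≤ b t * b (t + 2)) {C r : ℝ} (hr : 0 < r)
    (hC : ∀ t, b t ≤ C * r ^ t) : b 1 ≤ r * b 0 := by
  by_contra! hlt
  have hb1 : 0 < b 1 := (mul_nonneg hr.le (hb 0)).trans_lt hlt
  have hb0 : 0 < b 0 := (hb 0).lt_of_ne fun h => absurd (hlc 0) (by
    rw [← h, zero_mul]; exact not_le.2 (sq_pos_of_pos hb1))
  set s := b 1 / b 0
  have hs0 : 0 < s := div_pos hb1 hb0
  have hrs : r < s := (lt_div_iff₀ hb0).2 hlt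
  have ratio (t : ℕ) : 0 < b t ∧ s * b t ≤ b (t + 1) := by
    induction t with
    | zero => exact ⟨hb0, (div_mul_cancel₀ _ hb0.ne').le⟩
    | succ t ih =>
      have hpos : 0 < b (t + 1) := (mul_pos hs0 ih.1).trans_le ih.2
      refine ⟨hpos, le_of_mul_le_mul_left ?_ ih.1⟩
      calc b t * (s * b (t + 1)) = s * b t * b (t + 1) := by ring
        _ ≤ b (t + 1) * b (t + 1) := mul_le_mul_of_nonneg_right ih.2 hpos.le
        _ ≤ b t * b (t + 2) := by rw [← sq]; exact hlc t
  have geometric (t : ℕ) : s ^ t * b 0 ≤ b t := by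
    induction t with
    | zero => simp
    | succ t ih =>
      calc s ^ (t + 1) * b 0 = s * (s ^ t * b 0) := by ring
        _ ≤ s * b t := mul_le_mul_of_nonneg_left ih hs0.le
        _ ≤ b (t + 1) := (ratio t).2
  obtain ⟨t, ht⟩ := pow_unbounded_of_one_lt (C / b 0) ((one_lt_div hr).2 hrs)
  rw [div_pow, div_lt_div_iff₀ hb0 (pow_pos hr t)] at ht
  linarith [(geometric t).trans (hC t)]

-- By symmetry `b t = ‖Q^t f‖²` is log-convex, so one step cannot decay slower than `r ^ t`.
theorem sum_mul_apply_le_of_abs_iterate_le {α : Type*} {s : Finset α} {Q : (α → ℝ) → α → ℝ}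
    (hQ : ∀ f g, ∑ x ∈ s, g x * Q f x = ∑ x ∈ s, Q g x * f x) {f : α → ℝ} {C r : ℝ} (hr : 0 < r)
    (hC : ∀ t, ∀ x ∈ s, |Q^[t] f x| ≤ C * r ^ t) :
    ∑ x ∈ s, f x * Q f x ≤ r * ∑ x ∈ s, f x ^ 2 := by
  set b : ℕ → ℝ := fun t => ∑ x ∈ s, Q^[t] f x ^ 2 with hbdef
  have hb (t : ℕ) : 0 ≤ b t := sum_nonneg fun _ _ => sq_nonneg _
  have hlc (t : ℕ) : b (t + 1) ^ 2 ≤ b t * b (t + 2) := by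
    have hshift : b (t + 1) = ∑ x ∈ s, Q^[t] f x * Q^[t + 2] f x := by
      rw [Function.iterate_succ_apply' Q (t + 1), hQ, ← Function.iterate_succ_apply' Q t]
      simp only [hbdef, sq]
    rw [hshift]
    exact sum_mul_sq_le_sq_mul_sq s _ _
  have hdecay (t : ℕ) : b t ≤ (#s * C ^ 2) * (r ^ 2) ^ t := by
    have hpt : ∀ x ∈ s, Q^[t] f x ^ 2 ≤ (C * r ^ t) ^ 2 := fun x hx => by
      rw [← sq_abs]
      exact pow_le_pow_left₀ (abs_nonneg _) (hC t x hx) 2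
    refine (sum_le_card_nsmul s _ _ hpt).trans_eq ?_
    rw [nsmul_eq_mul]
    ring
  have hstep : b 1 ≤ r ^ 2 * b 0 :=
    le_mul_of_logConvex_of_le_geometric hb hlc (sq_pos_of_pos hr) hdecay
  refine le_of_sq_le_sq ?_ (mul_nonneg hr.le (hb 0))
  calc (∑ x ∈ s, f x * Q f x) ^ 2 ≤ b 0 * b 1 := sum_mul_sq_le_sq_mul_sq s _ _
    _ ≤ b 0 * (r ^ 2 * b 0) := mul_le_mul_of_nonneg_left hstep (hb 0)
    _ = (r * b 0) ^ 2 := by ring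

theorem abs_le_two_mul_of_sum_eq_zero {α : Type*} {s : Finset α} {g : α → ℝ} {c D : ℝ}
    (hg : ∑ x ∈ s, g x = 0) (hD : ∀ x ∈ s, |g x - c| ≤ D) {w : α} (hw : w ∈ s) :
    |g w| ≤ 2 * D := by
  have hcard : (0 : ℝ) < #s := by exact_mod_cast card_pos.2 ⟨w, hw⟩
  have hc : |c| ≤ D := by
    have hsum : #s * c = -∑ x ∈ s, (g x - c) := by
      rw [sum_sub_distrib, hg, sum_const, nsmul_eq_mul, zero_sub, neg_neg]
    refine le_of_mul_le_mul_left ?_ hcard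
    calc #s * |c| = |∑ x ∈ s, (g x - c)| := by
          rw [← abs_neg (∑ x ∈ s, (g x - c)), ← hsum, abs_mul, abs_of_pos hcard]
      _ ≤ ∑ x ∈ s, |g x - c| := abs_sum_le_sum_abs _ _
      _ ≤ #s * D := by simpa only [nsmul_eq_mul] using sum_le_card_nsmul s _ D hD
  calc |g w| = |(g w - c) + c| := by rw [sub_add_cancel]
    _ ≤ |g w - c| + |c| := abs_add_le _ _
    _ ≤ 2 * D := by linarith [hD w hw]

theorem sum_range_mul_div (A : ℕ) {B : ℕ} (hB : 0 < B) (f : ℕ → ℝ) :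
    ∑ j ∈ range (A * B), f (j / B) = B * ∑ v ∈ range A, f v := by
  induction A with
  | zero => simp
  | succ A ih =>
    rw [Nat.succ_mul, sum_range_add, ih, sum_range_succ, mul_add]
    congr 1
    have hconst : ∀ j ∈ range B, f ((A * B + j) / B) = f A := fun j hj => by
      rw [mul_comm, Nat.mul_add_div hB, Nat.div_eq_of_lt (mem_range.1 hj), add_zero]
    rw [sum_congr rfl hconst, sum_const, card_range, nsmul_eq_mul]

theorem sum_Icc_eq_sum_range (l u : ℕ) (f : ℕ → ℝ) :
    ∑ v ∈ Icc l u, f v = ∑ i ∈ range (u + 1 - l), f (l + i) := by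
  rw [← Ico_add_one_right_eq_Icc, sum_Ico_eq_sum_range]

theorem expect_Icc_eq_expect_range_quantile {l u B : ℕ} (hB : 0 < B) (hlu : l ≤ u) (f : ℕ → ℝ) :
    𝔼 v ∈ Icc l u, f v = 𝔼 j ∈ range ((u + 1 - l) * B), f (l + j / B) := by
  have hA : ((u + 1 - l : ℕ) : ℝ) ≠ 0 := by exact_mod_cast (by omega : u + 1 - l ≠ 0)
  have hB' : (B : ℝ) ≠ 0 := by exact_mod_cast hB.ne'
  rw [expect_eq_sum_div_card, expect_eq_sum_div_card, sum_range_mul_div _ hB fun v => f (l + v),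
    sum_Icc_eq_sum_range, Nat.card_Icc, card_range, Nat.cast_mul]
  field_simp

theorem expect_Icc_natCast {l u : ℕ} (hlu : l ≤ u) :
    𝔼 v ∈ Icc l u, (v : ℝ) = ((l : ℝ) + u) / 2 := by
  obtain ⟨d, rfl⟩ := Nat.exists_eq_add_of_le hlu
  have hsum : ∑ i ∈ range (d + 1), ((l + i : ℕ) : ℝ) = (d + 1) * (l + (l + d)) / 2 := by
    induction d with
    | zero => simp
    | succ d ih => rw [sum_range_succ, ih (Nat.le_add_right _ _)]; push_cast; ring
  rw [expect_eq_sum_div_card, sum_Icc_eq_sum_range, Nat.card_Icc,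
    show l + d + 1 - l = d + 1 by omega, hsum]
  push_cast
  field_simp

theorem quantile_le_quantile {l l' A B j : ℕ} (hl : l ≤ l') (hu : l + A ≤ l' + B)
    (hj : j < A * B) : l + j / B ≤ l' + j / A := by
  have hA : 0 < A := Nat.pos_of_mul_pos_right (Nat.zero_lt_of_lt hj)
  have hB : 0 < B := Nat.pos_of_mul_pos_left (Nat.zero_lt_of_lt hj)
  obtain ⟨δ, rfl⟩ := Nat.exists_eq_add_of_le hl
  have hq : j / A < B := (Nat.div_lt_iff_lt_mul hA).2 (by rwa [mul_comm])
  have hqA : j < A * (j / A + 1) := Nat.lt_mul_div_succ j hA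
  have hpB : B * (j / B) ≤ j := Nat.mul_div_le j B
  have hAB : A ≤ B + δ := by omega
  by_contra! h
  nlinarith

-- The quantile coupling of the uniform measures on the two intervals is monotone.
theorem abs_expect_Icc_sub_expect_Icc_le {l u l' u' : ℕ} (hlu : l ≤ u) (hlu' : l' ≤ u')
    (hl : l ≤ l') (hu : u ≤ u') {φ ψ : ℕ → ℝ} {c d : ℝ}
    (h : ∀ v ∈ Icc l u, ∀ v' ∈ Icc l' u', v ≤ v' → |φ v - ψ v'| ≤ c + d * ((v' : ℝ) - v)) :
    |𝔼 v ∈ Icc l u, φ v - 𝔼 v ∈ Icc l' u', ψ v| ≤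
      c + d * (((l' : ℝ) + u') / 2 - ((l : ℝ) + u) / 2) := by
  set A := u + 1 - l with hA
  set B := u' + 1 - l' with hB
  have hA0 : 0 < A := by omega
  have hB0 : 0 < B := by omega
  have qx (g : ℕ → ℝ) := expect_Icc_eq_expect_range_quantile hB0 hlu g
  have qy (g : ℕ → ℝ) := expect_Icc_eq_expect_range_quantile hA0 hlu' g
  rw [← hA] at qx
  rw [← hB, mul_comm B A] at qy
  rw [← expect_Icc_natCast hlu, ← expect_Icc_natCast hlu', qx φ, qy ψ, qx (fun v => (v : ℝ)),
    qy (fun v => (v : ℝ)), ← expect_sub_distrib, ← expect_sub_distrib, mul_expect]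
  have hne : (range (A * B)).Nonempty := nonempty_range_iff.2 (Nat.mul_pos hA0 hB0).ne'
  rw [← expect_const hne c, ← expect_add_distrib]
  refine (abs_expect_le _ _).trans (expect_le_expect fun j hj => ?_)
  have hjAB := mem_range.1 hj
  have hjA : j / B < A := (Nat.div_lt_iff_lt_mul hB0).2 hjAB
  have hjB : j / A < B := (Nat.div_lt_iff_lt_mul hA0).2 (by rwa [mul_comm])
  exact h _ (mem_Icc.2 ⟨Nat.le_add_right _ _, by omega⟩) _
    (mem_Icc.2 ⟨Nat.le_add_right _ _, by omega⟩)
    (quantile_le_quantile hl (by omega) hjAB)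

theorem sq_sub_le_card_mul_sum_sq_succ_sub {φ : ℕ → ℝ} {l h s v : ℕ} (hs : s ∈ Icc l h)
    (hv : v ∈ Icc l h) :
    (φ s - φ v) ^ 2 ≤ (h - l : ℕ) * ∑ u ∈ Ico l h, (φ (u + 1) - φ u) ^ 2 := by
  wlog hvs : v ≤ s generalizing s v
  · rw [← neg_sub, neg_sq]
    exact this hv hs (not_le.1 hvs).le
  rw [mem_Icc] at hs hv
  have hcard : ((Ico v s).card : ℝ) ≤ (h - l : ℕ) := by
    rw [Nat.card_Ico]; exact_mod_cast (by omega : s - v ≤ h - l)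
  calc (φ s - φ v) ^ 2 = (∑ u ∈ Ico v s, (φ (u + 1) - φ u)) ^ 2 := by rw [sum_Ico_sub φ hvs]
    _ ≤ #(Ico v s) * ∑ u ∈ Ico v s, (φ (u + 1) - φ u) ^ 2 := sq_sum_le_card_mul_sum_sq
    _ ≤ (h - l : ℕ) * ∑ u ∈ Ico l h, (φ (u + 1) - φ u) ^ 2 :=
        mul_le_mul hcard (sum_le_sum_of_subset_of_nonneg (Ico_subset_Ico hv.1 hs.2)
          fun _ _ _ => sq_nonneg _) (sum_nonneg fun _ _ => sq_nonneg _) (Nat.cast_nonneg _)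

end AnalyticTools

/-! ### Heat-bath dynamics on lattice paths -/

section LatticePath

open scoped BigOperators

variable {M n : ℕ} {ℓ w x y : ℕ → ℕ} {a v : ℕ} {f : (ℕ → ℕ) → ℝ}

/-- `w` is the height function of a monotone lattice path of length `M` from height `0` to
height `n` (extended by the constant `n`) which stays weakly above the barrier `ℓ`. -/
structure IsLatticePath (M n : ℕ) (ℓ w : ℕ → ℕ) : Prop where
  zero : w 0 = 0
  le_succ : ∀ j, w j ≤ w (j + 1)
  eq_of_le : ∀ j, M ≤ j → w j = n
  barrier_le : ∀ j, ℓ j ≤ w j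

theorem IsLatticePath.apply_le (h : IsLatticePath M n ℓ w) (j : ℕ) : w j ≤ n := by
  rw [← h.eq_of_le (max j M) (le_max_right _ _)]
  exact monotone_nat_of_le_succ h.le_succ (le_max_left _ _)

theorem finite_setOf_isLatticePath (M n : ℕ) (ℓ : ℕ → ℕ) :
    {w | IsLatticePath M n ℓ w}.Finite := by
  refine Set.Finite.of_injOn (f := fun w (j : Fin M) => w j)
    (t := {g : Fin M → ℕ | ∀ j, g j ∈ Set.Iic n}) (fun w hw j => hw.apply_le j)
    (fun x hx y hy hxy => funext fun j => ?_)
    (Set.Finite.pi' fun _ => Set.finite_Iic n)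
  rcases lt_or_ge j M with hj | hj
  · exact congrFun hxy ⟨j, hj⟩
  · rw [hx.eq_of_le j hj, hy.eq_of_le j hj]

/-- The finite set of all lattice paths of length `M` and height `n` above the barrier `ℓ`. -/
noncomputable def latticePaths (M n : ℕ) (ℓ : ℕ → ℕ) : Finset (ℕ → ℕ) :=
  (finite_setOf_isLatticePath M n ℓ).toFinset

theorem mem_latticePaths : w ∈ latticePaths M n ℓ ↔ IsLatticePath M n ℓ w :=
  Set.Finite.mem_toFinset _

/-- The heights to which a path `w` above the barrier `ℓ` can be moved at the single site `a`. -/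
def siteRange (ℓ w : ℕ → ℕ) (a : ℕ) : Finset ℕ :=
  Icc (max (w (a - 1)) (ℓ a)) (w (a + 1))

theorem siteRange_update (ha : 0 < a) :
    siteRange ℓ (Function.update w a v) a = siteRange ℓ w a := by
  unfold siteRange
  rw [Function.update_of_ne (by omega), Function.update_of_ne (by omega)]

theorem IsLatticePath.apply_mem_siteRange (h : IsLatticePath M n ℓ w) (ha : 0 < a) :
    w a ∈ siteRange ℓ w a := by
  have hprev := h.le_succ (a - 1)
  rw [Nat.sub_add_cancel ha] at hprev
  exact mem_Icc.2 ⟨max_le hprev (h.barrier_le a), h.le_succ a⟩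

theorem IsLatticePath.card_siteRange_le (h : IsLatticePath M n ℓ w) :
    #(siteRange ℓ w a) ≤ n + 1 := by
  have := h.apply_le (a + 1)
  rw [siteRange, Nat.card_Icc]
  omega

theorem IsLatticePath.update_iff (h : IsLatticePath M n ℓ w) (ha : a ∈ Ico 1 M) :
    IsLatticePath M n ℓ (Function.update w a v) ↔ v ∈ siteRange ℓ w a := by
  obtain ⟨ha, haM⟩ := mem_Ico.1 ha
  rw [siteRange, mem_Icc, max_le_iff]
  constructor
  · intro h'
    have hprev := h'.le_succ (a - 1)
    have hnext := h'.le_succ a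
    have hbar := h'.barrier_le a
    rw [Nat.sub_add_cancel ha] at hprev
    rw [Function.update_self] at hprev hnext hbar
    rw [Function.update_of_ne (by omega)] at hprev hnext
    exact ⟨⟨hprev, hbar⟩, hnext⟩
  · rintro ⟨⟨hprev, hbar⟩, hnext⟩
    refine ⟨?_, fun j => ?_, fun j hj => ?_, fun j => ?_⟩
    · rw [Function.update_of_ne (by omega), h.zero]
    · rcases eq_or_ne j a with rfl | hja
      · rwa [Function.update_self, Function.update_of_ne (by omega)]
      rw [Function.update_of_ne hja]
      rcases eq_or_ne (j + 1) a with rfl | hja'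
      · rwa [Function.update_self]
      · rw [Function.update_of_ne hja']
        exact h.le_succ j
    · rw [Function.update_of_ne (by omega), h.eq_of_le j hj]
    · rcases eq_or_ne j a with rfl | hja
      · rwa [Function.update_self]
      · rw [Function.update_of_ne hja]
        exact h.barrier_le j

-- Resampling one height is an involution on pairs (path, new height).
theorem sum_sum_siteRange_update_comm (ha : a ∈ Ico 1 M) (F : (ℕ → ℕ) → (ℕ → ℕ) → ℝ) :
    ∑ w ∈ latticePaths M n ℓ, ∑ v ∈ siteRange ℓ w a, F w (Function.update w a v) =
      ∑ w ∈ latticePaths M n ℓ, ∑ v ∈ siteRange ℓ w a, F (Function.update w a v) w := by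
  have ha0 : 0 < a := (mem_Ico.1 ha).1
  rw [sum_sigma', sum_sigma']
  have maps : ∀ p ∈ (latticePaths M n ℓ).sigma (fun w => siteRange ℓ w a),
      (⟨Function.update p.1 a p.2, p.1 a⟩ : Σ _ : ℕ → ℕ, ℕ) ∈
        (latticePaths M n ℓ).sigma (fun w => siteRange ℓ w a) := by
    rintro ⟨w, v⟩ hp
    simp only [mem_sigma, mem_latticePaths] at hp ⊢
    rw [siteRange_update ha0]
    exact ⟨(hp.1.update_iff ha).2 hp.2, hp.1.apply_mem_siteRange ha0⟩
  refine sum_nbij' (fun p => ⟨Function.update p.1 a p.2, p.1 a⟩)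
    (fun p => ⟨Function.update p.1 a p.2, p.1 a⟩) maps maps ?_ ?_ ?_ <;>
  · rintro ⟨w, v⟩ _
    simp

/-- The heat-bath operator at site `a`: the mean of `f` when the height at `a` is resampled
uniformly among the admissible values. -/
noncomputable def heatBath (ℓ : ℕ → ℕ) (a : ℕ) (f : (ℕ → ℕ) → ℝ) (w : ℕ → ℕ) : ℝ :=
  𝔼 v ∈ siteRange ℓ w a, f (Function.update w a v)

theorem sum_mul_heatBath_comm (ha : a ∈ Ico 1 M) (f g : (ℕ → ℕ) → ℝ) :
    ∑ w ∈ latticePaths M n ℓ, g w * heatBath ℓ a f w =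
      ∑ w ∈ latticePaths M n ℓ, heatBath ℓ a g w * f w := by
  have hsym := sum_sum_siteRange_update_comm (n := n) (ℓ := ℓ) ha
    fun w w' => g w * f w' / #(siteRange ℓ w a)
  simp only [siteRange_update (mem_Ico.1 ha).1] at hsym
  simp only [heatBath, expect_eq_sum_div_card, mul_div_assoc', div_mul_eq_mul_div, mul_sum,
    sum_mul, sum_div]
  exact hsym

/-- The random-site heat-bath operator: resample the height at a uniformly random interior site. -/
noncomputable def glauber (M : ℕ) (ℓ : ℕ → ℕ) (f : (ℕ → ℕ) → ℝ) (w : ℕ → ℕ) : ℝ :=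
  𝔼 a ∈ Ico 1 M, heatBath ℓ a f w

theorem sum_mul_glauber_comm (f g : (ℕ → ℕ) → ℝ) :
    ∑ w ∈ latticePaths M n ℓ, g w * glauber M ℓ f w =
      ∑ w ∈ latticePaths M n ℓ, glauber M ℓ g w * f w := by
  simp only [glauber, mul_expect, expect_mul, ← expect_sum_comm]
  exact expect_congr rfl fun a ha => sum_mul_heatBath_comm ha f g

theorem IsLatticePath.glauber_one (h : IsLatticePath M n ℓ w) (hM : 2 ≤ M) :
    glauber M ℓ (fun _ => 1) w = 1 := by
  have hheat : ∀ a ∈ Ico 1 M, heatBath ℓ a (fun _ => (1 : ℝ)) w = 1 := fun a ha =>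
    expect_const ⟨_, h.apply_mem_siteRange (mem_Ico.1 ha).1⟩ 1
  rw [glauber, expect_congr rfl hheat, expect_const (nonempty_Ico.2 hM)]

theorem sum_glauber (hM : 2 ≤ M) (f : (ℕ → ℕ) → ℝ) :
    ∑ w ∈ latticePaths M n ℓ, glauber M ℓ f w = ∑ w ∈ latticePaths M n ℓ, f w := by
  have h := sum_mul_glauber_comm (M := M) (n := n) (ℓ := ℓ) f fun _ => 1
  simp only [one_mul] at h
  rw [h]
  exact sum_congr rfl fun w hw => by rw [(mem_latticePaths.1 hw).glauber_one hM, one_mul]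

/-- The weight `a (M - a)` of site `a`: the discrete Laplacian of this concave function is the
constant `-2`, which is what makes the heat bath contract the weighted distance. -/
def siteWeight (M a : ℕ) : ℝ := a * ((M : ℝ) - a)

/-- The weighted area between two lattice paths `x ≤ y`. -/
def weightedDist (M : ℕ) (x y : ℕ → ℕ) : ℝ :=
  ∑ a ∈ Ico 1 M, siteWeight M a * ((y a : ℝ) - x a)

/-- `f` is `K`-Lipschitz on lattice paths for the weighted distance, tested on ordered pairs. -/
def IsWeightedLipschitz (M n : ℕ) (ℓ : ℕ → ℕ) (K : ℝ) (f : (ℕ → ℕ) → ℝ) : Prop :=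
  ∀ x y, IsLatticePath M n ℓ x → IsLatticePath M n ℓ y → x ≤ y →
    |f x - f y| ≤ K * weightedDist M x y

theorem one_le_siteWeight (ha : a ∈ Ico 1 M) : 1 ≤ siteWeight M a := by
  obtain ⟨h1, hM⟩ := mem_Ico.1 ha
  have h1' : (1 : ℝ) ≤ a := by exact_mod_cast h1
  have hM' : (a : ℝ) + 1 ≤ M := by exact_mod_cast hM
  unfold siteWeight
  nlinarith

theorem siteWeight_le (a : ℕ) : siteWeight M a ≤ (M : ℝ) ^ 2 := by
  unfold siteWeight
  nlinarith [sq_nonneg ((M : ℝ) - 2 * a), sq_nonneg (M : ℝ)]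

theorem siteWeight_mul_sub_nonneg (hxy : x ≤ y) (ha : a ∈ Ico 1 M) :
    0 ≤ siteWeight M a * ((y a : ℝ) - x a) :=
  mul_nonneg (zero_le_one.trans (one_le_siteWeight ha))
    (sub_nonneg.2 (Nat.cast_le.2 (hxy a)))

theorem weightedDist_nonneg (hxy : x ≤ y) : 0 ≤ weightedDist M x y :=
  sum_nonneg fun _ => siteWeight_mul_sub_nonneg hxy

theorem weightedDist_update {u : ℕ} (ha : a ∈ Ico 1 M) :
    weightedDist M (Function.update x a u) (Function.update y a v) =
      weightedDist M x y + siteWeight M a * (((v : ℝ) - u) - ((y a : ℝ) - x a)) := by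
  have hrest : ∑ i ∈ (Ico 1 M).erase a, siteWeight M i *
      ((Function.update y a v i : ℝ) - Function.update x a u i) =
      ∑ i ∈ (Ico 1 M).erase a, siteWeight M i * ((y i : ℝ) - x i) :=
    sum_congr rfl fun i hi => by
      rw [Function.update_of_ne (ne_of_mem_erase hi), Function.update_of_ne (ne_of_mem_erase hi)]
  unfold weightedDist
  rw [← add_sum_erase _ _ ha, ← add_sum_erase _ _ ha, hrest, Function.update_self,
    Function.update_self]
  ring

theorem IsWeightedLipschitz.abs_heatBath_sub_le {K : ℝ} (hf : IsWeightedLipschitz M n ℓ K f)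
    (hK : 0 ≤ K) (hx : IsLatticePath M n ℓ x) (hy : IsLatticePath M n ℓ y) (hxy : x ≤ y)
    (ha : a ∈ Ico 1 M) :
    |heatBath ℓ a f x - heatBath ℓ a f y| ≤ K * (weightedDist M x y + siteWeight M a *
      ((((y (a - 1) : ℝ) - x (a - 1)) + ((y (a + 1) : ℝ) - x (a + 1))) / 2
        - ((y a : ℝ) - x a))) := by
  obtain ⟨hx1, hx2⟩ := mem_Icc.1 (hx.apply_mem_siteRange (mem_Ico.1 ha).1)
  obtain ⟨hy1, hy2⟩ := mem_Icc.1 (hy.apply_mem_siteRange (mem_Ico.1 ha).1)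
  have coupled : ∀ v ∈ siteRange ℓ x a, ∀ v' ∈ siteRange ℓ y a, v ≤ v' →
      |f (Function.update x a v) - f (Function.update y a v')| ≤
        K * (weightedDist M x y - siteWeight M a * ((y a : ℝ) - x a))
          + K * siteWeight M a * ((v' : ℝ) - v) := fun v hv v' hv' hvv' => by
    refine (hf _ _ ((hx.update_iff ha).2 hv) ((hy.update_iff ha).2 hv')
      (update_le_update_iff.2 ⟨hvv', fun j _ => hxy j⟩)).trans_eq ?_
    rw [weightedDist_update ha]
    ring
  refine (abs_expect_Icc_sub_expect_Icc_le (hx1.trans hx2) (hy1.trans hy2)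
    (max_le_max (hxy _) le_rfl) (hxy _) coupled).trans ?_
  have hmin : ((max (y (a - 1)) (ℓ a) : ℕ) : ℝ) - (max (x (a - 1)) (ℓ a) : ℕ) ≤
      (y (a - 1) : ℝ) - x (a - 1) := by
    have hprev : x (a - 1) ≤ y (a - 1) := hxy (a - 1)
    have h : max (y (a - 1)) (ℓ a) + x (a - 1) ≤ y (a - 1) + max (x (a - 1)) (ℓ a) := by omega
    have h' : ((max (y (a - 1)) (ℓ a) : ℕ) : ℝ) + x (a - 1) ≤
      y (a - 1) + (max (x (a - 1)) (ℓ a) : ℕ) := by exact_mod_cast h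
    linarith
  have hKw : 0 ≤ K * siteWeight M a := mul_nonneg hK (zero_le_one.trans (one_le_siteWeight ha))
  linarith [mul_le_mul_of_nonneg_left hmin hKw]

theorem sum_siteWeight_mul_laplacian {Δ : ℕ → ℝ} (hM : 1 ≤ M) (h0 : Δ 0 = 0) (hΔM : Δ M = 0) :
    ∑ a ∈ Ico 1 M, siteWeight M a * ((Δ (a - 1) + Δ (a + 1)) / 2 - Δ a) =
      -∑ a ∈ Ico 1 M, Δ a := by
  have tel := sum_Ico_sub
    (fun a => (siteWeight M (a - 1) * Δ a - siteWeight M a * Δ (a - 1)) / 2) hM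
  have hends : siteWeight M 0 = 0 ∧ siteWeight M M = 0 := by simp [siteWeight]
  simp only [Nat.sub_self, Nat.add_sub_cancel, h0, hΔM, hends.1, hends.2, mul_zero, zero_mul,
    sub_zero, zero_div] at tel
  rw [← sum_neg_distrib, ← sub_eq_zero, ← sum_sub_distrib, ← tel]
  refine sum_congr rfl fun a ha => ?_
  obtain ⟨b, rfl⟩ := Nat.exists_eq_add_of_le' (mem_Ico.1 ha).1
  simp only [siteWeight, Nat.add_sub_cancel]
  push_cast
  ring

theorem weightedDist_le_mul_sum (hxy : x ≤ y) :
    weightedDist M x y ≤ (M : ℝ) ^ 2 * ∑ a ∈ Ico 1 M, ((y a : ℝ) - x a) := by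
  rw [mul_sum]
  exact sum_le_sum fun a _ => mul_le_mul_of_nonneg_right (siteWeight_le a)
    (sub_nonneg.2 (Nat.cast_le.2 (hxy a)))

theorem IsWeightedLipschitz.glauber {K : ℝ} (hf : IsWeightedLipschitz M n ℓ K f) (hK : 0 ≤ K)
    (hM : 2 ≤ M) : IsWeightedLipschitz M n ℓ ((1 - 1 / (M : ℝ) ^ 3) * K) (glauber M ℓ f) := by
  intro x y hx hy hxy
  have hMr : (2 : ℝ) ≤ M := by exact_mod_cast hM
  set Δ : ℕ → ℝ := fun a => (y a : ℝ) - x a with hΔ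
  set d := weightedDist M x y
  set S := ∑ a ∈ Ico 1 M, Δ a
  have hS : 0 ≤ S := sum_nonneg fun a _ => sub_nonneg.2 (Nat.cast_le.2 (hxy a))
  have hlap : ∑ a ∈ Ico 1 M, siteWeight M a * ((Δ (a - 1) + Δ (a + 1)) / 2 - Δ a) = -S :=
    sum_siteWeight_mul_laplacian (by omega) (by simp [hΔ, hx.zero, hy.zero])
      (by simp [hΔ, hx.eq_of_le, hy.eq_of_le])
  have hcard : ((#(Ico 1 M) : ℕ) : ℝ) = (M : ℝ) - 1 := by
    rw [Nat.card_Ico, Nat.cast_sub (by omega), Nat.cast_one]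
  have hdS : 1 / (M : ℝ) ^ 3 * d ≤ S / ((M : ℝ) - 1) :=
    calc 1 / (M : ℝ) ^ 3 * d ≤ 1 / (M : ℝ) ^ 3 * ((M : ℝ) ^ 2 * S) := by
          gcongr; exact weightedDist_le_mul_sum hxy
      _ = S / M := by field_simp
      _ ≤ S / ((M : ℝ) - 1) := by gcongr <;> linarith
  calc |_root_.glauber M ℓ f x - _root_.glauber M ℓ f y|
      = |𝔼 a ∈ Ico 1 M, (heatBath ℓ a f x - heatBath ℓ a f y)| := by
        rw [expect_sub_distrib]; rfl
    _ ≤ 𝔼 a ∈ Ico 1 M, |heatBath ℓ a f x - heatBath ℓ a f y| := abs_expect_le _ _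
    _ ≤ 𝔼 a ∈ Ico 1 M, K * (d + siteWeight M a * ((Δ (a - 1) + Δ (a + 1)) / 2 - Δ a)) :=
        expect_le_expect fun a ha => hf.abs_heatBath_sub_le hK hx hy hxy ha
    _ = K * (d - S / ((M : ℝ) - 1)) := by
        rw [← mul_expect, expect_add_distrib, expect_const (nonempty_Ico.2 hM),
          expect_eq_sum_div_card, hlap, hcard, neg_div, ← sub_eq_add_neg]
    _ ≤ K * (d - 1 / (M : ℝ) ^ 3 * d) := by gcongr
    _ = (1 - 1 / (M : ℝ) ^ 3) * K * d := by ring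

theorem IsLatticePath.one_le_weightedDist (hx : IsLatticePath M n ℓ x)
    (hy : IsLatticePath M n ℓ y) (hxy : x ≤ y) (hne : x ≠ y) : 1 ≤ weightedDist M x y := by
  obtain ⟨a, ha⟩ := Function.ne_iff.1 hne
  have haM : a ∈ Ico 1 M := by
    by_contra h
    rcases Nat.eq_zero_or_pos a with rfl | h0
    · exact ha (hx.zero.trans hy.zero.symm)
    · have hMa : M ≤ a := by by_contra! hlt; exact h (mem_Ico.2 ⟨h0, hlt⟩)
      exact ha ((hx.eq_of_le a hMa).trans (hy.eq_of_le a hMa).symm)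
  have hlt : (x a : ℝ) + 1 ≤ y a := by exact_mod_cast (hxy a).lt_of_ne ha
  calc (1 : ℝ) ≤ siteWeight M a * ((y a : ℝ) - x a) :=
        one_le_mul_of_one_le_of_one_le (one_le_siteWeight haM) (by linarith)
    _ ≤ weightedDist M x y :=
        single_le_sum (fun i hi => siteWeight_mul_sub_nonneg hxy hi) haM

theorem exists_isWeightedLipschitz (M n : ℕ) (ℓ : ℕ → ℕ) (f : (ℕ → ℕ) → ℝ) :
    ∃ K, 0 ≤ K ∧ IsWeightedLipschitz M n ℓ K f := by
  set S := ∑ w ∈ latticePaths M n ℓ, |f w|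
  have hS : 0 ≤ S := sum_nonneg fun _ _ => abs_nonneg _
  have hle {w : ℕ → ℕ} (hw : IsLatticePath M n ℓ w) : |f w| ≤ S :=
    single_le_sum (f := fun w => |f w|) (fun _ _ => abs_nonneg _) (mem_latticePaths.2 hw)
  refine ⟨2 * S, by positivity, fun x y hx hy hxy => ?_⟩
  rcases eq_or_ne x y with rfl | hne
  · rw [sub_self, abs_zero]
    exact mul_nonneg (by positivity) (weightedDist_nonneg hxy)
  · calc |f x - f y| ≤ |f x| + |f y| := abs_sub _ _
      _ ≤ 2 * S * 1 := by linarith [hle hx, hle hy]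
      _ ≤ 2 * S * weightedDist M x y := by
          gcongr; exact hx.one_le_weightedDist hy hxy hne

/-- The highest lattice path: it jumps to height `n` in its first step. -/
def topPath (n : ℕ) (j : ℕ) : ℕ := if j = 0 then 0 else n

theorem IsLatticePath.le_topPath (h : IsLatticePath M n ℓ w) : w ≤ topPath n := by
  intro j
  unfold topPath
  split_ifs with hj
  · rw [hj, h.zero]
  · exact h.apply_le j

theorem IsLatticePath.topPath (h : IsLatticePath M n ℓ w) (hM : 1 ≤ M) :
    IsLatticePath M n ℓ (topPath n) := by
  refine ⟨rfl, fun j => ?_, fun j hj => if_neg (by omega),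
    fun j => (h.barrier_le j).trans (h.le_topPath j)⟩
  simp only [_root_.topPath, Nat.succ_ne_zero, if_false]
  split_ifs <;> omega

theorem weightedDist_topPath_le (w : ℕ → ℕ) :
    weightedDist M w (topPath n) ≤ ∑ a ∈ Ico 1 M, siteWeight M a * n := by
  refine sum_le_sum fun a ha => mul_le_mul_of_nonneg_left ?_
    (zero_le_one.trans (one_le_siteWeight ha))
  have htop : ((topPath n a : ℕ) : ℝ) ≤ n := by
    unfold topPath; split_ifs <;> simp
  linarith [(w a).cast_nonneg (α := ℝ)]

theorem IsWeightedLipschitz.abs_le {K : ℝ} (hf : IsWeightedLipschitz M n ℓ K f) (hK : 0 ≤ K)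
    (hM : 1 ≤ M) (hmean : ∑ w ∈ latticePaths M n ℓ, f w = 0) (hw : w ∈ latticePaths M n ℓ) :
    |f w| ≤ 2 * (K * ∑ a ∈ Ico 1 M, siteWeight M a * n) := by
  refine abs_le_two_mul_of_sum_eq_zero (c := f (topPath n)) hmean (fun x hx => ?_) hw
  have hx := mem_latticePaths.1 hx
  exact (hf x _ hx (hx.topPath hM) hx.le_topPath).trans
    (mul_le_mul_of_nonneg_left (weightedDist_topPath_le x) hK)

theorem sum_mul_glauber_le (hM : 2 ≤ M) (hf : ∑ w ∈ latticePaths M n ℓ, f w = 0) :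
    ∑ w ∈ latticePaths M n ℓ, f w * glauber M ℓ f w ≤
      (1 - 1 / (M : ℝ) ^ 3) * ∑ w ∈ latticePaths M n ℓ, f w ^ 2 := by
  obtain ⟨K, hK, hL⟩ := exists_isWeightedLipschitz M n ℓ f
  set ρ : ℝ := 1 - 1 / (M : ℝ) ^ 3
  have hρ : 0 < ρ := by
    have hM' : (1 : ℝ) < M := by exact_mod_cast hM
    exact sub_pos.2 ((div_lt_one (by positivity)).2 (one_lt_pow₀ hM' three_ne_zero))
  have hlip (t : ℕ) : IsWeightedLipschitz M n ℓ (ρ ^ t * K) ((glauber M ℓ)^[t] f) := by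
    induction t with
    | zero => simpa using hL
    | succ t ih =>
      rw [Function.iterate_succ_apply', pow_succ', mul_assoc]
      exact ih.glauber (by positivity) hM
  have hmean (t : ℕ) : ∑ w ∈ latticePaths M n ℓ, (glauber M ℓ)^[t] f w = 0 := by
    induction t with
    | zero => exact hf
    | succ t ih => rw [Function.iterate_succ_apply', sum_glauber hM, ih]
  refine sum_mul_apply_le_of_abs_iterate_le sum_mul_glauber_comm hρ
    (C := 2 * (K * ∑ a ∈ Ico 1 M, siteWeight M a * n)) fun t w hw => ?_
  refine ((hlip t).abs_le (by positivity) (by omega) (hmean t) hw).trans_eq ?_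
  ring

/-- The squared increment of `f` when the height at site `a` goes up by one (zero when that
leaves the set of paths). -/
noncomputable def upGradSq (f : (ℕ → ℕ) → ℝ) (a : ℕ) (w : ℕ → ℕ) : ℝ :=
  if w a < w (a + 1) then (f (Function.update w a (w a + 1)) - f w) ^ 2 else 0

theorem upGradSq_nonneg (f : (ℕ → ℕ) → ℝ) (a : ℕ) (w : ℕ → ℕ) : 0 ≤ upGradSq f a w := by
  unfold upGradSq
  split_ifs <;> positivity

theorem IsLatticePath.sq_sub_update_le (h : IsLatticePath M n ℓ w) (ha : 0 < a)
    (hv : v ∈ siteRange ℓ w a) :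
    (f w - f (Function.update w a v)) ^ 2 ≤
      (n + 1) * ∑ u ∈ siteRange ℓ w a, upGradSq f a (Function.update w a u) := by
  have key := sq_sub_le_card_mul_sum_sq_succ_sub (φ := fun u => f (Function.update w a u))
    (h.apply_mem_siteRange ha) hv
  simp only [Function.update_eq_self] at key
  have hup : ∀ u ∈ Ico (max (w (a - 1)) (ℓ a)) (w (a + 1)),
      (f (Function.update w a (u + 1)) - f (Function.update w a u)) ^ 2 =
        upGradSq f a (Function.update w a u) := fun u hu => by
    rw [upGradSq, Function.update_self, Function.update_of_ne (by omega),
      if_pos (mem_Ico.1 hu).2, Function.update_idem]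
  rw [sum_congr rfl hup] at key
  have hlen : ((w (a + 1) - max (w (a - 1)) (ℓ a) : ℕ) : ℝ) ≤ n + 1 := by
    have := h.apply_le (a + 1)
    exact_mod_cast (show w (a + 1) - max (w (a - 1)) (ℓ a) ≤ n + 1 by omega)
  refine key.trans (mul_le_mul hlen ?_ (sum_nonneg fun _ _ => upGradSq_nonneg _ _ _)
    (by positivity))
  exact sum_le_sum_of_subset_of_nonneg Ico_subset_Icc_self fun _ _ _ => upGradSq_nonneg _ _ _

theorem IsLatticePath.expect_sq_sub_update_le (h : IsLatticePath M n ℓ w) (ha : 0 < a) :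
    𝔼 v ∈ siteRange ℓ w a, (f w - f (Function.update w a v)) ^ 2 ≤
      (n + 1) * ∑ v ∈ siteRange ℓ w a, upGradSq f a (Function.update w a v) :=
  expect_le ⟨_, h.apply_mem_siteRange ha⟩ fun _ hv => h.sq_sub_update_le ha hv

theorem two_mul_sum_mul_sub_heatBath (ha : a ∈ Ico 1 M) (f : (ℕ → ℕ) → ℝ) :
    2 * ∑ w ∈ latticePaths M n ℓ, f w * (f w - heatBath ℓ a f w) =
      ∑ w ∈ latticePaths M n ℓ,
        𝔼 v ∈ siteRange ℓ w a, (f w - f (Function.update w a v)) ^ 2 := by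
  have hmean {w : ℕ → ℕ} (hw : w ∈ latticePaths M n ℓ) (c : ℝ) :
      𝔼 _v ∈ siteRange ℓ w a, c = c :=
    expect_const ⟨_, (mem_latticePaths.1 hw).apply_mem_siteRange (mem_Ico.1 ha).1⟩ c
  have hsq : ∑ w ∈ latticePaths M n ℓ, heatBath ℓ a (fun w => f w ^ 2) w =
      ∑ w ∈ latticePaths M n ℓ, f w ^ 2 := by
    have h := sum_mul_heatBath_comm (n := n) (ℓ := ℓ) ha (fun w => f w ^ 2) fun _ => 1
    simp only [one_mul] at h
    refine h.trans (sum_congr rfl fun w hw => ?_)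
    rw [heatBath, hmean hw, one_mul]
  have hexpand : ∀ w ∈ latticePaths M n ℓ,
      𝔼 v ∈ siteRange ℓ w a, (f w - f (Function.update w a v)) ^ 2 =
        f w ^ 2 - 2 * (f w * heatBath ℓ a f w) + heatBath ℓ a (fun w => f w ^ 2) w :=
    fun w hw => by
      simp only [sub_sq, expect_add_distrib, expect_sub_distrib, hmean hw, heatBath, mul_expect,
        mul_assoc]
  rw [sum_congr rfl hexpand, sum_add_distrib, hsq, sum_sub_distrib, ← mul_sum]
  simp only [mul_sub, sum_sub_distrib, ← sq]
  ring

theorem sum_mul_sub_heatBath_le (ha : a ∈ Ico 1 M) (f : (ℕ → ℕ) → ℝ) :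
    ∑ w ∈ latticePaths M n ℓ, f w * (f w - heatBath ℓ a f w) ≤
      ((n : ℝ) + 1) ^ 2 * ∑ w ∈ latticePaths M n ℓ, upGradSq f a w := by
  have ha0 := (mem_Ico.1 ha).1
  have hG : 0 ≤ ∑ w ∈ latticePaths M n ℓ, upGradSq f a w :=
    sum_nonneg fun _ _ => upGradSq_nonneg _ _ _
  have hdouble : 2 * ∑ w ∈ latticePaths M n ℓ, f w * (f w - heatBath ℓ a f w) ≤
      ((n : ℝ) + 1) ^ 2 * ∑ w ∈ latticePaths M n ℓ, upGradSq f a w :=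
    calc 2 * ∑ w ∈ latticePaths M n ℓ, f w * (f w - heatBath ℓ a f w)
        = ∑ w ∈ latticePaths M n ℓ,
            𝔼 v ∈ siteRange ℓ w a, (f w - f (Function.update w a v)) ^ 2 :=
          two_mul_sum_mul_sub_heatBath ha f
      _ ≤ ∑ w ∈ latticePaths M n ℓ,
            (n + 1) * ∑ v ∈ siteRange ℓ w a, upGradSq f a (Function.update w a v) :=
          sum_le_sum fun w hw => (mem_latticePaths.1 hw).expect_sq_sub_update_le ha0
      _ = (n + 1) * ∑ w ∈ latticePaths M n ℓ, ∑ _v ∈ siteRange ℓ w a, upGradSq f a w := by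
          rw [← mul_sum, sum_sum_siteRange_update_comm ha fun _ w' => upGradSq f a w']
      _ ≤ (n + 1) * ∑ w ∈ latticePaths M n ℓ, (n + 1) * upGradSq f a w := by
          gcongr with w hw
          rw [sum_const, nsmul_eq_mul]
          gcongr
          · exact upGradSq_nonneg _ _ _
          · exact_mod_cast (mem_latticePaths.1 hw).card_siteRange_le
      _ = ((n : ℝ) + 1) ^ 2 * ∑ w ∈ latticePaths M n ℓ, upGradSq f a w := by
          rw [← mul_sum]; ring
  nlinarith [mul_nonneg (sq_nonneg ((n : ℝ) + 1)) hG]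

theorem sum_sq_le_mul_sum_upGradSq (hM : 2 ≤ M) (hf : ∑ w ∈ latticePaths M n ℓ, f w = 0) :
    ∑ w ∈ latticePaths M n ℓ, f w ^ 2 ≤ (M : ℝ) ^ 3 * ((n : ℝ) + 1) ^ 2 *
      ∑ w ∈ latticePaths M n ℓ, ∑ a ∈ Ico 1 M, upGradSq f a w := by
  have hne : (Ico 1 M).Nonempty := nonempty_Ico.2 hM
  have hM0 : (0 : ℝ) < M := by exact_mod_cast (by omega : 0 < M)
  have henergy : ∑ w ∈ latticePaths M n ℓ, f w ^ 2
      - ∑ w ∈ latticePaths M n ℓ, f w * glauber M ℓ f w =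
      𝔼 a ∈ Ico 1 M, ∑ w ∈ latticePaths M n ℓ, f w * (f w - heatBath ℓ a f w) := by
    rw [expect_sum_comm, ← sum_sub_distrib]
    refine sum_congr rfl fun w _ => ?_
    rw [← mul_expect, expect_sub_distrib, expect_const hne, glauber]
    ring
  have hsite : 𝔼 a ∈ Ico 1 M, ∑ w ∈ latticePaths M n ℓ, f w * (f w - heatBath ℓ a f w) ≤
      ((n : ℝ) + 1) ^ 2 * ∑ w ∈ latticePaths M n ℓ, ∑ a ∈ Ico 1 M, upGradSq f a w := by
    refine expect_le hne fun a ha => (sum_mul_sub_heatBath_le ha f).trans ?_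
    gcongr with w _
    exact single_le_sum (fun a _ => upGradSq_nonneg f a w) ha
  have hgap := sum_mul_glauber_le hM hf
  rw [← henergy] at hsite
  rw [sub_mul, one_mul, div_mul_eq_mul_div, one_mul] at hgap
  rw [mul_assoc, ← div_le_iff₀' (by positivity)]
  linarith

end LatticePath

/-! ### Noncrossing chord systems -/

section ChordSystem

/-- No two chords of `D` cross; a chord `(a, b)` is stored with `a < b`. -/
def IsNoncrossing (D : Finset (ℕ × ℕ)) : Prop :=
  ∀ e ∈ D, ∀ f ∈ D, ¬ (e.1 < f.1 ∧ f.1 < e.2 ∧ e.2 < f.2)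

/-- `D` is a set of pairwise noncrossing chords of a polygon whose vertices are labelled
`0, 1, 2, …`, each of which cuts off a polygon that can be divided into `(κ + 2)`-gons. -/
structure IsChordSystem (κ : ℕ) (D : Finset (ℕ × ℕ)) : Prop where
  add_two_le : ∀ a b, (a, b) ∈ D → a + 2 ≤ b
  dvd : ∀ a b, (a, b) ∈ D → κ ∣ b - a - 1
  noncrossing : IsNoncrossing D

/-- `D` consists of the `n - 1` diagonals of a `(κ + 2)`-angulation of the polygon with vertices
`0, …, κ n + 1`, together with its root side `(0, κ n + 1)`. -/
structure IsAngulation (κ n : ℕ) (D : Finset (ℕ × ℕ)) : Prop extends IsChordSystem κ D where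
  le : ∀ a b, (a, b) ∈ D → b ≤ κ * n + 1
  root_mem : (0, κ * n + 1) ∈ D
  card_eq : #D = n

/-- The number of chords of `D` lying in the interval `[i, j]`. -/
def nestedCount (D : Finset (ℕ × ℕ)) (i j : ℕ) : ℕ := #{e ∈ D | i ≤ e.1 ∧ e.2 ≤ j}

variable {κ n a b i j l : ℕ} {D : Finset (ℕ × ℕ)}

namespace IsChordSystem

theorem nestedCount_eq_zero (h : IsChordSystem κ D) (hij : j < i + 2) : nestedCount D i j = 0 := by
  rw [nestedCount, card_eq_zero, filter_eq_empty_iff]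
  rintro ⟨u, v⟩ he ⟨hu, hv⟩
  have := h.add_two_le u v he
  omega

theorem nestedCount_split (h : IsChordSystem κ D) (hil : i < l) (hlj : l < j)
    (hl : ∀ u v, (u, v) ∈ D → i ≤ u → v ≤ j → (u, v) ≠ (i, j) → v ≤ l ∨ l ≤ u) :
    nestedCount D i j =
      (if (i, j) ∈ D then 1 else 0) + nestedCount D i l + nestedCount D l j := by
  simp only [nestedCount, card_filter]
  rw [← sum_ite_eq' D (i, j) fun _ => 1, ← sum_add_distrib, ← sum_add_distrib]
  refine sum_congr rfl fun ⟨u, v⟩ he => ?_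
  have hchord := h.add_two_le u v he
  have hsplit := hl u v he
  simp only [ne_eq, Prod.mk.injEq] at hsplit ⊢
  split_ifs <;> omega

theorem exists_split (h : IsChordSystem κ D) (hij : i + 2 ≤ j) :
    ∃ l, i < l ∧ l < j ∧
      ∀ u v, (u, v) ∈ D → i ≤ u → v ≤ j → (u, v) ≠ (i, j) → v ≤ l ∨ l ≤ u := by
  by_cases hex : ∃ d, d < j ∧ (i, d) ∈ D
  · obtain ⟨d, hd, hdD⟩ := hex
    obtain ⟨l, hl, hmax⟩ := exists_max_image ({d ∈ range j | (i, d) ∈ D}) id ⟨d, by simp [hd, hdD]⟩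
    simp only [mem_filter, mem_range, id] at hl hmax
    have := h.add_two_le i l hl.2
    refine ⟨l, by omega, hl.1, fun u v he hu hv hne => ?_⟩
    rcases hu.eq_or_lt with rfl | hu
    · have hvj : v ≠ j := by rintro rfl; exact hne rfl
      exact Or.inl (hmax v ⟨by omega, he⟩)
    · have := h.noncrossing _ hl.2 _ he
      simp only at this
      omega
  · refine ⟨i + 1, by omega, by omega, fun u v he hu hv hne => ?_⟩
    right
    rcases hu.eq_or_lt with rfl | hu
    · have hvj : v ≠ j := by rintro rfl; exact hne rfl
      exact absurd ⟨v, by omega, he⟩ hex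
    · exact hu

end IsChordSystem

theorem mul_succ_le_of_dvd_of_mul_lt {x m : ℕ} (h : κ ∣ m) (hx : κ * x < m) :
    κ * (x + 1) ≤ m := by
  obtain ⟨q, rfl⟩ := h
  exact Nat.mul_le_mul_left κ (Nat.lt_of_mul_lt_mul_left hx)

namespace IsChordSystem

theorem mul_nestedCount_le (h : IsChordSystem κ D) (hij : i < j) :
    κ * nestedCount D i j + i + 1 ≤ j := by
  induction hs : j - i using Nat.strong_induction_on generalizing i j with
  | _ s ih =>
  by_cases h2 : j < i + 2
  · rw [h.nestedCount_eq_zero h2]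
    omega
  obtain ⟨l, hil, hlj, hl⟩ := h.exists_split (Nat.le_of_not_lt h2)
  have hleft := ih (l - i) (by omega) hil rfl
  have hright := ih (j - l) (by omega) hlj rfl
  rw [h.nestedCount_split hil hlj hl]
  split_ifs with hD
  · have := mul_succ_le_of_dvd_of_mul_lt (x := nestedCount D i l + nestedCount D l j)
      (h.dvd i j hD) (by rw [mul_add]; omega)
    rw [add_assoc 1, add_comm 1]
    omega
  · rw [zero_add, mul_add]
    omega

-- The slack `j - i - 1 - κ * nestedCount D i j` is monotone in the interval `[i, j]`.
theorem mul_nestedCount_le_of_mem (h : IsChordSystem κ D) (hab : (a, b) ∈ D) (hia : i ≤ a)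
    (hbj : b ≤ j) : κ * nestedCount D i j + i + b ≤ κ * nestedCount D a b + j + a := by
  induction hs : j - i using Nat.strong_induction_on generalizing i j with
  | _ s ih =>
  have hab2 := h.add_two_le a b hab
  by_cases heq : (a, b) = (i, j)
  · obtain ⟨rfl, rfl⟩ := Prod.mk.injEq .. ▸ heq
    omega
  obtain ⟨l, hil, hlj, hl⟩ := h.exists_split (i := i) (j := j) (by omega)
  have hstrict : κ * (nestedCount D i l + nestedCount D l j) + i + b + 1 ≤
      κ * nestedCount D a b + j + a := by
    rw [mul_add]
    rcases hl a b hab hia hbj heq with hbl | hla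
    · have := ih (l - i) (by omega) hia hbl rfl
      have := h.mul_nestedCount_le hlj
      omega
    · have := ih (j - l) (by omega) hla hbj rfl
      have := h.mul_nestedCount_le hil
      omega
  rw [h.nestedCount_split hil hlj hl]
  split_ifs with hD
  · have hdvd : κ ∣ κ * nestedCount D a b + ((j - i - 1) - (b - a - 1)) :=
      dvd_add (dvd_mul_right _ _) (Nat.dvd_sub (h.dvd i j hD) (h.dvd a b hab))
    have := mul_succ_le_of_dvd_of_mul_lt (x := nestedCount D i l + nestedCount D l j) hdvd
      (by omega)
    rw [add_assoc 1, add_comm 1]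
    omega
  · rw [zero_add]
    omega

end IsChordSystem

namespace IsAngulation

theorem nestedCount_root (h : IsAngulation κ n D) : nestedCount D 0 (κ * n + 1) = n := by
  rw [nestedCount, filter_true_of_mem fun e he => ⟨Nat.zero_le _, h.le e.1 e.2 he⟩, h.card_eq]

theorem mul_nestedCount (h : IsAngulation κ n D) (hab : (a, b) ∈ D) :
    κ * nestedCount D a b + a + 1 = b := by
  have hc := h.add_two_le a b hab
  have hle := h.mul_nestedCount_le (i := a) (j := b) (by omega)
  have hge := h.mul_nestedCount_le_of_mem hab (Nat.zero_le a) (h.le a b hab)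
  rw [h.nestedCount_root] at hge
  omega

end IsAngulation

end ChordSystem

/-! ### Ladders of flips -/

section Ladder

variable {κ n a b p q i j v : ℕ} {D : Finset (ℕ × ℕ)}

/-- The number of chords of `D` whose left endpoint is smaller than `j`. As a function of `j` this
is the height function of the lattice path encoding `D`. -/
def startCount (D : Finset (ℕ × ℕ)) (j : ℕ) : ℕ := #{e ∈ D | e.1 < j}

/-- The least vertex `p ≥ q` that is joined to `v` by a chord of `D` with right endpoint `v` or by
the side `(v - 1, v)`. -/
noncomputable def leftNeighbor (D : Finset (ℕ × ℕ)) (v q : ℕ) : ℕ :=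
  sInf {p | q ≤ p ∧ ((p, v) ∈ D ∨ p + 1 = v)}

theorem leftNeighbor_spec (hq : q < v) :
    q ≤ leftNeighbor D v q ∧ ((leftNeighbor D v q, v) ∈ D ∨ leftNeighbor D v q + 1 = v) :=
  Nat.sInf_mem (s := {p | q ≤ p ∧ ((p, v) ∈ D ∨ p + 1 = v)}) ⟨v - 1, by omega, Or.inr (by omega)⟩

theorem leftNeighbor_le (hqp : q ≤ p) (hp : (p, v) ∈ D ∨ p + 1 = v) : leftNeighbor D v q ≤ p :=
  Nat.sInf_le ⟨hqp, hp⟩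

theorem IsChordSystem.lt_of_mem_or_add_one_eq (h : IsChordSystem κ D)
    (hp : (p, a) ∈ D ∨ p + 1 = a) : p < a := by
  rcases hp with hp | hp
  · have := h.add_two_le _ _ hp
    omega
  · omega

theorem IsChordSystem.leftNeighbor_lt (h : IsChordSystem κ D) (hq : q < v) :
    leftNeighbor D v q < v :=
  h.lt_of_mem_or_add_one_eq (leftNeighbor_spec hq).2

theorem leftNeighbor_pred (ha : 0 < a) : leftNeighbor D a (a - 1) = a - 1 :=
  (leftNeighbor_le le_rfl (Or.inr (by omega))).antisymm (leftNeighbor_spec (by omega)).1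

theorem leftNeighbor_eq_or (hq : q + 1 < v) :
    leftNeighbor D v (q + 1) = leftNeighbor D v q ∨ (q, v) ∈ D ∧ leftNeighbor D v q = q := by
  obtain ⟨hle, hmem⟩ := leftNeighbor_spec (D := D) (show q < v by omega)
  obtain ⟨hle', hmem'⟩ := leftNeighbor_spec (D := D) hq
  rcases hle.eq_or_lt with heq | hlt
  · rw [← heq] at hmem ⊢
    exact Or.inr ⟨hmem.resolve_right (by omega), rfl⟩
  · exact Or.inl ((leftNeighbor_le hlt hmem).antisymm
      (leftNeighbor_le (q.le_succ.trans hle') hmem'))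

/-- The right endpoint of the longest chord of `D` with left endpoint `a`. -/
def topEnd (D : Finset (ℕ × ℕ)) (a : ℕ) : ℕ := (D.filter (·.1 = a)).sup Prod.snd

theorem mk_topEnd_mem (ha : a ∈ D.image Prod.fst) : (a, topEnd D a) ∈ D := by
  obtain ⟨e, he, rfl⟩ := mem_image.1 ha
  obtain ⟨⟨u, v⟩, hf, htop⟩ :=
    exists_mem_eq_sup (D.filter (·.1 = e.1)) ⟨e, mem_filter.2 ⟨he, rfl⟩⟩ Prod.snd
  obtain ⟨hmem, rfl⟩ := mem_filter.1 hf
  rwa [topEnd, htop]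

theorem le_topEnd (hb : (a, b) ∈ D) : b ≤ topEnd D a :=
  le_sup (f := Prod.snd) (show (a, b) ∈ D.filter (·.1 = a) from mem_filter.2 ⟨hb, rfl⟩)

/-- The vertex preceding `topEnd D a` in the cell just below the chord `(a, topEnd D a)`. -/
noncomputable def apex (D : Finset (ℕ × ℕ)) (a : ℕ) : ℕ := leftNeighbor D (topEnd D a) (a + 1)

theorem IsChordSystem.lt_apex_lt (h : IsChordSystem κ D) (ha : a ∈ D.image Prod.fst) :
    a < apex D a ∧ apex D a < topEnd D a := by
  have hlt : a + 1 < topEnd D a := h.add_two_le _ _ (mk_topEnd_mem ha)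
  exact ⟨(leftNeighbor_spec hlt).1, h.leftNeighbor_lt hlt⟩

theorem IsChordSystem.mk_apex_notMem (h : IsChordSystem κ D) (ha : a ∈ D.image Prod.fst)
    (hp : p < a) : (p, apex D a) ∉ D := fun hmem =>
  h.noncrossing _ hmem _ (mk_topEnd_mem ha) ⟨hp, h.lt_apex_lt ha⟩

/-- Where the chord `e` of `D` has moved after the top chord at `a` has been flipped and then every
chord `(p, a)` with `p < q` has been flipped to `(p, apex D a)`. -/
noncomputable def ladderMap (D : Finset (ℕ × ℕ)) (a q : ℕ) (e : ℕ × ℕ) : ℕ × ℕ :=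
  if e = (a, topEnd D a) then (leftNeighbor D a q, apex D a)
  else if e.2 = a ∧ e.1 < q then (e.1, apex D a) else e

/-- The inverse of `ladderMap`; it depends on `D` only through `b = topEnd D a` and
`c = apex D a`, so few angulations share a given rung of their ladders. -/
def ladderInv (a b c q : ℕ) (e : ℕ × ℕ) : ℕ × ℕ :=
  if e.2 = c ∧ e.1 < a then if e.1 < q then (e.1, a) else (a, b) else e

/-- The ladder of chord systems from `D` to one with the left endpoint `a` replaced by `a - 1`;
consecutive rungs differ by at most one flip. -/
noncomputable def ladder (D : Finset (ℕ × ℕ)) (a : ℕ) : ℕ → Finset (ℕ × ℕ)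
  | 0 => D
  | q + 1 => D.image (ladderMap D a q)

theorem card_ladder_sdiff_le_one (hi : i < a) :
    #(ladder D a i \ ladder D a (i + 1)) ≤ 1 := by
  refine card_le_one_iff_subset_singleton.2 ?_
  cases i with
  | zero =>
    refine ⟨(a, topEnd D a), fun e he => mem_singleton.2 ?_⟩
    obtain ⟨he, hne⟩ := mem_sdiff.1 he
    by_contra htop
    exact hne (mem_image.2 ⟨e, he, by rw [ladderMap, if_neg htop, if_neg (by simp)]⟩)
  | succ q =>
    refine ⟨(q, a), fun z hz => mem_singleton.2 ?_⟩
    obtain ⟨hz, hne⟩ := mem_sdiff.1 hz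
    obtain ⟨e, he, rfl⟩ := mem_image.1 hz
    by_contra hqa
    refine hne (mem_image.2 ?_)
    by_cases htop : e = (a, topEnd D a)
    · rcases leftNeighbor_eq_or (D := D) hi with heq | ⟨hmem, hx⟩
      · exact ⟨e, he, by rw [ladderMap, ladderMap, if_pos htop, if_pos htop, heq]⟩
      · refine ⟨(q, a), hmem, ?_⟩
        rw [ladderMap, ladderMap, if_neg (by simp; omega), if_pos ⟨rfl, q.lt_succ_self⟩,
          if_pos htop, hx]
    · refine ⟨e, he, ?_⟩
      rw [ladderMap, if_neg htop] at hqa ⊢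
      rw [ladderMap, if_neg htop]
      have hlow : (e.2 = a ∧ e.1 < q + 1) ↔ (e.2 = a ∧ e.1 < q) := by
        refine ⟨fun ⟨hv, hu⟩ => ⟨hv, (Nat.lt_succ_iff.1 hu).lt_of_ne fun hq => hqa ?_⟩,
          fun ⟨hv, hu⟩ => ⟨hv, hu.trans q.lt_succ_self⟩⟩
        rw [if_neg (by omega), ← hq, ← hv]
      simp only [hlow]

theorem mem_ladder_succ (hq : q < a) {u v : ℕ}
    (huv : (u, v) ∈ ladder D a (q + 1)) :
    ((u, v) ∈ D ∧ ¬ (u = a ∧ v = topEnd D a) ∧ ¬ (v = a ∧ u < q)) ∨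
      v = apex D a ∧ ((u, a) ∈ D ∨ u + 1 = a) ∧ ∀ p, q ≤ p → (p, a) ∈ D → u ≤ p := by
  obtain ⟨⟨u', v'⟩, he, heq⟩ := mem_image.1 huv
  unfold ladderMap at heq
  split_ifs at heq with htop hlow
  · obtain ⟨rfl, rfl⟩ := Prod.mk.inj heq
    exact Or.inr ⟨rfl, (leftNeighbor_spec hq).2, fun p hp hmem => leftNeighbor_le hp (Or.inl hmem)⟩
  · obtain ⟨rfl, rfl⟩ := Prod.mk.inj heq
    obtain ⟨hv, hu⟩ := hlow
    exact Or.inr ⟨rfl, Or.inl (hv ▸ he), fun p hp _ => hu.le.trans hp⟩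
  · obtain ⟨rfl, rfl⟩ := Prod.mk.inj heq
    exact Or.inl ⟨he, by simpa using htop, hlow⟩

namespace IsChordSystem

theorem leftInvOn_ladderInv (h : IsChordSystem κ D) (ha : a ∈ D.image Prod.fst) (hq : q < a) :
    Set.LeftInvOn (ladderInv a (topEnd D a) (apex D a) q) (ladderMap D a q) D := by
  rintro ⟨u, v⟩ he
  have hx := (leftNeighbor_spec (D := D) hq).1
  have hxa := h.leftNeighbor_lt hq
  unfold ladderMap
  split_ifs with htop hlow
  · rw [ladderInv, if_pos ⟨rfl, hxa⟩, if_neg (by simpa using hx), htop]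
  · rw [ladderInv, if_pos ⟨rfl, by omega⟩, if_pos hlow.2, ← hlow.1]
  · refine if_neg ?_
    rintro ⟨rfl, hu⟩
    exact h.mk_apex_notMem ha hu he

theorem image_ladderInv_ladder (h : IsChordSystem κ D) (ha : a ∈ D.image Prod.fst) (hq : q < a) :
    (ladder D a (q + 1)).image (ladderInv a (topEnd D a) (apex D a) q) = D := by
  rw [ladder, image_image]
  exact (image_congr (h.leftInvOn_ladderInv ha hq)).trans image_id

theorem card_ladder (h : IsChordSystem κ D) (ha : a ∈ D.image Prod.fst) (hi : i ≤ a) :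
    #(ladder D a i) = #D := by
  cases i with
  | zero => rfl
  | succ q => exact card_image_of_injOn (h.leftInvOn_ladderInv ha hi).injOn

theorem startCount_ladder (h : IsChordSystem κ D) (ha : a ∈ D.image Prod.fst) (ha0 : 0 < a) :
    startCount (ladder D a a) j = startCount D j + if j = a then 1 else 0 := by
  obtain ⟨q, rfl⟩ := Nat.exists_eq_add_of_le' ha0
  have hq : leftNeighbor D (q + 1) q = q := leftNeighbor_pred ha0
  have htop : (if j = q + 1 then 1 else 0) =
      ∑ e ∈ D, if e = (q + 1, topEnd D (q + 1)) then if j = q + 1 then 1 else 0 else 0 := by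
    rw [sum_ite_eq', if_pos (mk_topEnd_mem ha)]
  rw [startCount, ladder, filter_image,
    card_image_of_injOn ((h.leftInvOn_ladderInv ha q.lt_succ_self).injOn.mono (filter_subset _ _)),
    card_filter, startCount, card_filter, htop, ← sum_add_distrib]
  refine sum_congr rfl fun e _ => ?_
  unfold ladderMap
  rw [hq]
  split_ifs <;> simp_all <;> omega

theorem not_cross_apex_right (h : IsChordSystem κ D) (ha : a ∈ D.image Prod.fst) {u v : ℕ}
    (huv : (u, v) ∈ D) (htop : ¬ (u = a ∧ v = topEnd D a)) (hp : (p, a) ∈ D ∨ p + 1 = a) :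
    ¬ (p < u ∧ u < apex D a ∧ apex D a < v) := by
  rintro ⟨hpu, huc, hcv⟩
  have hab := mk_topEnd_mem ha
  have hpa := h.lt_of_mem_or_add_one_eq hp
  have hc := (leftNeighbor_spec (D := D) (h.add_two_le _ _ hab)).2
  change (apex D a, _) ∈ D ∨ apex D a + 1 = _ at hc
  have hcross := h.noncrossing _ huv _ hab
  have hcross' := h.noncrossing _ hab _ huv
  have hcross_p : (p, a) ∈ D → ¬ (p < u ∧ u < a ∧ a < v) := fun hmem =>
    h.noncrossing _ hmem _ huv
  have hcross_c : (apex D a, topEnd D a) ∈ D → ¬ (u < apex D a ∧ apex D a < v ∧ v < topEnd D a) :=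
    fun hmem => h.noncrossing _ huv _ hmem
  have hmax : u = a → v ≤ topEnd D a := by rintro rfl; exact le_topEnd huv
  have hapex : v = topEnd D a → a < u → apex D a ≤ u := by
    rintro rfl hau
    exact leftNeighbor_le hau (Or.inl huv)
  have hlt := h.lt_apex_lt ha
  simp only at hcross hcross'
  rcases hp with hp | hp <;> rcases hc with hc | hc
  · have := hcross_p hp
    have := hcross_c hc
    omega
  · have := hcross_p hp
    omega
  · have := hcross_c hc
    omega
  · omega

theorem not_cross_apex_left (h : IsChordSystem κ D) (ha : a ∈ D.image Prod.fst) {u v : ℕ}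
    (huv : (u, v) ∈ D) (hlow : ¬ (v = a ∧ u < q)) (hp : (p, a) ∈ D ∨ p + 1 = a)
    (hmin : ∀ p', q ≤ p' → (p', a) ∈ D → p ≤ p') : ¬ (u < p ∧ p < v ∧ v < apex D a) := by
  rintro ⟨hup, hpv, hvc⟩
  have hlt := h.lt_apex_lt ha
  have hcross := h.noncrossing _ huv _ (mk_topEnd_mem ha)
  have hcross_p : (p, a) ∈ D → ¬ (u < p ∧ p < v ∧ v < a) := fun hmem => h.noncrossing _ huv _ hmem
  have hfoot : v = a → q ≤ u → p ≤ u := by rintro rfl hqu; exact hmin u hqu huv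
  have hpa := h.lt_of_mem_or_add_one_eq hp
  simp only at hcross
  rcases hp with hp | hp
  · have := hcross_p hp
    omega
  · omega

theorem isNoncrossing_ladder (h : IsChordSystem κ D) (ha : a ∈ D.image Prod.fst) (hq : q < a) :
    IsNoncrossing (ladder D a (q + 1)) := by
  rintro ⟨u, v⟩ he ⟨u', v'⟩ hf
  rcases mem_ladder_succ hq he with ⟨he, -, hlow⟩ | ⟨rfl, hu, -⟩ <;>
    rcases mem_ladder_succ hq hf with ⟨hf, htop', -⟩ | ⟨rfl, hu', hmin'⟩
  · exact h.noncrossing _ he _ hf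
  · exact h.not_cross_apex_left ha he hlow hu' hmin'
  · exact h.not_cross_apex_right ha hf htop' hu
  · simp

theorem dvd_apex_sub (h : IsChordSystem κ D) (ha : a ∈ D.image Prod.fst) : κ ∣ apex D a - a := by
  have hab := mk_topEnd_mem ha
  have hdvd := h.dvd _ _ hab
  have hlt := h.lt_apex_lt ha
  have hc := (leftNeighbor_spec (D := D) (h.add_two_le _ _ hab)).2
  change (apex D a, _) ∈ D ∨ apex D a + 1 = _ at hc
  rcases hc with hc | hc
  · convert Nat.dvd_sub hdvd (h.dvd _ _ hc) using 1
    have := h.add_two_le _ _ hc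
    omega
  · convert hdvd using 1
    omega

end IsChordSystem

theorem isAngulation_ladder (h : IsAngulation κ n D) (ha : a ∈ D.image Prod.fst) (hi : i ≤ a) :
    IsAngulation κ n (ladder D a i) := by
  cases i with
  | zero => exact h
  | succ q =>
    have hab := mk_topEnd_mem ha
    obtain ⟨hac, hcb⟩ := h.lt_apex_lt ha
    have hac_dvd := h.dvd_apex_sub ha
    have hq : q < a := hi
    refine ⟨⟨fun u v huv => ?_, fun u v huv => ?_, h.isNoncrossing_ladder ha hq⟩,
      fun u v huv => ?_, ?_, (h.card_ladder ha hi).trans h.card_eq⟩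
    · rcases mem_ladder_succ hq huv with ⟨huv, -⟩ | ⟨rfl, hu | hu, -⟩
      · exact h.add_two_le u v huv
      · have := h.add_two_le u a hu
        omega
      · omega
    · rcases mem_ladder_succ hq huv with ⟨huv, -⟩ | ⟨rfl, hu | hu, -⟩
      · exact h.dvd u v huv
      · convert Nat.dvd_add hac_dvd (h.dvd u a hu) using 1
        have := h.add_two_le u a hu
        omega
      · convert hac_dvd using 1
        omega
    · rcases mem_ladder_succ hq huv with ⟨huv, -⟩ | ⟨rfl, -, -⟩
      · exact h.le u v huv
      · exact hcb.le.trans (h.le _ _ hab)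
    · refine mem_image.2 ⟨_, h.root_mem, ?_⟩
      have := h.le _ _ hab
      have := h.add_two_le _ _ hab
      rw [ladderMap, if_neg (by simp; omega), if_neg (by simp; omega)]

end Ladder

/-! ### The lattice path encoding -/

section Encoding

variable {κ n a b b' M : ℕ} {D D' : Finset (ℕ × ℕ)} {ℓ w : ℕ → ℕ}

/-- The lower barrier of the lattice paths that encode `(κ + 2)`-angulations. -/
def angulationBarrier (κ n j : ℕ) : ℕ := min n (j ⌈/⌉ κ)

/-- The number of chords of `D` with left endpoint `a` and right endpoint smaller than `b`. -/
def endRank (D : Finset (ℕ × ℕ)) (a b : ℕ) : ℕ := #{e ∈ D | e.1 = a ∧ e.2 < b}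

theorem monotone_startCount (D : Finset (ℕ × ℕ)) : Monotone (startCount D) := fun _ _ hij =>
  card_le_card <| monotone_filter_right _ fun _ _ he => he.trans_le hij

theorem startCount_succ (D : Finset (ℕ × ℕ)) (a : ℕ) :
    startCount D (a + 1) = startCount D a + #{e ∈ D | e.1 = a} := by
  simp only [startCount, card_filter, ← sum_add_distrib]
  refine sum_congr rfl fun e _ => ?_
  split_ifs <;> omega

theorem IsAngulation.isLatticePath_startCount (h : IsAngulation κ n D) (hκ : 0 < κ) :
    IsLatticePath (κ * n + 1) n (angulationBarrier κ n) (startCount D) where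
  zero := by simp [startCount]
  le_succ j := monotone_startCount D j.le_succ
  eq_of_le j hj := by
    rw [startCount, filter_true_of_mem, h.card_eq]
    intro e he
    have := h.add_two_le e.1 e.2 he
    have := h.le e.1 e.2 he
    omega
  barrier_le j := by
    rw [angulationBarrier, min_le_iff, ceilDiv_le_iff_le_mul hκ]
    have hsplit : startCount D j + nestedCount D j (κ * n + 1) = n := by
      conv_rhs => rw [← h.card_eq, card_eq_sum_ones]
      rw [startCount, nestedCount, card_filter, card_filter, ← sum_add_distrib]
      refine sum_congr rfl fun e he => ?_
      have := h.le e.1 e.2 he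
      split_ifs <;> omega
    rcases lt_or_ge j (κ * n + 1) with hj | hj
    · have hle := h.mul_nestedCount_le hj
      have : κ * n = κ * startCount D j + κ * nestedCount D j (κ * n + 1) := by
        rw [← mul_add, hsplit]
      omega
    · rw [h.nestedCount_eq_zero (by omega)] at hsplit
      omega

theorem IsChordSystem.startCount_of_mem (h : IsChordSystem κ D) (hab : (a, b) ∈ D)
    (hab' : a < b') (hb : b' ≤ b) : startCount D b = startCount D b' + nestedCount D b' b := by
  simp only [startCount, nestedCount, card_filter, ← sum_add_distrib]
  refine sum_congr rfl fun e he => ?_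
  have := h.noncrossing _ hab _ he
  have := h.add_two_le e.1 e.2 he
  split_ifs <;> omega

theorem nestedCount_of_mem (hab : (a, b) ∈ D) :
    nestedCount D a b = nestedCount D (a + 1) b + endRank D a b + 1 := by
  have htop : 1 = ∑ e ∈ D, if e = (a, b) then 1 else 0 := by rw [sum_ite_eq', if_pos hab]
  simp only [nestedCount, endRank, card_filter]
  rw [htop, ← sum_add_distrib, ← sum_add_distrib]
  refine sum_congr rfl fun ⟨u, v⟩ _ => ?_
  simp only [Prod.mk.injEq]
  split_ifs <;> omega

-- `b` is the least vertex beyond `a` that solves this equation, by `lt_of_mem_of_lt` below.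
theorem IsAngulation.mul_startCount_of_mem (h : IsAngulation κ n D) (hab : (a, b) ∈ D) :
    κ * (startCount D b + endRank D a b + 1) + a + 1 = b + κ * startCount D (a + 1) := by
  have hchord := h.add_two_le a b hab
  have hcount := h.mul_nestedCount hab
  rw [nestedCount_of_mem hab] at hcount
  rw [h.startCount_of_mem hab (lt_add_one a) (by omega)]
  simp only [mul_add] at hcount ⊢
  omega

theorem IsAngulation.lt_of_mem_of_lt (h : IsAngulation κ n D) (hab : (a, b) ∈ D)
    (hab' : a < b') (hb : b' < b) :
    b' + κ * startCount D (a + 1) < κ * (startCount D b' + endRank D a b + 1) + a + 1 := by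
  have heq := h.mul_startCount_of_mem hab
  have hle := h.mul_nestedCount_le hb
  rw [h.startCount_of_mem hab hab' hb.le] at heq
  simp only [mul_add] at heq ⊢
  omega

theorem IsAngulation.mem_of_startCount_eq (h : IsAngulation κ n D) (h' : IsAngulation κ n D')
    (hS : startCount D = startCount D') (hrank : endRank D a b = endRank D' a b)
    (hab : (a, b) ∈ D) : (a, b) ∈ D' := by
  have hex : ∃ c, b ≤ c ∧ (a, c) ∈ D' := by
    by_contra! hnot
    have hall : endRank D' a b = #{e ∈ D' | e.1 = a} := by
      refine congrArg card (filter_congr fun e he => and_iff_left_of_imp ?_)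
      rintro rfl
      exact not_le.1 fun hb => hnot _ hb he
    have hlt : endRank D a b < #{e ∈ D | e.1 = a} := by
      refine card_lt_card ⟨monotone_filter_right _ fun _ _ => And.left, fun hsub => ?_⟩
      simpa using hsub (mem_filter.2 ⟨hab, rfl⟩)
    have := startCount_succ D a
    have := startCount_succ D' a
    rw [hS] at *
    omega
  obtain ⟨hbc, hc⟩ := Nat.find_spec hex
  have hmin := fun v (hv : v < Nat.find hex) => Nat.find_min hex hv
  generalize Nat.find hex = c at hbc hc hmin
  have hrank' : endRank D' a c = endRank D' a b := by
    refine congrArg card (filter_congr fun e he => and_congr_right ?_)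
    rintro rfl
    exact ⟨fun hlt => not_le.1 fun hb => hmin _ hlt ⟨hb, he⟩, fun hlt => hlt.trans_le hbc⟩
  rcases hbc.eq_or_lt with rfl | hlt
  · exact hc
  · have heq := h.mul_startCount_of_mem hab
    have := h.add_two_le a b hab
    have := h'.lt_of_mem_of_lt hc (by omega) hlt
    rw [hrank', ← hrank, ← hS] at this
    omega

theorem IsAngulation.eq_of_startCount_eq (h : IsAngulation κ n D) (h' : IsAngulation κ n D')
    (hS : startCount D = startCount D') : D = D' := by
  suffices hiff : ∀ b a, (a, b) ∈ D ↔ (a, b) ∈ D' from Finset.ext fun e => hiff e.2 e.1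
  intro b
  induction b using Nat.strong_induction_on with
  | _ b ih =>
  intro a
  have hrank : endRank D a b = endRank D' a b := by
    refine congrArg card (Finset.ext fun e => ?_)
    simp only [mem_filter]
    exact and_congr_left fun he => ih e.2 he.2 e.1
  exact ⟨h.mem_of_startCount_eq h' hS hrank, h'.mem_of_startCount_eq h hS.symm hrank.symm⟩

/-- The angulation all of whose diagonals end at the last vertex. -/
def fan (κ n : ℕ) : Finset (ℕ × ℕ) := (range n).image fun i => (κ * i, κ * n + 1)

theorem isAngulation_fan (hκ : 0 < κ) (hn : 0 < n) : IsAngulation κ n (fan κ n) := by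
  have hmem : ∀ u v, (u, v) ∈ fan κ n → v = κ * n + 1 ∧ ∃ i < n, u = κ * i := by
    intro u v he
    obtain ⟨i, hi, heq⟩ := mem_image.1 he
    obtain ⟨rfl, rfl⟩ := Prod.mk.inj heq
    exact ⟨rfl, i, mem_range.1 hi, rfl⟩
  refine ⟨⟨fun u v he => ?_, fun u v he => ?_, ?_⟩, fun u v he => (hmem u v he).1.le,
    mem_image.2 ⟨0, mem_range.2 hn, by simp⟩, ?_⟩
  · obtain ⟨rfl, i, hi, rfl⟩ := hmem u v he
    have : κ * i < κ * n := Nat.mul_lt_mul_of_pos_left hi hκ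
    omega
  · obtain ⟨rfl, i, -, rfl⟩ := hmem u v he
    convert Nat.dvd_sub (dvd_mul_right κ n) (dvd_mul_right κ i) using 1
    omega
  · rintro ⟨u, v⟩ he ⟨u', v'⟩ hf
    obtain ⟨rfl, -⟩ := hmem u v he
    obtain ⟨rfl, -⟩ := hmem u' v' hf
    simp
  · rw [fan, card_image_of_injective, card_range]
    intro i j hij
    exact Nat.eq_of_mul_eq_mul_left hκ (Prod.mk.inj hij).1

theorem startCount_fan_le (hκ : 0 < κ) (j : ℕ) :
    startCount (fan κ n) j ≤ angulationBarrier κ n j := by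
  have hsub : {e ∈ fan κ n | e.1 < j} ⊆
      (range (angulationBarrier κ n j)).image fun i => (κ * i, κ * n + 1) := by
    intro e he
    obtain ⟨he, hj⟩ := mem_filter.1 he
    obtain ⟨i, hi, rfl⟩ := mem_image.1 he
    refine mem_image_of_mem _ (mem_range.2 (lt_min (mem_range.1 hi) ?_))
    rwa [← not_le, ceilDiv_le_iff_le_mul hκ, not_le]
  exact (card_le_card hsub).trans (card_image_le.trans (card_range _).le)

theorem IsLatticePath.exists_update_pred (h : IsLatticePath M n ℓ w) (hℓ : Monotone ℓ)
    (hℓM : ∀ j, M ≤ j → n ≤ ℓ j) (hne : w ≠ ℓ) :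
    ∃ a ∈ Ico 1 M, 0 < w a ∧ IsLatticePath M n ℓ (Function.update w a (w a - 1)) := by
  have hex : ∃ j, ℓ j < w j := by
    by_contra! hle
    exact hne (le_antisymm hle h.barrier_le)
  obtain ⟨a, ha, hmin⟩ : ∃ a, ℓ a < w a ∧ ∀ j < a, w j ≤ ℓ j :=
    ⟨Nat.find hex, Nat.find_spec hex, fun j hj => not_lt.1 (Nat.find_min hex hj)⟩
  have ha0 : a ≠ 0 := by
    rintro rfl
    rw [h.zero] at ha
    omega
  have haM : a < M := by
    by_contra! hM
    have := hℓM a hM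
    rw [h.eq_of_le a hM] at ha
    omega
  have haI : a ∈ Ico 1 M := mem_Ico.2 ⟨Nat.one_le_iff_ne_zero.2 ha0, haM⟩
  refine ⟨a, haI, by omega, (h.update_iff haI).2 (mem_Icc.2 ⟨max_le ?_ (by omega), ?_⟩)⟩
  · have := hmin (a - 1) (by omega)
    have := hℓ (Nat.sub_le a 1)
    omega
  · have := h.le_succ a
    omega

theorem monotone_angulationBarrier (hκ : 0 < κ) (n : ℕ) : Monotone (angulationBarrier κ n) :=
  fun _ _ hij => min_le_min_left n <| (ceilDiv_le_iff_le_mul hκ).2 <|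
    hij.trans ((ceilDiv_le_iff_le_mul hκ).1 le_rfl)

theorem le_angulationBarrier (hκ : 0 < κ) (j : ℕ) (hj : κ * n + 1 ≤ j) :
    n ≤ angulationBarrier κ n j := by
  refine le_min le_rfl (not_lt.1 fun hlt => ?_)
  have := (ceilDiv_le_iff_le_mul hκ).1 hlt.le
  omega

theorem exists_isAngulation_startCount_eq (hκ : 0 < κ) (hn : 0 < n)
    (hw : IsLatticePath (κ * n + 1) n (angulationBarrier κ n) w) :
    ∃ D, IsAngulation κ n D ∧ startCount D = w := by
  induction hs : ∑ j ∈ range (κ * n + 1), w j using Nat.strong_induction_on generalizing w with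
  | _ s ih =>
  by_cases hbarrier : w = angulationBarrier κ n
  · have hfan := isAngulation_fan hκ hn
    exact ⟨fan κ n, hfan, hbarrier ▸
      le_antisymm (startCount_fan_le hκ) (hfan.isLatticePath_startCount hκ).barrier_le⟩
  obtain ⟨a, ha, hwa, hw'⟩ := hw.exists_update_pred (monotone_angulationBarrier hκ n)
    (le_angulationBarrier hκ) hbarrier
  obtain ⟨ha1, haM⟩ := mem_Ico.1 ha
  have hsum : ∑ j ∈ range (κ * n + 1), Function.update w a (w a - 1) j < s := by
    rw [← hs]
    refine sum_lt_sum (fun j _ => ?_) ⟨a, mem_range.2 haM, by simpa using hwa⟩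
    exact (update_le_self_iff.2 (Nat.sub_le _ _) : Function.update w a (w a - 1) ≤ w) j
  obtain ⟨D, hD, hS⟩ := ih _ hsum hw' rfl
  have hstart : a ∈ D.image Prod.fst := by
    by_contra hnot
    have hnone : #{e ∈ D | e.1 = a} = 0 :=
      card_eq_zero.2 (filter_eq_empty_iff.2 fun e he heq => hnot (mem_image.2 ⟨e, he, heq⟩))
    have hsucc := startCount_succ D a
    rw [hS, hnone, Function.update_self, Function.update_of_ne (by omega)] at hsucc
    have := hw.le_succ a
    omega
  refine ⟨ladder D a a, isAngulation_ladder hD hstart le_rfl, funext fun j => ?_⟩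
  rw [hD.startCount_ladder hstart ha1, hS]
  split_ifs with hj
  · rw [hj, Function.update_self]
    omega
  · rw [Function.update_of_ne hj, add_zero]

end Encoding

/-! ### Poincaré inequality for flips -/

section FlipEnergy

variable {κ n a i : ℕ} {D D' : Finset (ℕ × ℕ)} {f : (ℕ → ℕ) → ℝ}

/-- Two sets of chords are related by a flip: each contains exactly one element that the other
does not. -/
def IsFlip {α : Type*} [DecidableEq α] (s t : Finset α) : Prop := #(s \ t) = 1 ∧ #(t \ s) = 1

instance {α : Type*} [DecidableEq α] (s t : Finset α) : Decidable (IsFlip s t) :=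
  inferInstanceAs (Decidable (_ ∧ _))

open Classical in
/-- The finite set of all `(κ + 2)`-angulations of the polygon with vertices `0, …, κ n + 1`. -/
noncomputable def angulations (κ n : ℕ) : Finset (Finset (ℕ × ℕ)) :=
  {D ∈ (range (κ * n + 2) ×ˢ range (κ * n + 2)).powerset | IsAngulation κ n D}

theorem mem_angulations : D ∈ angulations κ n ↔ IsAngulation κ n D := by
  simp only [angulations, mem_filter, mem_powerset, and_iff_right_iff_imp]
  intro h e he
  have := h.add_two_le e.1 e.2 he
  have := h.le e.1 e.2 he
  simp only [mem_product, mem_range]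
  omega

/-- The squared gradient of `g` at `D` along all flips of `D`. -/
noncomputable def flipEnergy (κ n : ℕ) (g : Finset (ℕ × ℕ) → ℝ) (D : Finset (ℕ × ℕ)) : ℝ :=
  ∑ D' ∈ angulations κ n with IsFlip D D', (g D - g D') ^ 2

variable (g : Finset (ℕ × ℕ) → ℝ)

theorem flipEnergy_nonneg (κ n : ℕ) (D : Finset (ℕ × ℕ)) : 0 ≤ flipEnergy κ n g D :=
  sum_nonneg fun _ _ => sq_nonneg _

theorem IsAngulation.sq_sub_le_flipEnergy (h : IsAngulation κ n D) (h' : IsAngulation κ n D')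
    (hdiff : #(D' \ D) ≤ 1) : (g D - g D') ^ 2 ≤ flipEnergy κ n g D := by
  have hcard : #(D \ D') = #(D' \ D) := card_sdiff_comm (h.card_eq.trans h'.card_eq.symm)
  rcases Nat.le_one_iff_eq_zero_or_eq_one.1 hdiff with h0 | h1
  · have hsub : D' ⊆ D := sdiff_eq_empty_iff_subset.1 (card_eq_zero.1 h0)
    have hsub' : D ⊆ D' := sdiff_eq_empty_iff_subset.1 (card_eq_zero.1 (hcard.trans h0))
    rw [hsub'.antisymm hsub, sub_self, zero_pow two_ne_zero]
    exact flipEnergy_nonneg g κ n D'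
  · exact single_le_sum (f := fun D' => (g D - g D') ^ 2) (fun _ _ => sq_nonneg _)
      (mem_filter.2 ⟨mem_angulations.2 h', hcard.trans h1, h1⟩)

-- A rung of the ladder, `topEnd D a` and `apex D a` together determine `D`, so each rung carries
-- at most `(κ n + 2) ^ 2` ladders.
theorem sum_sq_sub_ladder_le (hi : i < a) :
    ∑ D ∈ angulations κ n with a ∈ D.image Prod.fst,
        (g (ladder D a (i + 1)) - g (ladder D a i)) ^ 2 ≤
      ((κ * n + 2 : ℕ) : ℝ) ^ 2 * ∑ D ∈ angulations κ n, flipEnergy κ n g D := by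
  set A := {D ∈ angulations κ n | a ∈ D.image Prod.fst}
  have hmem : ∀ D ∈ A, IsAngulation κ n D ∧ a ∈ D.image Prod.fst := fun D hD =>
    (mem_filter.1 hD).imp_left mem_angulations.1
  have hmaps : ∀ D ∈ A, (topEnd D a, apex D a) ∈ range (κ * n + 2) ×ˢ range (κ * n + 2) := by
    intro D hD
    obtain ⟨h, ha⟩ := hmem D hD
    have := h.le _ _ (mk_topEnd_mem ha)
    have := h.lt_apex_lt ha
    simp only [mem_product, mem_range]
    omega
  have hfiber : ∀ bc ∈ range (κ * n + 2) ×ˢ range (κ * n + 2),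
      ∑ D ∈ A with (topEnd D a, apex D a) = bc, (g (ladder D a (i + 1)) - g (ladder D a i)) ^ 2 ≤
        ∑ D ∈ angulations κ n, flipEnergy κ n g D := by
    rintro ⟨b, c⟩ -
    have hinj : Set.InjOn (fun D => ladder D a (i + 1))
        ({D ∈ A | (topEnd D a, apex D a) = (b, c)} : Finset _) := by
      have hinv : ∀ D ∈ {D ∈ A | (topEnd D a, apex D a) = (b, c)},
          (ladder D a (i + 1)).image (ladderInv a b c i) = D := by
        intro D hD
        obtain ⟨hD, hbc⟩ := mem_filter.1 hD
        obtain ⟨h, ha⟩ := hmem D hD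
        obtain ⟨rfl, rfl⟩ := Prod.mk.inj hbc
        exact h.image_ladderInv_ladder ha hi
      exact Set.LeftInvOn.injOn (f₁' := image (ladderInv a b c i)) hinv
    calc ∑ D ∈ A with (topEnd D a, apex D a) = (b, c),
          (g (ladder D a (i + 1)) - g (ladder D a i)) ^ 2
        ≤ ∑ D ∈ A with (topEnd D a, apex D a) = (b, c), flipEnergy κ n g (ladder D a (i + 1)) := by
          refine sum_le_sum fun D hD => ?_
          obtain ⟨h, ha⟩ := hmem D (mem_filter.1 hD).1
          exact (isAngulation_ladder h ha hi).sq_sub_le_flipEnergy g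
            (isAngulation_ladder h ha hi.le) (card_ladder_sdiff_le_one hi)
      _ = ∑ D ∈ ({D ∈ A | (topEnd D a, apex D a) = (b, c)}).image fun D => ladder D a (i + 1),
            flipEnergy κ n g D := (sum_image hinj).symm
      _ ≤ ∑ D ∈ angulations κ n, flipEnergy κ n g D := by
          refine sum_le_sum_of_subset_of_nonneg (image_subset_iff.2 fun D hD => ?_)
            fun D _ _ => flipEnergy_nonneg g κ n D
          obtain ⟨h, ha⟩ := hmem D (mem_filter.1 hD).1
          exact mem_angulations.2 (isAngulation_ladder h ha hi)
  rw [← sum_fiberwise_of_maps_to hmaps]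
  refine (sum_le_card_nsmul _ _ _ hfiber).trans_eq ?_
  rw [card_product, card_range, nsmul_eq_mul, Nat.cast_mul, ← sq]

theorem IsAngulation.upGradSq_startCount_le (h : IsAngulation κ n D) (ha : 0 < a)
    (hf : ∀ D, IsAngulation κ n D → f (startCount D) = g D) :
    upGradSq f a (startCount D) ≤ if a ∈ D.image Prod.fst then
      a * ∑ q ∈ range a, (g (ladder D a (q + 1)) - g (ladder D a q)) ^ 2 else 0 := by
  rw [upGradSq]
  split_ifs with hlt hstart hstart
  · have hup : Function.update (startCount D) a (startCount D a + 1) =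
        startCount (ladder D a a) := by
      funext j
      rw [h.startCount_ladder hstart ha, Function.update_apply]
      split_ifs with hj
      · rw [hj]
      · rfl
    rw [hup, hf _ (isAngulation_ladder h hstart le_rfl), hf D h]
    calc (g (ladder D a a) - g D) ^ 2
        = (∑ q ∈ range a, (g (ladder D a (q + 1)) - g (ladder D a q))) ^ 2 := by
          rw [sum_range_sub fun q => g (ladder D a q), ladder]
      _ ≤ a * ∑ q ∈ range a, (g (ladder D a (q + 1)) - g (ladder D a q)) ^ 2 := by
          simpa only [card_range] using sq_sum_le_card_mul_sum_sq
            (s := range a) (f := fun q => g (ladder D a (q + 1)) - g (ladder D a q))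
  · have hnone : #{e ∈ D | e.1 = a} = 0 :=
      card_eq_zero.2 (filter_eq_empty_iff.2 fun e he heq => hstart (mem_image.2 ⟨e, he, heq⟩))
    rw [startCount_succ, hnone] at hlt
    exact absurd hlt (lt_irrefl _)
  · exact mul_nonneg a.cast_nonneg (sum_nonneg fun _ _ => sq_nonneg _)
  · exact le_rfl

theorem sum_upGradSq_startCount_le (ha : a ∈ Ico 1 (κ * n + 1))
    (hf : ∀ D, IsAngulation κ n D → f (startCount D) = g D) :
    ∑ D ∈ angulations κ n, upGradSq f a (startCount D) ≤
      ((κ * n + 2 : ℕ) : ℝ) ^ 4 * ∑ D ∈ angulations κ n, flipEnergy κ n g D := by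
  obtain ⟨ha1, haM⟩ := mem_Ico.1 ha
  have hE : 0 ≤ ∑ D ∈ angulations κ n, flipEnergy κ n g D :=
    sum_nonneg fun D _ => flipEnergy_nonneg g κ n D
  have haM' : (a : ℝ) ≤ (κ * n + 2 : ℕ) := Nat.cast_le.2 (by omega)
  calc ∑ D ∈ angulations κ n, upGradSq f a (startCount D)
      ≤ ∑ D ∈ angulations κ n with a ∈ D.image Prod.fst,
          a * ∑ q ∈ range a, (g (ladder D a (q + 1)) - g (ladder D a q)) ^ 2 := by
        rw [sum_filter]
        exact sum_le_sum fun D hD => (mem_angulations.1 hD).upGradSq_startCount_le g ha1 hf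
    _ = a * ∑ q ∈ range a, ∑ D ∈ angulations κ n with a ∈ D.image Prod.fst,
          (g (ladder D a (q + 1)) - g (ladder D a q)) ^ 2 := by
        rw [← mul_sum, sum_comm]
    _ ≤ a * ∑ _q ∈ range a,
          ((κ * n + 2 : ℕ) : ℝ) ^ 2 * ∑ D ∈ angulations κ n, flipEnergy κ n g D :=
        mul_le_mul_of_nonneg_left
          (sum_le_sum fun q hq => sum_sq_sub_ladder_le g (mem_range.1 hq)) a.cast_nonneg
    _ = (a : ℝ) ^ 2 *
          (((κ * n + 2 : ℕ) : ℝ) ^ 2 * ∑ D ∈ angulations κ n, flipEnergy κ n g D) := by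
        rw [sum_const, card_range, nsmul_eq_mul]
        ring
    _ ≤ ((κ * n + 2 : ℕ) : ℝ) ^ 2 *
          (((κ * n + 2 : ℕ) : ℝ) ^ 2 * ∑ D ∈ angulations κ n, flipEnergy κ n g D) := by
        gcongr
    _ = ((κ * n + 2 : ℕ) : ℝ) ^ 4 * ∑ D ∈ angulations κ n, flipEnergy κ n g D := by ring

theorem injOn_startCount (κ n : ℕ) :
    Set.InjOn startCount (angulations κ n : Set (Finset (ℕ × ℕ))) :=
  fun _ hD _ hD' => (mem_angulations.1 hD).eq_of_startCount_eq (mem_angulations.1 hD')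

open Classical in
theorem image_startCount_angulations (hκ : 0 < κ) (hn : 0 < n) :
    (angulations κ n).image startCount = latticePaths (κ * n + 1) n (angulationBarrier κ n) := by
  ext w
  rw [mem_image, mem_latticePaths]
  constructor
  · rintro ⟨D, hD, rfl⟩
    exact (mem_angulations.1 hD).isLatticePath_startCount hκ
  · intro hw
    obtain ⟨D, hD, hS⟩ := exists_isAngulation_startCount_eq hκ hn hw
    exact ⟨D, mem_angulations.2 hD, hS⟩

theorem sum_sq_le_mul_sum_flipEnergy (hκ : 0 < κ) (hn : 0 < n)
    (hg : ∑ D ∈ angulations κ n, g D = 0) :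
    ∑ D ∈ angulations κ n, g D ^ 2 ≤
      ((κ * n + 2 : ℕ) : ℝ) ^ 10 * ∑ D ∈ angulations κ n, flipEnergy κ n g D := by
  set m : ℝ := ((κ * n + 2 : ℕ) : ℝ) with hm
  set f : (ℕ → ℕ) → ℝ := g ∘ Function.invFunOn startCount (angulations κ n)
  have hf : ∀ D ∈ angulations κ n, f (startCount D) = g D := fun D hD =>
    congrArg g ((injOn_startCount κ n).leftInvOn_invFunOn hD)
  have hsum (F : (ℕ → ℕ) → ℝ) :
      ∑ w ∈ latticePaths (κ * n + 1) n (angulationBarrier κ n), F w =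
        ∑ D ∈ angulations κ n, F (startCount D) := by
    classical rw [← image_startCount_angulations hκ hn, sum_image (injOn_startCount κ n)]
  have hnκ : n ≤ κ * n := Nat.le_mul_of_pos_left n hκ
  have hMm : ((κ * n + 1 : ℕ) : ℝ) ≤ m := Nat.cast_le.2 (by omega)
  have hκm : ((κ * n : ℕ) : ℝ) ≤ m := Nat.cast_le.2 (by omega)
  have hnm : (n : ℝ) + 1 ≤ m := by
    rw [hm]
    exact_mod_cast (by omega : n + 1 ≤ κ * n + 2)
  have hE : 0 ≤ ∑ D ∈ angulations κ n, flipEnergy κ n g D :=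
    sum_nonneg fun D _ => flipEnergy_nonneg g κ n D
  have hP := sum_sq_le_mul_sum_upGradSq (M := κ * n + 1) (by omega)
    ((hsum f).trans ((sum_congr rfl hf).trans hg))
  rw [hsum, hsum, sum_congr rfl fun D hD => congrArg (· ^ 2) (hf D hD), sum_comm] at hP
  calc ∑ D ∈ angulations κ n, g D ^ 2
      ≤ (κ * n + 1 : ℕ) ^ 3 * (n + 1 : ℝ) ^ 2 *
          ∑ a ∈ Ico 1 (κ * n + 1), ∑ D ∈ angulations κ n, upGradSq f a (startCount D) := hP
    _ ≤ m ^ 3 * m ^ 2 *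
          ∑ _a ∈ Ico 1 (κ * n + 1), m ^ 4 * ∑ D ∈ angulations κ n, flipEnergy κ n g D := by
        gcongr with a ha
        · exact sum_nonneg fun a _ => sum_nonneg fun D _ => upGradSq_nonneg f a _
        · exact sum_upGradSq_startCount_le g ha fun D hD => hf D (mem_angulations.2 hD)
    _ = m ^ 3 * m ^ 2 * ((κ * n : ℕ) * (m ^ 4 * ∑ D ∈ angulations κ n, flipEnergy κ n g D)) := by
        rw [sum_const, Nat.card_Ico, nsmul_eq_mul, Nat.add_sub_cancel]
    _ ≤ m ^ 3 * m ^ 2 * (m * (m ^ 4 * ∑ D ∈ angulations κ n, flipEnergy κ n g D)) := by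
        gcongr
    _ = m ^ 10 * ∑ D ∈ angulations κ n, flipEnergy κ n g D := by ring

end FlipEnergy

/-! ### Faces and degrees -/

section Face

variable {κ μ x y : ℕ} {F : Finset ℕ} {D : Finset (ℕ × ℕ)} {e f : ℕ × ℕ}

theorem exists_predecessor (hx : x ∈ F) (hxy : x < y) :
    ∃ z ∈ F, x ≤ z ∧ z < y ∧ ∀ w ∈ F, ¬ (z < w ∧ w < y) := by
  obtain ⟨z, hz, hmax⟩ := exists_max_image {z ∈ F | z < y} id ⟨x, by simp [hx, hxy]⟩
  simp only [mem_filter, id] at hz hmax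
  exact ⟨z, hz.1, hmax x ⟨hx, hxy⟩, hz.2, fun w hw h => (hmax w ⟨hw, h.2⟩).not_gt h.1⟩

theorem exists_successor (hy : y ∈ F) (hxy : x < y) :
    ∃ z ∈ F, x < z ∧ z ≤ y ∧ ∀ w ∈ F, ¬ (x < w ∧ w < z) := by
  obtain ⟨z, hz, hmin⟩ := exists_min_image {z ∈ F | x < z} id ⟨y, by simp [hy, hxy]⟩
  simp only [mem_filter, id] at hz hmin
  exact ⟨z, hz.1, hz.2, hmin y ⟨hy, hxy⟩, fun w hw h => (hmin w ⟨hw, h.1⟩).not_gt h.2⟩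

theorem count_eq_succ_of_consecutive (hx : x ∈ F) (hxy : x < y)
    (hcons : ∀ z ∈ F, ¬ (x < z ∧ z < y)) : Nat.count (· ∈ F) y = Nat.count (· ∈ F) x + 1 := by
  have hfilter : {z ∈ range y | z ∈ F} = insert x {z ∈ range x | z ∈ F} := by
    ext z
    simp only [mem_filter, mem_range, mem_insert]
    have := hcons z
    grind
  rw [Nat.count_eq_card_filter_range, Nat.count_eq_card_filter_range, hfilter,
    card_insert_of_notMem (by simp)]

/-- The vertex set of the polygon directly below the chord `f` in the dissection by `D`: the
vertices in `[f.1, f.2]` that no other chord of `D` below `f` separates from `f`. -/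
def face (D : Finset (ℕ × ℕ)) (f : ℕ × ℕ) : Finset ℕ :=
  {x ∈ Icc f.1 f.2 | ∀ e ∈ D, e ≠ f → f.1 ≤ e.1 → e.2 ≤ f.2 → ¬ (e.1 < x ∧ x < e.2)}

theorem mem_face : x ∈ face D f ↔ (f.1 ≤ x ∧ x ≤ f.2) ∧
    ∀ e ∈ D, e ≠ f → f.1 ≤ e.1 → e.2 ≤ f.2 → ¬ (e.1 < x ∧ x < e.2) := by
  rw [face, mem_filter, mem_Icc]

theorem left_mem_face (h : f.1 ≤ f.2) : f.1 ∈ face D f :=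
  mem_face.2 ⟨⟨le_rfl, h⟩, fun _ _ _ he _ hx => he.not_gt hx.1⟩

theorem right_mem_face (h : f.1 ≤ f.2) : f.2 ∈ face D f :=
  mem_face.2 ⟨⟨h, le_rfl⟩, fun _ _ _ _ he hx => he.not_gt hx.2⟩

theorem count_face_left : Nat.count (· ∈ face D f) f.1 = 0 :=
  Nat.count_of_forall_not fun _ hx hxF => (mem_face.1 hxF).1.1.not_gt hx

theorem count_face_right (h : f.1 ≤ f.2) : Nat.count (· ∈ face D f) f.2 + 1 = #(face D f) := by
  rw [← Nat.count_succ_eq_succ_count (right_mem_face h), Nat.count_eq_card_filter_range]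
  congr 1
  ext x
  simp only [mem_filter, mem_range, and_iff_right_iff_imp]
  exact fun hx => Nat.lt_succ_of_le (mem_face.1 hx).1.2

-- The hypothesis on consecutive vertices says that the sides of the polygon `F` other than `f` are
-- sides of the outer polygon or chords of `D`.
theorem exists_side_around (hleft : f.1 ∈ F) (hright : f.2 ∈ F)
    (hcons : ∀ x ∈ F, ∀ y ∈ F, x < y → (∀ z ∈ F, ¬ (x < z ∧ z < y)) →
      y = x + 1 ∨ (x, y) ∈ D.erase f) (hxF : x ∉ F) (hlx : f.1 < x) (hxr : x < f.2) :
    ∃ y ∈ F, ∃ z ∈ F, y < x ∧ x < z ∧ (y, z) ∈ D.erase f ∧ ∀ w ∈ F, w ≤ y ∨ z ≤ w := by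
  obtain ⟨y, hy, -, hyx, hy'⟩ := exists_predecessor hleft hlx
  obtain ⟨z, hz, hxz, -, hz'⟩ := exists_successor hright hxr
  have hyz : ∀ w ∈ F, w ≤ y ∨ z ≤ w := by
    intro w hw
    have := hy' w hw
    have := hz' w hw
    have : w ≠ x := ne_of_mem_of_not_mem hw hxF
    omega
  refine ⟨y, hy, z, hz, hyx, hxz, ?_, hyz⟩
  exact (hcons y hy z hz (hyx.trans hxz) fun w hw _ => by have := hyz w hw; omega).resolve_left
    (by omega)

theorem IsNoncrossing.eq_face (hD : IsNoncrossing D) (hleft : f.1 ∈ F) (hright : f.2 ∈ F)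
    (hF : ∀ x ∈ F, f.1 ≤ x ∧ x ≤ f.2)
    (hcons : ∀ x ∈ F, ∀ y ∈ F, x < y → (∀ z ∈ F, ¬ (x < z ∧ z < y)) →
      y = x + 1 ∨ (x, y) ∈ D.erase f)
    (hdiag : ∀ e ∈ D, e ≠ f → e.1 ∈ F → e.2 ∈ F → ∀ z ∈ F, ¬ (e.1 < z ∧ z < e.2)) :
    F = face D f := by
  ext x
  refine ⟨fun hx => mem_face.2 ⟨hF x hx, ?_⟩, fun hx => ?_⟩
  · rintro ⟨u, v⟩ he hne hfu hvf ⟨hux, hxv⟩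
    have hxF := hF x hx
    simp only at hfu hvf hux hxv
    by_cases hu : u ∈ F
    · by_cases hv : v ∈ F
      · exact hdiag _ he hne hu hv x hx ⟨hux, hxv⟩
      · obtain ⟨y, -, z, -, hyv, hvz, hyz, hout⟩ := exists_side_around hleft hright hcons hv
          (by omega) (lt_of_le_of_ne hvf fun h => hv (h ▸ hright))
        have := hD _ he _ (mem_of_mem_erase hyz)
        have := hout x hx
        have := hout u hu
        simp only at *
        omega
    · obtain ⟨y, -, z, -, hyu, huz, hyz, hout⟩ := exists_side_around hleft hright hcons hu
        (lt_of_le_of_ne hfu fun h => hu (h ▸ hleft)) (by omega)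
      have := hD _ (mem_of_mem_erase hyz) _ he
      have := hout x hx
      simp only at *
      omega
  · by_contra hxF
    obtain ⟨⟨hfx, hxf⟩, hx⟩ := mem_face.1 hx
    obtain ⟨y, hy, z, hz, hyx, hxz, hyz, -⟩ := exists_side_around hleft hright hcons hxF
      (lt_of_le_of_ne hfx fun h => hxF (h ▸ hleft)) (lt_of_le_of_ne hxf fun h => hxF (h ▸ hright))
    exact hx _ (mem_of_mem_erase hyz) (ne_of_mem_erase hyz) (hF y hy).1 (hF z hz).2 ⟨hyx, hxz⟩

theorem nestedCount_insert (he : e ∉ D) (i j : ℕ) :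
    nestedCount (insert e D) i j = nestedCount D i j + if i ≤ e.1 ∧ e.2 ≤ j then 1 else 0 := by
  simp only [nestedCount, card_filter, sum_insert he, add_comm]

theorem nestedCount_eq_erase_add (he : e ∈ D) (i j : ℕ) :
    nestedCount D i j = nestedCount (D.erase e) i j + if i ≤ e.1 ∧ e.2 ≤ j then 1 else 0 := by
  rw [← nestedCount_insert (notMem_erase e D), insert_erase he]

theorem nestedCount_erase_of_ne (hf : f.1 ≤ e.1) (hf' : e.2 ≤ f.2) (hne : e ≠ f) :
    nestedCount (D.erase f) e.1 e.2 = nestedCount D e.1 e.2 := by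
  by_cases hfD : f ∈ D
  · rw [nestedCount_eq_erase_add hfD, if_neg, add_zero]
    rintro ⟨h, h'⟩
    exact hne (Prod.ext (h.antisymm hf) (hf'.antisymm h'))
  · rw [erase_eq_of_notMem hfD]

namespace IsChordSystem

theorem mono {D' : Finset (ℕ × ℕ)} (h : IsChordSystem μ D) (hD : D' ⊆ D) : IsChordSystem μ D' where
  add_two_le a b hab := h.add_two_le a b (hD hab)
  dvd a b hab := h.dvd a b (hD hab)
  noncrossing e he f hf := h.noncrossing e (hD he) f (hD hf)

theorem eq_succ_or_mem_of_consecutive (h : IsChordSystem μ D) (hx : x ∈ face D f)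
    (hy : y ∈ face D f) (hxy : x < y) (hcons : ∀ z ∈ face D f, ¬ (x < z ∧ z < y)) :
    y = x + 1 ∨ (x, y) ∈ D.erase f := by
  rw [or_iff_not_imp_left]
  intro hne
  obtain ⟨⟨hfx, -⟩, hx⟩ := mem_face.1 hx
  obtain ⟨⟨-, hyf⟩, hy⟩ := mem_face.1 hy
  have hsucc : x + 1 ∉ face D f := fun h => hcons _ h (by omega)
  rw [mem_face] at hsucc
  push Not at hsucc
  obtain ⟨⟨u, v⟩, huv, huvf, hfu, hvf, hu, hv⟩ := hsucc (by omega)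
  have hux := hx _ huv huvf hfu hvf
  simp only at hfu hvf hu hv hux
  obtain rfl : u = x := by omega
  -- The longest chord starting at `x` ends at a vertex of the face.
  obtain ⟨d, hd, hmax⟩ := exists_max_image {d ∈ range (f.2 + 1) | (u, d) ∈ D.erase f} id
    ⟨v, by simp only [mem_filter, mem_range, mem_erase]; exact ⟨by omega, huvf, huv⟩⟩
  simp only [mem_filter, mem_range, mem_erase, id] at hd hmax
  obtain ⟨hdf, hdne, hdD⟩ := hd
  have hvd := hmax v ⟨by omega, huvf, huv⟩
  have hdF : d ∈ face D f := by
    refine mem_face.2 ⟨by omega, ?_⟩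
    rintro ⟨u', v'⟩ he hne' hfu' hvf' ⟨hud, hdv⟩
    have hcross := h.noncrossing _ hdD _ he
    have hcover := hx _ he hne' hfu' hvf'
    simp only at hfu' hvf' hud hdv hcross hcover
    obtain rfl : u' = u := by omega
    have := hmax v' ⟨by omega, hne', he⟩
    omega
  have := hcons d hdF
  have := hy _ hdD hdne hfx (by simp only; omega)
  simp only at this
  obtain rfl : y = d := by omega
  exact mem_erase.2 ⟨hdne, hdD⟩

theorem three_le_card_face (h : IsChordSystem μ D) (hf : f.1 + 2 ≤ f.2) : 3 ≤ #(face D f) := by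
  obtain ⟨l, hfl, hlf, hsplit⟩ := h.exists_split hf
  have hl : l ∈ face D f := by
    refine mem_face.2 ⟨by omega, fun e he hne hfe hef => ?_⟩
    have := hsplit e.1 e.2 he hfe hef hne
    omega
  have hsub : {f.1, l, f.2} ⊆ face D f := by
    simp only [insert_subset_iff, singleton_subset_iff]
    exact ⟨left_mem_face (by omega), hl, right_mem_face (by omega)⟩
  refine le_of_eq_of_le (card_eq_three.2 ⟨_, _, _, ?_, ?_, ?_, rfl⟩).symm (card_le_card hsub) <;>
    omega

theorem mul_nestedCount_erase_add_count (h : IsChordSystem μ D)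
    (hsat : ∀ e ∈ D, e ≠ f → f.1 ≤ e.1 → e.2 ≤ f.2 → κ * nestedCount D e.1 e.2 + e.1 + 1 = e.2)
    (hx : x ∈ face D f) (hy : y ∈ face D f) (hxy : x ≤ y) :
    κ * nestedCount (D.erase f) x y + Nat.count (· ∈ face D f) y + x =
      y + Nat.count (· ∈ face D f) x := by
  have h' := h.mono (erase_subset f D)
  induction y using Nat.strong_induction_on with
  | _ y ih =>
  rcases hxy.eq_or_lt with rfl | hxy
  · rw [h'.nestedCount_eq_zero (by omega)]
    omega
  obtain ⟨z, hz, hxz, hzy, hcons⟩ := exists_predecessor hx hxy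
  have hstep : κ * nestedCount (D.erase f) z y + z + 1 = y := by
    rcases h.eq_succ_or_mem_of_consecutive hz hy hzy hcons with rfl | hzyD
    · rw [h'.nestedCount_eq_zero (by omega)]
      omega
    · obtain ⟨hne, hzyD⟩ := mem_erase.1 hzyD
      have hfz := (mem_face.1 hz).1.1
      have hyf := (mem_face.1 hy).1.2
      have := hsat _ hzyD hne hfz hyf
      rwa [← nestedCount_erase_of_ne hfz hyf hne] at this
  have hcount := count_eq_succ_of_consecutive hz hzy hcons
  rcases hxz.eq_or_lt with rfl | hxz
  · omega
  have hcover : ∀ u v, (u, v) ∈ D.erase f → x ≤ u → v ≤ y → v ≤ z ∨ z ≤ u := by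
    intro u v huv hxu hvy
    have := (mem_face.1 hz).2 _ (mem_of_mem_erase huv) (ne_of_mem_erase huv)
      ((mem_face.1 hx).1.1.trans hxu) (hvy.trans (mem_face.1 hy).1.2)
    simp only at this
    omega
  have hsplit := h'.nestedCount_split hxz hzy fun u v huv hxu hvy _ => hcover u v huv hxu hvy
  rw [if_neg fun hmem => by have := hcover x y hmem le_rfl le_rfl; omega, zero_add] at hsplit
  have := ih z hzy hz hxz.le
  rw [hsplit, mul_add]
  omega

theorem mul_nestedCount_add_card_face (h : IsChordSystem μ D) (hf : f ∈ D)
    (hsat : ∀ e ∈ D, e ≠ f → f.1 ≤ e.1 → e.2 ≤ f.2 → κ * nestedCount D e.1 e.2 + e.1 + 1 = e.2) :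
    κ * nestedCount D f.1 f.2 + f.1 + 1 + #(face D f) = f.2 + (κ + 2) := by
  have hle : f.1 ≤ f.2 := by
    have := h.add_two_le f.1 f.2 hf
    omega
  have := h.mul_nestedCount_erase_add_count hsat (left_mem_face hle) (right_mem_face hle) hle
  rw [count_face_left] at this
  rw [nestedCount_eq_erase_add hf, if_pos ⟨le_rfl, le_rfl⟩, mul_add, ← count_face_right hle]
  omega

-- Induction on the length of the chord `e`.
theorem mul_nestedCount_of_card_face (h : IsChordSystem μ D)
    (hface : ∀ f ∈ D, #(face D f) = κ + 2) (he : e ∈ D) :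
    κ * nestedCount D e.1 e.2 + e.1 + 1 = e.2 := by
  induction hs : e.2 - e.1 using Nat.strong_induction_on generalizing e with
  | _ s ih =>
  have hle := h.add_two_le e.1 e.2 he
  have := h.mul_nestedCount_add_card_face (κ := κ) he fun f hf hne h1 h2 => by
    refine ih (f.2 - f.1) ?_ hf rfl
    have := h.add_two_le f.1 f.2 hf
    have : f.1 ≠ e.1 ∨ f.2 ≠ e.2 := by
      rw [← not_and_or]
      exact fun h => hne (Prod.ext h.1 h.2)
    omega
  rw [hface e he] at this
  omega

theorem isNoncrossing_insert (h : IsChordSystem μ D) (hf : f ∈ D) (hx : x ∈ face D f)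
    (hy : y ∈ face D f) : IsNoncrossing (insert (x, y) D) := by
  obtain ⟨hxf, hx⟩ := mem_face.1 hx
  obtain ⟨hyf, hy⟩ := mem_face.1 hy
  have hcross : ∀ e ∈ D,
      ¬ (e.1 < x ∧ x < e.2 ∧ e.2 < y) ∧ ¬ (x < e.1 ∧ e.1 < y ∧ y < e.2) := by
    intro e he
    by_cases hef : e = f
    · subst hef
      omega
    · have := h.noncrossing _ he _ hf
      have := h.noncrossing _ hf _ he
      have := hx _ he hef
      have := hy _ he hef
      omega
  intro e he f hf
  rcases mem_insert.1 he with rfl | he <;> rcases mem_insert.1 hf with rfl | hf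
  · omega
  · exact (hcross f hf).2
  · exact (hcross e he).1
  · exact h.noncrossing e he f hf

end IsChordSystem

theorem IsAngulation.card_face {n : ℕ} (h : IsAngulation κ n D) (hf : f ∈ D) :
    #(face D f) = κ + 2 := by
  have := h.mul_nestedCount_add_card_face hf fun e he _ _ _ => h.mul_nestedCount he
  have := h.mul_nestedCount hf
  omega

end Face

section Degree

variable {κ n : ℕ} {D : Finset (ℕ × ℕ)} {e e' f : ℕ × ℕ}

/-- The pairs of opposite vertices of the `(2 κ + 2)`-gon with vertex set `F`, that is, the pairs
whose ranks in `F` differ by `κ + 1`. -/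
def oppositePairs (κ : ℕ) (F : Finset ℕ) : Finset (ℕ × ℕ) :=
  {e ∈ F ×ˢ F | Nat.count (· ∈ F) e.2 = Nat.count (· ∈ F) e.1 + κ + 1}

theorem mem_oppositePairs {F : Finset ℕ} : e ∈ oppositePairs κ F ↔
    (e.1 ∈ F ∧ e.2 ∈ F) ∧ Nat.count (· ∈ F) e.2 = Nat.count (· ∈ F) e.1 + κ + 1 := by
  rw [oppositePairs, mem_filter, mem_product]

theorem card_oppositePairs {F : Finset ℕ} (hF : #F = 2 * κ + 2) : #(oppositePairs κ F) = κ + 1 := by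
  have hfin : {x | x ∈ F}.Finite := F.finite_toSet
  have hcard : #hfin.toFinset = 2 * κ + 2 := by
    rw [← hF]
    congr 1
    ext x
    simp
  have hcount : ∀ i < 2 * κ + 2, Nat.count (· ∈ F) (Nat.nth (· ∈ F) i) = i := fun i hi =>
    Nat.count_nth fun _ => hcard ▸ hi
  have hmem : ∀ i < 2 * κ + 2, Nat.nth (· ∈ F) i ∈ F := fun i hi =>
    Nat.nth_mem i fun _ => hcard ▸ hi
  have hlt : ∀ x ∈ F, Nat.count (· ∈ F) x < 2 * κ + 2 := fun x hx =>
    hcard ▸ Nat.count_lt_card hfin hx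
  rw [← card_range (κ + 1)]
  refine card_nbij' (fun e => Nat.count (· ∈ F) e.1)
    (fun i => (Nat.nth (· ∈ F) i, Nat.nth (· ∈ F) (i + κ + 1))) ?_ ?_ ?_ ?_
  · intro e he
    obtain ⟨⟨-, he2⟩, he⟩ := mem_oppositePairs.1 (mem_coe.1 he)
    have := hlt _ he2
    simp only [coe_range, Set.mem_Iio]
    omega
  · intro i hi
    rw [coe_range, Set.mem_Iio] at hi
    refine mem_coe.2 (mem_oppositePairs.2 ⟨⟨hmem _ (by omega), hmem _ (by omega)⟩, ?_⟩)
    rw [hcount _ (by omega), hcount _ (by omega)]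
  · intro e he
    obtain ⟨⟨he1, he2⟩, he⟩ := mem_oppositePairs.1 (mem_coe.1 he)
    exact Prod.ext (Nat.nth_count he1) ((congrArg _ he.symm).trans (Nat.nth_count he2))
  · intro i hi
    rw [coe_range, Set.mem_Iio] at hi
    exact hcount i (by omega)

/-- `f` is the shortest chord of `D` above the chord `e`, so that the diagonal `e` divides the
polygon of `D` directly below `f`. -/
structure IsParent (D : Finset (ℕ × ℕ)) (e f : ℕ × ℕ) : Prop where
  mem : f ∈ D
  le_fst : f.1 ≤ e.1
  snd_le : e.2 ≤ f.2
  minimal : ∀ g ∈ D, g ≠ f → f.1 ≤ g.1 → g.2 ≤ f.2 → ¬ (g.1 ≤ e.1 ∧ e.2 ≤ g.2)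

namespace IsAngulation

theorem exists_isParent (h : IsAngulation κ n (insert e D)) (he : e ≠ (0, κ * n + 1)) :
    ∃ f, IsParent D e f := by
  have hroot : (0, κ * n + 1) ∈ D := mem_of_mem_insert_of_ne h.root_mem he.symm
  obtain ⟨f, hf, hmin⟩ := exists_min_image {f ∈ D | f.1 ≤ e.1 ∧ e.2 ≤ f.2} (fun f => f.2 - f.1)
    ⟨_, mem_filter.2 ⟨hroot, Nat.zero_le _, h.le _ _ (mem_insert_self e D)⟩⟩
  simp only [mem_filter] at hf hmin
  refine ⟨f, hf.1, hf.2.1, hf.2.2, fun g hg hne hfg hgf hge => hne ?_⟩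
  have := hmin g ⟨hg, hge⟩
  have := h.add_two_le _ _ (mem_insert_of_mem hg)
  exact Prod.ext (by omega) (by omega)

variable (hκ : 0 < κ) (h : IsAngulation κ n (insert e D)) (he : e ∉ D) (hf : IsParent D e f)
include h

theorem chordSystem_of_insert : IsChordSystem κ D :=
  h.toIsChordSystem.mono (subset_insert e D)

include he hf

theorem mul_nestedCount_of_isParent :
    ∀ g ∈ D, g ≠ f → f.1 ≤ g.1 → g.2 ≤ f.2 → κ * nestedCount D g.1 g.2 + g.1 + 1 = g.2 := by
  intro g hg hne hfg hgf
  have := h.mul_nestedCount (mem_insert_of_mem hg)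
  rwa [nestedCount_insert he, if_neg (hf.minimal g hg hne hfg hgf), add_zero] at this

theorem card_face_of_isParent : #(face D f) = 2 * κ + 2 := by
  have hsat := h.mul_nestedCount (mem_insert_of_mem hf.mem)
  rw [nestedCount_insert he, if_pos ⟨hf.le_fst, hf.snd_le⟩, mul_add] at hsat
  have := h.chordSystem_of_insert.mul_nestedCount_add_card_face hf.mem
    (h.mul_nestedCount_of_isParent he hf)
  omega

theorem mem_oppositePairs_of_isParent : e ∈ oppositePairs κ (face D f) := by
  have hmem := mem_insert_self e D
  have hle := h.add_two_le e.1 e.2 hmem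
  have hle_fst := hf.le_fst
  have hsnd_le := hf.snd_le
  have hleft : e.1 ∈ face D f := by
    refine mem_face.2 ⟨⟨hle_fst, by omega⟩, fun g hg hne hfg hgf hge => ?_⟩
    have := h.noncrossing _ (mem_insert_of_mem hg) _ hmem
    exact hf.minimal g hg hne hfg hgf (by omega)
  have hright : e.2 ∈ face D f := by
    refine mem_face.2 ⟨⟨by omega, hsnd_le⟩, fun g hg hne hfg hgf hge => ?_⟩
    have := h.noncrossing _ hmem _ (mem_insert_of_mem hg)
    exact hf.minimal g hg hne hfg hgf (by omega)
  refine mem_oppositePairs.2 ⟨⟨hleft, hright⟩, ?_⟩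
  have hcount := h.chordSystem_of_insert.mul_nestedCount_erase_add_count
    (h.mul_nestedCount_of_isParent he hf) hleft hright (by omega)
  have hnot : ¬ (e.1 ≤ f.1 ∧ f.2 ≤ e.2) := fun hef =>
    he (Prod.ext (hle_fst.antisymm hef.1) (hef.2.antisymm hsnd_le) ▸ hf.mem)
  have hsat := h.mul_nestedCount hmem
  rw [nestedCount_insert he, if_pos ⟨le_rfl, le_rfl⟩, nestedCount_eq_erase_add hf.mem,
    if_neg hnot, add_zero, mul_add] at hsat
  omega

include hκ in
-- Both `e` and `e'` saturate the chords of `D`, so they are nested in the same chords.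
theorem isParent_of_insert (h' : IsAngulation κ n (insert e' D)) (he' : e' ∉ D) :
    IsParent D e' f := by
  have hiff : ∀ g ∈ D, g.1 ≤ e.1 ∧ e.2 ≤ g.2 ↔ g.1 ≤ e'.1 ∧ e'.2 ≤ g.2 := by
    intro g hg
    have hsat := h.mul_nestedCount (mem_insert_of_mem hg)
    have hsat' := h'.mul_nestedCount (mem_insert_of_mem hg)
    have heq : nestedCount (insert e D) g.1 g.2 = nestedCount (insert e' D) g.1 g.2 :=
      Nat.eq_of_mul_eq_mul_left hκ (by omega)
    rw [nestedCount_insert he, nestedCount_insert he', Nat.add_left_cancel_iff] at heq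
    split_ifs at heq <;> omega
  obtain ⟨hle, hge⟩ := (hiff f hf.mem).1 ⟨hf.le_fst, hf.snd_le⟩
  exact ⟨hf.mem, hle, hge, fun g hg hne hfg hgf hge =>
    hf.minimal g hg hne hfg hgf ((hiff g hg).2 hge)⟩

include hκ

theorem notMem_of_mem_oppositePairs (he' : e' ∈ oppositePairs κ (face D f)) : e' ∉ D := by
  intro hmem
  obtain ⟨⟨hleft, hright⟩, hrank⟩ := mem_oppositePairs.1 he'
  by_cases hef : e' = f
  · subst hef
    have hle := h.add_two_le _ _ (mem_insert_of_mem hmem)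
    have := h.card_face_of_isParent he hf
    rw [count_face_left] at hrank
    have := count_face_right (D := D) (f := e') (by omega)
    omega
  have hfl := (mem_face.1 hleft).1.1
  have hfr := (mem_face.1 hright).1.2
  have hle := h.add_two_le _ _ (mem_insert_of_mem hmem)
  have hsat := h.mul_nestedCount_of_isParent he hf _ hmem hef hfl hfr
  have := h.chordSystem_of_insert.mul_nestedCount_erase_add_count
    (h.mul_nestedCount_of_isParent he hf) hleft hright (by omega)
  rw [nestedCount_erase_of_ne hfl hfr hef] at this
  omega

theorem insert_of_mem_oppositePairs (hroot : e ≠ (0, κ * n + 1))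
    (he' : e' ∈ oppositePairs κ (face D f)) : IsAngulation κ n (insert e' D) := by
  have hnot := notMem_of_mem_oppositePairs hκ h he hf he'
  obtain ⟨⟨hleft, hright⟩, hrank⟩ := mem_oppositePairs.1 he'
  have hlt : e'.1 < e'.2 := Nat.lt_of_count_lt_count (p := (· ∈ face D f)) (by omega)
  have hcount := h.chordSystem_of_insert.mul_nestedCount_erase_add_count
    (h.mul_nestedCount_of_isParent he hf) hleft hright hlt.le
  have hdvd : e'.2 - e'.1 - 1 = κ * (nestedCount (D.erase f) e'.1 e'.2 + 1) := by
    rw [mul_add]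
    omega
  refine
    { add_two_le := fun a b hab => ?_
      dvd := fun a b hab => ?_
      noncrossing := h.chordSystem_of_insert.isNoncrossing_insert hf.mem hleft hright
      le := fun a b hab => ?_
      root_mem := mem_insert_of_mem (mem_of_mem_insert_of_ne h.root_mem hroot.symm)
      card_eq := ?_ }
  · rcases mem_insert.1 hab with rfl | hab
    · have := Nat.mul_pos hκ (nestedCount (D.erase f) a b).succ_pos
      simp only at hdvd
      omega
    · exact h.add_two_le a b (mem_insert_of_mem hab)
  · rcases mem_insert.1 hab with rfl | hab
    · exact ⟨_, hdvd⟩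
    · exact h.dvd a b (mem_insert_of_mem hab)
  · rcases mem_insert.1 hab with rfl | hab
    · exact (mem_face.1 hright).1.2.trans (h.le _ _ (mem_insert_of_mem hf.mem))
    · exact h.le a b (mem_insert_of_mem hab)
  · rw [card_insert_of_notMem hnot, ← card_insert_of_notMem he, h.card_eq]

theorem notMem_and_insert_iff (hroot : e ≠ (0, κ * n + 1)) :
    e' ∉ D ∧ IsAngulation κ n (insert e' D) ↔ e' ∈ oppositePairs κ (face D f) :=
  ⟨fun ⟨he', h'⟩ => h'.mem_oppositePairs_of_isParent he' (isParent_of_insert hκ h he hf h' he'),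
    fun he' => ⟨notMem_of_mem_oppositePairs hκ h he hf he',
      insert_of_mem_oppositePairs hκ h he hf hroot he'⟩⟩

end IsAngulation

theorem sdiff_insert_erase {α : Type*} [DecidableEq α] {s : Finset α} {a b : α} (ha : a ∈ s)
    (hb : b ∉ s) : s \ insert b (s.erase a) = {a} := by
  ext x
  grind

theorem insert_erase_sdiff {α : Type*} [DecidableEq α] {s : Finset α} {a b : α} (hb : b ∉ s) :
    insert b (s.erase a) \ s = {b} := by
  ext x
  grind

theorem isFlip_iff {α : Type*} [DecidableEq α] {s t : Finset α} :
    IsFlip s t ↔ ∃ a ∈ s, ∃ b ∉ s, insert b (s.erase a) = t := by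
  constructor
  · rintro ⟨hst, hts⟩
    obtain ⟨a, ha⟩ := card_eq_one.1 hst
    obtain ⟨b, hb⟩ := card_eq_one.1 hts
    have ha' : ∀ x, x ∈ s ∧ x ∉ t ↔ x = a := fun x => by rw [← mem_sdiff, ha, mem_singleton]
    have hb' : ∀ x, x ∈ t ∧ x ∉ s ↔ x = b := fun x => by rw [← mem_sdiff, hb, mem_singleton]
    refine ⟨a, ((ha' a).2 rfl).1, b, ((hb' b).2 rfl).2, ?_⟩
    ext x
    grind
  · rintro ⟨a, ha, b, hb, rfl⟩
    exact ⟨card_eq_one.2 ⟨a, sdiff_insert_erase ha hb⟩, card_eq_one.2 ⟨b, insert_erase_sdiff hb⟩⟩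

theorem card_filter_isFlip {α : Type*} [DecidableEq α] {X : Finset (Finset α)} {s : Finset α}
    (E : α → Finset α) (hE : ∀ a ∈ s, ∀ b, b ∈ E a ↔ b ∉ s ∧ insert b (s.erase a) ∈ X) :
    #{t ∈ X | IsFlip s t} = ∑ a ∈ s, #(E a) := by
  rw [← card_sigma]
  symm
  refine card_bij (fun p _ => insert p.2 (s.erase p.1)) ?_ ?_ ?_
  · rintro ⟨a, b⟩ hab
    obtain ⟨ha, hb⟩ := mem_sigma.1 hab
    obtain ⟨hbs, hX⟩ := (hE a ha b).1 hb
    exact mem_filter.2 ⟨hX, isFlip_iff.2 ⟨a, ha, b, hbs, rfl⟩⟩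
  · rintro ⟨a, b⟩ hab ⟨a', b'⟩ hab' heq
    obtain ⟨ha, hb⟩ := mem_sigma.1 hab
    obtain ⟨ha', hb'⟩ := mem_sigma.1 hab'
    have hbs := ((hE a ha b).1 hb).1
    have hbs' := ((hE a' ha' b').1 hb').1
    have hsdiff := sdiff_insert_erase ha hbs
    have hsdiff' := insert_erase_sdiff (a := a) hbs
    simp only at heq
    rw [heq, sdiff_insert_erase ha' hbs', singleton_inj] at hsdiff
    rw [heq, insert_erase_sdiff hbs', singleton_inj] at hsdiff'
    obtain rfl : a' = a := hsdiff
    obtain rfl : b' = b := hsdiff'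
    rfl
  · intro t ht
    obtain ⟨hX, hflip⟩ := mem_filter.1 ht
    obtain ⟨a, ha, b, hb, rfl⟩ := isFlip_iff.1 hflip
    exact ⟨⟨a, b⟩, mem_sigma.2 ⟨ha, (hE a ha b).2 ⟨hb, hX⟩⟩, rfl⟩

theorem IsAngulation.card_flips (hκ : 0 < κ) (h : IsAngulation κ n D) :
    #{D' ∈ angulations κ n | IsFlip D D'} = (n - 1) * κ := by
  set root := (0, κ * n + 1)
  set E : ℕ × ℕ → Finset (ℕ × ℕ) := fun e => {e' ∈ range (κ * n + 2) ×ˢ range (κ * n + 2) |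
    e' ∉ D ∧ insert e' (D.erase e) ∈ angulations κ n} with hE
  have hmemE : ∀ e e', e' ∈ E e ↔ e' ∉ D ∧ insert e' (D.erase e) ∈ angulations κ n := by
    intro e e'
    simp only [hE, mem_filter, mem_product, mem_range, and_iff_right_iff_imp]
    rintro ⟨-, hang⟩
    have := (mem_angulations.1 hang).add_two_le _ _ (mem_insert_self _ _)
    have := (mem_angulations.1 hang).le _ _ (mem_insert_self _ _)
    omega
  have hEroot : E root = ∅ := by
    refine eq_empty_of_forall_notMem fun e' he' => ?_
    obtain ⟨hnot, hang⟩ := (hmemE _ _).1 he'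
    rcases mem_insert.1 (mem_angulations.1 hang).root_mem with heq | hmem
    · exact hnot (heq ▸ h.root_mem)
    · exact ne_of_mem_erase hmem rfl
  have hcardE : ∀ e ∈ D.erase root, #(E e) = κ := by
    intro e he
    obtain ⟨hne, he⟩ := mem_erase.1 he
    have h' : IsAngulation κ n (insert e (D.erase e)) := (insert_erase he).symm ▸ h
    obtain ⟨f, hf⟩ := h'.exists_isParent hne
    have hiff := fun e' => notMem_and_insert_iff (e' := e') hκ h' (notMem_erase e D) hf hne
    have hEe : E e = (oppositePairs κ (face (D.erase e) f)).erase e := by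
      ext e'
      rw [hmemE, mem_erase, ← hiff, mem_erase, mem_angulations]
      have : e' = e → e' ∈ D := fun h => h ▸ he
      tauto
    rw [hEe, card_erase_of_mem ((hiff e).1 ⟨notMem_erase e D, h'⟩),
      card_oppositePairs (h'.card_face_of_isParent (notMem_erase e D) hf), Nat.add_sub_cancel]
  rw [card_filter_isFlip E fun e _ => hmemE e, ← add_sum_erase _ _ h.root_mem, hEroot, card_empty,
    zero_add, sum_congr rfl hcardE, sum_const, card_erase_of_mem h.root_mem, h.card_eq, smul_eq_mul]

end Degree

/-! ### From the cyclic polygon to ordered pairs -/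

section Polygon

variable {M : ℕ} {a b c d x : Fin (M + 1)} {F : Finset (Fin (M + 1))}
  {s t : Finset (Sym2 (Fin (M + 1)))} {e : ℕ × ℕ}

theorem val_sub_cases (a b : Fin (M + 1)) :
    (b.val ≤ a.val ∧ (a - b).val = a.val - b.val) ∨
      (a.val < b.val ∧ (a - b).val = M + 1 + a.val - b.val) :=
  (le_or_gt b a).imp (fun h => ⟨h, Fin.coe_sub_iff_le.2 h⟩) fun h => ⟨h, Fin.coe_sub_iff_lt.2 h⟩

theorem cycBtw_iff : CycBtw a b x ↔ (a < x ∧ x < b) ∨ (x < b ∧ b < a) ∨ (b < a ∧ a < x) := by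
  have hxa := val_sub_cases x a
  have hba := val_sub_cases b a
  simp only [CycBtw, Fin.lt_def]
  omega

theorem nextIn_iff_of_lt (hab : a < b) :
    NextIn F a b ↔ (a ∈ F ∧ b ∈ F) ∧ ∀ x ∈ F, ¬ (a < x ∧ x < b) := by
  simp only [NextIn, cycBtw_iff, hab.not_gt, hab.ne, false_and, and_false, or_false, ne_eq,
    not_false_eq_true, true_and, and_assoc]

theorem nextIn_iff_of_gt (hba : b < a) :
    NextIn F a b ↔ (a ∈ F ∧ b ∈ F) ∧ ∀ x ∈ F, b ≤ x ∧ x ≤ a := by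
  have hbtw : ∀ x, ¬ CycBtw a b x ↔ b ≤ x ∧ x ≤ a := fun x => by
    rw [cycBtw_iff]
    omega
  simp only [NextIn, hbtw, hba.ne', ne_eq, not_false_eq_true, true_and, and_assoc]

theorem crosses_iff (hab : a < b) (hcd : c < d) :
    Crosses s(a, b) s(c, d) ↔ (a < c ∧ c < b ∧ b < d) ∨ (c < a ∧ a < d ∧ d < b) := by
  constructor
  · intro h
    obtain ⟨c', d', hcd', hxor⟩ := h a b rfl
    obtain ⟨c'', d'', hcd'', hxor'⟩ := h b a Sym2.eq_swap
    have hiff := (xor_iff_not_iff _ _).1 hxor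
    have hiff' := (xor_iff_not_iff _ _).1 hxor'
    rw [cycBtw_iff, cycBtw_iff] at hiff hiff'
    rw [Sym2.eq_iff] at hcd' hcd''
    omega
  · intro h u v huv
    refine ⟨c, d, rfl, (xor_iff_not_iff _ _).2 ?_⟩
    rw [cycBtw_iff, cycBtw_iff]
    rw [Sym2.eq_iff] at huv
    omega

theorem polyAdj_iff (hM : 2 ≤ M) : PolyAdj a b ↔
    b.val = a.val + 1 ∨ a.val = b.val + 1 ∨ (a.val = 0 ∧ b.val = M) ∨ (b.val = 0 ∧ a.val = M) := by
  have hab := val_sub_cases a b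
  have hba := val_sub_cases b a
  rw [PolyAdj]
  omega

theorem isSide_iff (hM : 2 ≤ M) (hab : a < b) :
    IsSide s(a, b) ↔ b.val = a.val + 1 ∨ (a.val = 0 ∧ b.val = M) := by
  constructor
  · rintro ⟨c, d, h, hcd⟩
    rw [polyAdj_iff hM] at hcd
    rw [Sym2.eq_iff] at h
    omega
  · exact fun h => ⟨a, b, rfl, (polyAdj_iff hM).2 (by omega)⟩

theorem isDiagonal_iff (hM : 2 ≤ M) (hab : a < b) :
    IsDiagonal s(a, b) ↔ a.val + 2 ≤ b.val ∧ ¬ (a.val = 0 ∧ b.val = M) := by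
  constructor
  · rintro ⟨-, h⟩
    have := h a b rfl
    rw [polyAdj_iff hM] at this
    omega
  · refine fun h => ⟨fun hdiag => hab.ne (Sym2.mk_isDiag_iff.1 hdiag), fun c d hcd => ?_⟩
    rw [polyAdj_iff hM]
    rw [Sym2.eq_iff] at hcd
    omega

/-- The chord `e` of the polygon as a pair of natural numbers with increasing coordinates. -/
def orderedPair (e : Sym2 (Fin (M + 1))) : ℕ × ℕ := (e.inf.val, e.sup.val)

theorem orderedPair_mk (hab : a ≤ b) : orderedPair s(a, b) = (a.val, b.val) := by
  simp only [orderedPair, Sym2.inf_mk, Sym2.sup_mk, inf_of_le_left hab, sup_of_le_right hab]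

theorem orderedPair_injective : Function.Injective (orderedPair (M := M)) := fun _ _ h =>
  (Sym2.inf_eq_inf_and_sup_eq_sup).1
    ⟨Fin.ext (congrArg Prod.fst h), Fin.ext (congrArg Prod.snd h)⟩

theorem exists_eq_mk_of_le (e : Sym2 (Fin (M + 1))) : ∃ a b, a ≤ b ∧ e = s(a, b) := by
  induction e using Sym2.ind with
  | _ a b =>
    rcases le_total a b with h | h
    · exact ⟨a, b, h, rfl⟩
    · exact ⟨b, a, h, Sym2.eq_swap⟩

theorem exists_eq_mk_of_lt {e : Sym2 (Fin (M + 1))} (he : ¬ e.IsDiag) :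
    ∃ a b, a < b ∧ e = s(a, b) := by
  obtain ⟨a, b, hab, rfl⟩ := exists_eq_mk_of_le e
  exact ⟨a, b, lt_of_le_of_ne hab fun h => he (Sym2.mk_isDiag_iff.2 h), rfl⟩

/-- The chords of the dissection of the polygon with vertices `0, …, M` by the diagonals `t`, as
ordered pairs; the side `(0, M)` is included as the root chord. -/
def chordSet (t : Finset (Sym2 (Fin (M + 1)))) : Finset (ℕ × ℕ) :=
  insert (0, M) (t.image orderedPair)

theorem mem_chordSet (hab : a ≤ b) :
    (a.val, b.val) ∈ chordSet t ↔ (a.val = 0 ∧ b.val = M) ∨ s(a, b) ∈ t := by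
  rw [chordSet, mem_insert, Prod.mk.injEq, ← orderedPair_mk hab,
    orderedPair_injective.mem_finset_image]

theorem exists_of_mem_chordSet (he : e ∈ chordSet t) :
    ∃ a b : Fin (M + 1), a ≤ b ∧ e = (a.val, b.val) := by
  rcases mem_insert.1 he with rfl | he
  · exact ⟨0, Fin.last M, Fin.zero_le _, rfl⟩
  · obtain ⟨e, -, rfl⟩ := mem_image.1 he
    obtain ⟨a, b, hab, rfl⟩ := exists_eq_mk_of_le e
    exact ⟨a, b, hab, orderedPair_mk hab⟩

theorem edgeOfD_iff (hM : 2 ≤ M) (hab : a < b) :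
    EdgeOfD t s(a, b) ↔ b.val = a.val + 1 ∨ (a.val, b.val) ∈ chordSet t := by
  rw [EdgeOfD, isSide_iff hM hab, mem_chordSet hab.le, or_assoc]

section Diagonals

variable (hM : 2 ≤ M) (ht : ∀ e ∈ t, IsDiagonal e)
include hM ht

theorem root_notMem_image_orderedPair : (0, M) ∉ t.image orderedPair := by
  intro h
  obtain ⟨e, he, heq⟩ := mem_image.1 h
  have hdiag := ht e he
  obtain ⟨a, b, hab, rfl⟩ := exists_eq_mk_of_lt hdiag.1
  rw [orderedPair_mk hab.le, Prod.mk.injEq] at heq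
  exact ((isDiagonal_iff hM hab).1 hdiag).2 heq

theorem card_chordSet : #(chordSet t) = #t + 1 := by
  rw [chordSet, card_insert_of_notMem (root_notMem_image_orderedPair hM ht),
    card_image_of_injective _ orderedPair_injective]

theorem card_chordSet_sdiff : #(chordSet t \ chordSet s) = #(t \ s) := by
  have hsdiff : chordSet t \ chordSet s = (t \ s).image orderedPair := by
    rw [image_sdiff _ _ orderedPair_injective, chordSet, chordSet, insert_sdiff_insert,
      sdiff_insert_of_notMem (root_notMem_image_orderedPair hM ht)]
  rw [hsdiff, card_image_of_injective _ orderedPair_injective]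

theorem subset_of_chordSet_subset (h : chordSet t ⊆ chordSet s) : t ⊆ s := by
  rw [← sdiff_eq_empty_iff_subset, ← card_eq_zero, ← card_chordSet_sdiff hM ht, card_eq_zero,
    sdiff_eq_empty_iff_subset]
  exact h

theorem add_two_le_of_mem_chordSet (he : e ∈ chordSet t) : e.1 + 2 ≤ e.2 := by
  obtain ⟨a, b, hab, rfl⟩ := exists_of_mem_chordSet he
  rcases (mem_chordSet hab).1 he with hroot | hmem
  · simp only
    omega
  · have hdiag := ht _ hmem
    have hne : a ≠ b := fun h => hdiag.1 (Sym2.mk_isDiag_iff.2 h)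
    exact ((isDiagonal_iff hM (lt_of_le_of_ne hab hne)).1 hdiag).1

theorem isNoncrossing_chordSet_iff :
    IsNoncrossing (chordSet t) ↔ ∀ e ∈ t, ∀ f ∈ t, ¬ Crosses e f := by
  constructor
  · intro h e he f hf
    obtain ⟨a, b, hab, rfl⟩ := exists_eq_mk_of_lt (ht e he).1
    obtain ⟨c, d, hcd, rfl⟩ := exists_eq_mk_of_lt (ht f hf).1
    have hmem := (mem_chordSet hab.le).2 (.inr he)
    have hmem' := (mem_chordSet hcd.le).2 (.inr hf)
    rw [crosses_iff hab hcd, not_or]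
    exact ⟨h _ hmem _ hmem', h _ hmem' _ hmem⟩
  · intro h e he f hf hcross
    have hle := add_two_le_of_mem_chordSet hM ht he
    have hle' := add_two_le_of_mem_chordSet hM ht hf
    obtain ⟨a, b, hab, rfl⟩ := exists_of_mem_chordSet he
    obtain ⟨c, d, hcd, rfl⟩ := exists_of_mem_chordSet hf
    simp only at hcross hle hle'
    refine h _ (((mem_chordSet hab).1 he).resolve_left (by omega)) _
      (((mem_chordSet hcd).1 hf).resolve_left (by omega)) ?_
    exact (crosses_iff (by omega) (by omega)).2 (.inl hcross)

end Diagonals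

theorem isChordSystem_chordSet (hM : 2 ≤ M) (ht : ∀ e ∈ t, IsDiagonal e)
    (hcross : ∀ e ∈ t, ∀ f ∈ t, ¬ Crosses e f) : IsChordSystem 1 (chordSet t) where
  add_two_le _ _ hab := add_two_le_of_mem_chordSet hM ht hab
  dvd _ _ _ := one_dvd _
  noncrossing := (isNoncrossing_chordSet_iff hM ht).2 hcross

end Polygon

section FaceSet

variable {M : ℕ} {p q : Fin (M + 1)} {F : Finset (Fin (M + 1))}
  {t : Finset (Sym2 (Fin (M + 1)))} {f : ℕ × ℕ}

namespace IsFaceSet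

variable (hF : IsFaceSet t F)
include hF

theorem exists_mem_ne_ne (p q : Fin (M + 1)) : ∃ x ∈ F, x ≠ p ∧ x ≠ q := by
  obtain ⟨x, hx, hxpq⟩ := exists_mem_notMem_of_card_lt_card
    ((card_le_two (a := p) (b := q)).trans_lt hF.1)
  rw [mem_insert, mem_singleton, not_or] at hxpq
  exact ⟨x, hx, hxpq⟩

variable (hpq : ∀ x ∈ F, p ≤ x ∧ x ≤ q)
include hpq

theorem lt_of_forall_le : p < q := by
  obtain ⟨x, hx, hxp, -⟩ := hF.exists_mem_ne_ne p q
  have := hpq x hx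
  omega

theorem mem_chordSet_of_forall_le (hM : 2 ≤ M) (hp : p ∈ F) (hq : q ∈ F) :
    (p.val, q.val) ∈ chordSet t := by
  have hlt := hF.lt_of_forall_le hpq
  have hedge := hF.2.1 q p ((nextIn_iff_of_gt hlt).2 ⟨⟨hq, hp⟩, hpq⟩)
  rw [Sym2.eq_swap, edgeOfD_iff hM hlt] at hedge
  obtain ⟨x, hx, hxp, hxq⟩ := hF.exists_mem_ne_ne p q
  have := hpq x hx
  exact hedge.resolve_left (by omega)

theorem eq_succ_or_mem_of_consecutive (hM : 2 ≤ M) {a b : Fin (M + 1)} (ha : a ∈ F) (hb : b ∈ F)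
    (hab : a < b) (hcons : ∀ x ∈ F, ¬ (a < x ∧ x < b)) :
    b.val = a.val + 1 ∨ (a.val, b.val) ∈ (chordSet t).erase (p.val, q.val) := by
  have hedge := hF.2.1 a b ((nextIn_iff_of_lt hab).2 ⟨⟨ha, hb⟩, hcons⟩)
  refine ((edgeOfD_iff hM hab).1 hedge).imp_right fun hmem => mem_erase.2 ⟨fun heq => ?_, hmem⟩
  obtain ⟨x, hx, hxp, hxq⟩ := hF.exists_mem_ne_ne p q
  rw [Prod.mk.injEq] at heq
  have := hcons x hx
  have := hpq x hx
  omega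

theorem forall_not_between_of_mem_chordSet (hp : p ∈ F) (hq : q ∈ F) {a b : Fin (M + 1)}
    (hab : a < b) (hmem : (a.val, b.val) ∈ chordSet t) (hne : (a.val, b.val) ≠ (p.val, q.val))
    (ha : a ∈ F) (hb : b ∈ F) : ∀ x ∈ F, ¬ (a < x ∧ x < b) := by
  have hpab := hpq a ha
  have hqab := hpq b hb
  rw [Ne, Prod.mk.injEq] at hne
  rcases hF.2.2 _ (((mem_chordSet hab.le).1 hmem).resolve_left (by omega)) a b rfl ha hb with
    hnext | hnext
  · exact ((nextIn_iff_of_lt hab).1 hnext).2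
  · have hbd := ((nextIn_iff_of_gt hab).1 hnext).2
    have := hbd p hp
    have := hbd q hq
    omega

end IsFaceSet

theorem IsFaceSet.exists_image_eq_face (hM : 2 ≤ M) (ht : IsNoncrossing (chordSet t))
    (hF : IsFaceSet t F) : ∃ f ∈ chordSet t, F.image Fin.val = face (chordSet t) f := by
  have hne : F.Nonempty := card_pos.1 (Nat.zero_lt_of_lt hF.1)
  set p := F.min' hne
  set q := F.max' hne
  have hp : p ∈ F := F.min'_mem hne
  have hq : q ∈ F := F.max'_mem hne
  have hpq : ∀ x ∈ F, p ≤ x ∧ x ≤ q := fun x hx => ⟨F.min'_le x hx, F.le_max' x hx⟩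
  refine ⟨_, hF.mem_chordSet_of_forall_le hpq hM hp hq, ht.eq_face (mem_image_of_mem _ hp)
    (mem_image_of_mem _ hq) ?_ ?_ ?_⟩
  · simp only [forall_mem_image]
    exact hpq
  · simp only [forall_mem_image]
    exact fun a ha b hb hab hcons => hF.eq_succ_or_mem_of_consecutive hpq hM ha hb hab hcons
  · intro e he hne ha hb
    obtain ⟨a, b, -, rfl⟩ := exists_of_mem_chordSet he
    simp only [Fin.val_injective.mem_finset_image] at ha hb
    simp only [forall_mem_image]
    intro x hx hbtw
    exact hF.forall_not_between_of_mem_chordSet hpq hp hq (hbtw.1.trans hbtw.2) he hne ha hb x hx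
      hbtw

theorem mem_iff_of_image_val_eq {S : Finset ℕ} (hF : F.image Fin.val = S) (x : Fin (M + 1)) :
    x ∈ F ↔ x.val ∈ S := by
  rw [← hF, Fin.val_injective.mem_finset_image]

section ImageEqFace

variable {μ : ℕ} {a b : Fin (M + 1)}
  (hF : F.image Fin.val = face (chordSet t) (p.val, q.val))
include hF

theorem edgeOfD_of_nextIn (hpq : p < q) (hM : 2 ≤ M) (hD : IsChordSystem μ (chordSet t))
    (hroot : (p.val, q.val) ∈ chordSet t) (hab : NextIn F a b) : EdgeOfD t s(a, b) := by
  have hmem := mem_iff_of_image_val_eq hF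
  rcases lt_or_gt_of_ne hab.2.2.1 with hlt | hgt
  · obtain ⟨⟨ha, hb⟩, hcons⟩ := (nextIn_iff_of_lt hlt).1 hab
    refine (edgeOfD_iff hM hlt).2 ((hD.eq_succ_or_mem_of_consecutive ((hmem a).1 ha)
      ((hmem b).1 hb) hlt ?_).imp_right mem_of_mem_erase)
    simp only [← hF, forall_mem_image]
    exact hcons
  · obtain ⟨⟨ha, hb⟩, hbd⟩ := (nextIn_iff_of_gt hgt).1 hab
    obtain ⟨rfl, rfl⟩ : b = p ∧ a = q := by
      have := hbd p ((hmem p).2 (left_mem_face hpq.le))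
      have := hbd q ((hmem q).2 (right_mem_face hpq.le))
      have := (mem_face.1 ((hmem a).1 ha)).1
      have := (mem_face.1 ((hmem b).1 hb)).1
      simp only at *
      omega
    rw [Sym2.eq_swap, edgeOfD_iff hM hpq]
    exact .inr hroot

theorem nextIn_or_nextIn_of_mem (hab : a < b) (he : s(a, b) ∈ t) (ha : a ∈ F) (hb : b ∈ F) :
    NextIn F a b ∨ NextIn F b a := by
  have hface := fun x hx => mem_face.1 ((mem_iff_of_image_val_eq hF x).1 hx)
  by_cases heq : (a.val, b.val) = (p.val, q.val)
  · obtain ⟨rfl, rfl⟩ : a = p ∧ b = q := by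
      rw [Prod.mk.injEq] at heq
      omega
    exact .inr ((nextIn_iff_of_gt hab).2 ⟨⟨hb, ha⟩, fun x hx => (hface x hx).1⟩)
  · exact .inl ((nextIn_iff_of_lt hab).2 ⟨⟨ha, hb⟩, fun x hx =>
      (hface x hx).2 _ ((mem_chordSet hab.le).2 (.inr he)) heq (hface a ha).1.1 (hface b hb).1.2⟩)

end ImageEqFace

theorem isFaceSet_of_image_eq_face {μ : ℕ} (hM : 2 ≤ M) (ht : ∀ e ∈ t, IsDiagonal e)
    (hD : IsChordSystem μ (chordSet t)) (hf : f ∈ chordSet t)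
    (hF : F.image Fin.val = face (chordSet t) f) : IsFaceSet t F := by
  have hf2 := add_two_le_of_mem_chordSet hM ht hf
  obtain ⟨p, q, -, rfl⟩ := exists_of_mem_chordSet hf
  have hpq : p < q := by
    simp only at hf2
    omega
  refine ⟨?_, fun a b => edgeOfD_of_nextIn hF hpq hM hD hf, ?_⟩
  · rw [← card_image_of_injective _ Fin.val_injective, hF]
    exact hD.three_le_card_face hf2
  · rintro e he a b rfl ha hb
    rcases lt_or_gt_of_ne fun h => (ht _ he).1 (Sym2.mk_isDiag_iff.2 h) with hab | hba
    · exact nextIn_or_nextIn_of_mem hF hab he ha hb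
    · exact (nextIn_or_nextIn_of_mem hF hba (Sym2.eq_swap ▸ he) hb ha).symm

theorem forall_isFaceSet_card_iff {μ k : ℕ} (hM : 2 ≤ M) (ht : ∀ e ∈ t, IsDiagonal e)
    (hD : IsChordSystem μ (chordSet t)) :
    (∀ F, IsFaceSet t F → #F = k) ↔ ∀ f ∈ chordSet t, #(face (chordSet t) f) = k := by
  constructor
  · intro h f hf
    have hF : (univ.filter fun x : Fin (M + 1) => x.val ∈ face (chordSet t) f).image Fin.val =
        face (chordSet t) f := by
      ext x
      simp only [mem_image, mem_filter, mem_univ, true_and]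
      refine ⟨fun ⟨_, hy, hyx⟩ => hyx ▸ hy, fun hx => ?_⟩
      obtain ⟨p, q, -, rfl⟩ := exists_of_mem_chordSet hf
      exact ⟨⟨x, (mem_face.1 hx).1.2.trans_lt q.2⟩, hx, rfl⟩
    rw [← hF, card_image_of_injective _ Fin.val_injective]
    exact h _ (isFaceSet_of_image_eq_face hM ht hD hf hF)
  · intro h F hF
    obtain ⟨f, hf, hface⟩ := hF.exists_image_eq_face hM hD.noncrossing
    rw [← card_image_of_injective _ Fin.val_injective, hface, h f hf]

end FaceSet

section KAngulations

variable {k n : ℕ}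

theorem two_le_mul_add_one (hk : 3 ≤ k) (hn : 1 ≤ n) : 2 ≤ (k - 2) * n + 1 := by
  have : 0 < (k - 2) * n := Nat.mul_pos (by omega) hn
  omega

theorem exists_chordSet_eq {M : ℕ} (hM : 2 ≤ M) {D : Finset (ℕ × ℕ)} (hroot : (0, M) ∈ D)
    (hD : ∀ a b, (a, b) ∈ D → a + 2 ≤ b ∧ b ≤ M) :
    ∃ t : Finset (Sym2 (Fin (M + 1))), (∀ e ∈ t, IsDiagonal e) ∧ chordSet t = D := by
  refine ⟨univ.filter fun e => orderedPair e ∈ D.erase (0, M), fun e he => ?_, ?_⟩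
  · obtain ⟨a, b, hab, rfl⟩ := exists_eq_mk_of_le e
    rw [mem_filter, orderedPair_mk hab, mem_erase, Ne, Prod.mk.injEq] at he
    have := hD _ _ he.2.2
    exact (isDiagonal_iff hM (by omega)).2 ⟨this.1, he.2.1⟩
  · have himage : (univ.filter fun e : Sym2 (Fin (M + 1)) =>
        orderedPair e ∈ D.erase (0, M)).image orderedPair = D.erase (0, M) := by
      ext ⟨a, b⟩
      simp only [mem_image, mem_filter, mem_univ, true_and]
      refine ⟨fun ⟨_, he, heq⟩ => heq ▸ he, fun hab => ?_⟩
      have := hD a b (mem_of_mem_erase hab)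
      have heq : orderedPair s((⟨a, by omega⟩ : Fin (M + 1)), ⟨b, by omega⟩) = (a, b) :=
        orderedPair_mk (by simp only [Fin.mk_le_mk]; omega)
      exact ⟨_, heq ▸ hab, heq⟩
    rw [chordSet, himage, insert_erase hroot]

theorem isKAngulation_iff (hk : 3 ≤ k) (hn : 1 ≤ n)
    {t : Finset (Sym2 (Fin ((k - 2) * n + 1 + 1)))} (ht : ∀ e ∈ t, IsDiagonal e) :
    IsKAngulation k n t ↔ IsAngulation (k - 2) n (chordSet t) := by
  have hM := two_le_mul_add_one hk hn
  have hcard := card_chordSet hM ht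
  constructor
  · rintro ⟨-, hcross, htn, hface⟩
    have hD := isChordSystem_chordSet hM ht hcross
    have hface' := (forall_isFaceSet_card_iff hM ht hD).1 hface
    refine
      { add_two_le := hD.add_two_le
        dvd := fun a b hab => ?_
        noncrossing := hD.noncrossing
        le := fun a b hab => ?_
        root_mem := mem_insert_self _ _
        card_eq := by omega }
    · have := hD.mul_nestedCount_of_card_face (κ := k - 2) (fun f hf => by
        rw [hface' f hf]
        omega) hab
      exact ⟨nestedCount (chordSet t) a b, by simp only at this; omega⟩
    · obtain ⟨a', b', -, heq⟩ := exists_of_mem_chordSet hab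
      have := b'.2
      rw [Prod.mk.injEq] at heq
      omega
  · intro hD
    refine ⟨ht, (isNoncrossing_chordSet_iff hM ht).1 hD.noncrossing, by have := hD.card_eq; omega,
      (forall_isFaceSet_card_iff hM ht hD.toIsChordSystem).2 fun f hf => ?_⟩
    rw [hD.card_face hf]
    omega

namespace KAngulation

/-- The chords of a `k`-angulation of the polygon with vertices `0, …, (k - 2) * n + 1`, as ordered
pairs and including the root side `(0, (k - 2) * n + 1)`. -/
def chords (x : KAngulation k n) : Finset (ℕ × ℕ) :=
  chordSet (M := (k - 2) * n + 1) x.val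

variable (hk : 3 ≤ k) (hn : 1 ≤ n)
include hk hn

theorem chords_injective : Function.Injective (chords (k := k) (n := n)) := fun x y h =>
  have hM := two_le_mul_add_one hk hn
  Subtype.ext (subset_antisymm (subset_of_chordSet_subset hM x.2.1 h.subset)
    (subset_of_chordSet_subset hM y.2.1 h.symm.subset))

theorem image_chords :
    (univ : Finset (KAngulation k n)).image chords = angulations (k - 2) n := by
  ext D
  rw [mem_angulations, mem_image]
  constructor
  · rintro ⟨x, -, rfl⟩
    exact (isKAngulation_iff hk hn x.2.1).1 x.2
  · intro hD
    obtain ⟨t, ht, rfl⟩ := exists_chordSet_eq (two_le_mul_add_one hk hn) hD.root_mem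
      fun a b hab => ⟨hD.add_two_le a b hab, hD.le a b hab⟩
    exact ⟨⟨t, (isKAngulation_iff hk hn ht).2 hD⟩, mem_univ _, rfl⟩

theorem sum_angulations (g : Finset (ℕ × ℕ) → ℝ) :
    ∑ D ∈ angulations (k - 2) n, g D = ∑ x : KAngulation k n, g x.chords := by
  rw [← image_chords hk hn, sum_image (chords_injective hk hn).injOn]

theorem adj_iff_isFlip (x y : KAngulation k n) :
    (kAngGraph k n).Adj x y ↔ IsFlip x.chords y.chords := by
  have hM := two_le_mul_add_one hk hn
  rw [IsFlip, chords, chords, card_chordSet_sdiff hM x.2.1, card_chordSet_sdiff hM y.2.1]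
  rfl

open Classical in
theorem card_filter_adj (x : KAngulation k n) :
    #{y | (kAngGraph k n).Adj x y} = (n - 1) * (k - 2) := by
  rw [← IsAngulation.card_flips (by omega) ((isKAngulation_iff hk hn x.2.1).1 x.2),
    ← image_chords hk hn, filter_image, card_image_of_injective _ (chords_injective hk hn)]
  simp only [adj_iff_isFlip hk hn]
  rfl

open Classical in
theorem sum_sq_le_mul_sum_adj {g : KAngulation k n → ℝ} (hg : ∑ x, g x = 0) :
    ∑ x, g x ^ 2 ≤ (((k - 2) * n + 2 : ℕ) : ℝ) ^ 10 *
      ∑ x, ∑ y with (kAngGraph k n).Adj x y, (g x - g y) ^ 2 := by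
  rcases isEmpty_or_nonempty (KAngulation k n) with _ | _
  · simp
  obtain ⟨g, rfl⟩ := (chords_injective hk hn).surjective_comp_right g
  simp only [Function.comp_apply] at hg ⊢
  rw [← sum_angulations hk hn] at hg
  have h := sum_sq_le_mul_sum_flipEnergy g (by omega) (by omega) hg
  rw [sum_angulations hk hn, sum_angulations hk hn] at h
  simpa only [flipEnergy, sum_filter, sum_angulations hk hn, ← adj_iff_isFlip hk hn] using h

theorem card_le : Fintype.card (KAngulation k n) ≤ 2 ^ ((k - 2) * n + 2) ^ 2 := by
  classical
  rw [← card_univ, ← card_image_of_injective _ (chords_injective hk hn), image_chords hk hn]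
  refine (card_filter_le _ _).trans_eq ?_
  rw [card_powerset, card_product, card_range, sq]

end KAngulation

end KAngulations

/-! ### The lazy flip walk -/

section RegularGraph

variable {V : Type*} [DecidableEq V] {G : SimpleGraph V} [DecidableRel G.Adj] {d : ℕ}

/-- The transition matrix of the lazy random walk on `G`, for `G` regular of degree `d ≠ 0`:
it stays put with probability `1 / 2` and otherwise moves to a uniformly random neighbour. -/
noncomputable def lazyWalkMatrix (G : SimpleGraph V) [DecidableRel G.Adj] (d : ℕ) :
    Matrix V V ℝ :=
  (2 * d : ℝ)⁻¹ • G.adjMatrix ℝ + (1 / 2 : ℝ) • 1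

theorem lazyWalkMatrix_apply (x y : V) : lazyWalkMatrix G d x y =
    (if G.Adj x y then (2 * d : ℝ)⁻¹ else 0) + if x = y then 1 / 2 else 0 := by
  simp [lazyWalkMatrix, Matrix.one_apply]

theorem lazyWalkMatrix_apply_self (x : V) : lazyWalkMatrix G d x x = 1 / 2 := by
  simp [lazyWalkMatrix_apply]

variable [Fintype V]

theorem lazyWalkMatrix_mem_doublyStochastic (hd : d ≠ 0) (hG : G.IsRegularOfDegree d) :
    lazyWalkMatrix G d ∈ doublyStochastic ℝ V := by
  have hrow (x : V) : ∑ y, lazyWalkMatrix G d x y = 1 := by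
    simp only [lazyWalkMatrix_apply, sum_add_distrib, sum_ite_eq, mem_univ, if_true]
    rw [← sum_filter, sum_const, ← G.neighborFinset_eq_filter, G.card_neighborFinset_eq_degree,
      hG.degree_eq x, nsmul_eq_mul]
    field_simp
    norm_num
  have hsymm (x y : V) : lazyWalkMatrix G d x y = lazyWalkMatrix G d y x := by
    simp only [lazyWalkMatrix_apply, G.adj_comm x y, eq_comm (a := x)]
  refine mem_doublyStochastic_iff_sum.2 ⟨fun x y => ?_, hrow, fun y => ?_⟩
  · rw [lazyWalkMatrix_apply]
    positivity
  · simpa only [hsymm _ y] using hrow y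

theorem dirichletForm_lazyWalkMatrix (g : V → ℝ) : dirichletForm (lazyWalkMatrix G d) g =
    (4 * d : ℝ)⁻¹ * ∑ x, ∑ y with G.Adj x y, (g x - g y) ^ 2 := by
  have hterm (x y : V) : lazyWalkMatrix G d x y * (g x - g y) ^ 2 =
      (2 * d : ℝ)⁻¹ * if G.Adj x y then (g x - g y) ^ 2 else 0 := by
    rw [lazyWalkMatrix_apply]
    rcases eq_or_ne x y with rfl | hxy <;> simp [*]
  simp only [dirichletForm, hterm, ← mul_sum, sum_filter]
  rw [← mul_assoc]
  congr 1
  ring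

theorem tv_dist_lazyWalkMatrix_le (hd : d ≠ 0) (hG : G.IsRegularOfDegree d) {K B : ℝ}
    (hK : 1 ≤ K)
    (hpoincare : ∀ g : V → ℝ, ∑ x, g x = 0 →
      ∑ x, g x ^ 2 ≤ K * ∑ x, ∑ y with G.Adj x y, (g x - g y) ^ 2)
    (hcard : (Fintype.card V : ℝ) ≤ Real.exp B) {t : ℕ} (ht : 4 * d * K * (B + 2) ≤ t) (x : V) :
    (1 / 2 : ℝ) * ∑ y, |(lazyWalkMatrix G d ^ t) x y - 1 / (Fintype.card V : ℝ)| ≤ 1 / 4 := by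
  have hd1 : (1 : ℝ) ≤ d := by exact_mod_cast Nat.one_le_iff_ne_zero.2 hd
  have hdK : 1 ≤ 4 * d * K := by nlinarith
  refine tv_dist_uniform_le_of_poincare (γ := (4 * d * K)⁻¹)
    (lazyWalkMatrix_mem_doublyStochastic hd hG) (fun x => (lazyWalkMatrix_apply_self x).ge)
    (inv_le_one_of_one_le₀ hdK) (fun g hg => ?_) hcard ?_ x
  · rw [dirichletForm_lazyWalkMatrix, mul_inv, mul_assoc]
    gcongr
    rw [inv_mul_le_iff₀ (by positivity)]
    simpa only [dotProduct, ← sq] using hpoincare g hg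
  · rwa [le_inv_mul_iff₀ (by positivity)]

end RegularGraph

section Walk

variable {k n : ℕ}

open Classical in
theorem isRegularOfDegree_kAngGraph (hk : 3 ≤ k) (hn : 1 ≤ n) :
    (kAngGraph k n).IsRegularOfDegree ((n - 1) * (k - 2)) := fun x => by
  rw [← SimpleGraph.card_neighborFinset_eq_degree, SimpleGraph.neighborFinset_eq_filter,
    KAngulation.card_filter_adj hk hn]

open Classical in
theorem kFlipWalkMatrix_eq_lazyWalkMatrix (hk : 2 ≤ k) (hn : 1 ≤ n) :
    kFlipWalkMatrix k n = lazyWalkMatrix (kAngGraph k n) ((n - 1) * (k - 2)) := by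
  ext x y
  rw [kFlipWalkMatrix, lazyWalkMatrix_apply]
  rcases eq_or_ne x y with rfl | hxy
  · simp
  · simp [hxy, Nat.cast_sub hk, Nat.cast_sub hn, mul_assoc]

theorem KAngulation.card_le_exp (hk : 3 ≤ k) (hn : 1 ≤ n) :
    (Fintype.card (KAngulation k n) : ℝ) ≤ Real.exp ((((k - 2) * n + 2 : ℕ) : ℝ) ^ 2) := by
  have htwo : (2 : ℝ) ≤ Real.exp 1 := by linarith [Real.add_one_le_exp (1 : ℝ)]
  calc (Fintype.card (KAngulation k n) : ℝ) ≤ 2 ^ ((k - 2) * n + 2) ^ 2 := by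
        exact_mod_cast KAngulation.card_le hk hn
    _ ≤ Real.exp 1 ^ ((k - 2) * n + 2) ^ 2 := pow_le_pow_left₀ zero_le_two htwo _
    _ = Real.exp ((((k - 2) * n + 2 : ℕ) : ℝ) ^ 2) := by
        rw [← Real.exp_nat_mul, mul_one, Nat.cast_pow]

theorem kangulation_flip_walk_mixing_general (hk : 3 ≤ k) (hn : 2 ≤ n) {t : ℕ}
    (ht : (((k - 2) * n + 2 : ℕ) : ℝ) ^ 15 ≤ t) (x : KAngulation k n) :
    (1 / 2 : ℝ) * ∑ y : KAngulation k n,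
        |(kFlipWalkMatrix k n ^ t) x y - 1 / (Nat.card (KAngulation k n) : ℝ)| ≤ 1 / 4 := by
  classical
  have hn1 : 1 ≤ n := one_le_two.trans hn
  have hd : (n - 1) * (k - 2) ≠ 0 := mul_ne_zero (by omega) (by omega)
  have hdm : (n - 1) * (k - 2) ≤ (k - 2) * n + 2 :=
    (mul_comm (n - 1) _).trans_le ((Nat.mul_le_mul_left _ n.pred_le).trans (Nat.le_add_right _ 2))
  have hm : 3 ≤ (k - 2) * n + 2 := by linarith [two_le_mul_add_one hk hn1]
  rw [Nat.card_eq_fintype_card, kFlipWalkMatrix_eq_lazyWalkMatrix (by omega) hn1]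
  refine tv_dist_lazyWalkMatrix_le hd (isRegularOfDegree_kAngGraph hk hn1)
    (one_le_pow₀ (by exact_mod_cast one_le_two.trans (by omega)))
    (fun g hg => KAngulation.sum_sq_le_mul_sum_adj hk hn1 hg)
    (KAngulation.card_le_exp hk hn1) (le_trans ?_ ht) x
  generalize (k - 2) * n + 2 = m at hdm hm
  generalize (n - 1) * (k - 2) = d at hdm
  norm_cast
  calc 4 * d * m ^ 10 * (m ^ 2 + 2) ≤ 4 * m * m ^ 10 * (m ^ 2 + 2) := by gcongr
    _ = m ^ 11 * (4 * m ^ 2 + 8) := by ring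
    _ ≤ m ^ 11 * m ^ 4 := by gcongr; nlinarith [Nat.mul_le_mul hm hm]
    _ = m ^ 15 := by ring

theorem pow_le_rpow_mul_log (hk : 2 ≤ k) (hn : 2 ≤ n) :
    (((k - 2) * n + 2 : ℕ) : ℝ) ^ 15 ≤ (n : ℝ) ^ (50 * (k : ℝ) * Real.log n) := by
  have hm : (k - 2) * n + 2 ≤ k * n := by
    rw [Nat.sub_mul]
    have := Nat.mul_le_mul_right n hk
    omega
  have hn0 : (0 : ℝ) < n := by exact_mod_cast two_pos.trans_le hn
  have hk0 : (0 : ℝ) < k := by exact_mod_cast two_pos.trans_le hk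
  have hk2 : (2 : ℝ) ≤ k := by exact_mod_cast hk
  have hlogn : (0.69 : ℝ) ≤ Real.log n := by
    have := Real.log_le_log two_pos (show (2 : ℝ) ≤ n by exact_mod_cast hn)
    linarith [Real.log_two_gt_d9]
  have hlogk : Real.log k ≤ k := (Real.log_le_sub_one_of_pos hk0).trans (sub_le_self _ zero_le_one)
  have hexponent : 15 * (Real.log k + Real.log n) ≤ Real.log n * (50 * k * Real.log n) := by
    have hL : 0.47 ≤ Real.log n * Real.log n := by nlinarith
    have hkL : k * 0.47 ≤ k * (Real.log n * Real.log n) := by gcongr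
    have hLL : 1.38 * Real.log n ≤ k * (Real.log n * Real.log n) := by
      rw [← mul_assoc]
      gcongr
      nlinarith
    linarith
  calc (((k - 2) * n + 2 : ℕ) : ℝ) ^ 15 ≤ ((k * n : ℕ) : ℝ) ^ 15 := by gcongr
    _ = Real.exp (15 * (Real.log k + Real.log n)) := by
        rw [← Real.log_mul hk0.ne' hn0.ne', ← Real.log_rpow (by positivity),
          Real.exp_log (by positivity), Real.rpow_ofNat, Nat.cast_mul]
    _ ≤ Real.exp (Real.log n * (50 * k * Real.log n)) := Real.exp_le_exp.2 hexponent
    _ = (n : ℝ) ^ (50 * (k : ℝ) * Real.log n) := (Real.rpow_def_of_pos hn0 _).symm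

end Walk

/-- there is an absolute constant `C` such that for every `k ≥ 3` and
`n ≥ 2`, for every integer `t ≥ n^{C·k·log n}` and every starting `k`-angulation `x`,
the total variation distance between the distribution after `t` steps of the lazy
`k`-angulation flip walk and the uniform distribution is at most 1/4. -/
theorem kangulation_flip_walk_mixing :
    ∃ C : ℝ, ∀ k n : ℕ, 3 ≤ k → 2 ≤ n → ∀ t : ℕ,
      (n : ℝ) ^ (C * (k : ℝ) * Real.log n) ≤ (t : ℝ) →
      ∀ x : KAngulation k n,
        (1 / 2 : ℝ) * ∑ y : KAngulation k n,
            |(kFlipWalkMatrix k n ^ t) x y - 1 / (Nat.card (KAngulation k n) : ℝ)|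
          ≤ 1 / 4 :=
  ⟨50, fun _ _ hk hn _ ht => kangulation_flip_walk_mixing_general hk hn
    ((pow_le_rpow_mul_log (by omega) hn).trans ht)⟩
end

section
/- For every n ≥ 2 and every p with 1 ≤ p ≤ n, the subgraph of the associahedron graph K_n induced by the oriented class Θ_{T_p} is isomorphic to the Cartesian product K_{p−1} □ K_{n−p} of two smaller associahedron graphs; in particular each oriented class induces a product K_l □ K_r with l + r = n − 1. -/
open Finset

/-- A triangulation of the convex `(n+2)`-gon: a maximal set of pairwise
non-crossing diagonals. -/
def IsTriangulation (n : ℕ) (t : Finset (Sym2 (Fin (n + 2)))) : Prop :=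
  (∀ e ∈ t, IsDiagonal e) ∧
  (∀ e ∈ t, ∀ f ∈ t, ¬ Crosses e f) ∧
  (∀ e, IsDiagonal e → (∀ f ∈ t, ¬ Crosses e f) → e ∈ t)

/-- The type of triangulations of the convex `(n+2)`-gon. -/
def Triangulation (n : ℕ) : Type :=
  {t : Finset (Sym2 (Fin (n + 2))) // IsTriangulation n t}

instance (n : ℕ) : DecidableEq (Triangulation n) := fun a b =>
  decidable_of_iff (a.val = b.val) Subtype.ext_iff.symm

noncomputable instance (n : ℕ) : Fintype (Triangulation n) := by
  classical exact Subtype.fintype _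

/-- The associahedron graph `K_n`: vertices are the triangulations of the convex
`(n+2)`-gon, with an edge between two triangulations iff they differ in exactly
one diagonal (a flip). -/
def assocGraph (n : ℕ) : SimpleGraph (Triangulation n) where
  Adj s t := (s.val \ t.val).card = 1 ∧ (t.val \ s.val).card = 1
  symm := ⟨fun s t h => ⟨h.2, h.1⟩⟩
  loopless := ⟨fun s h => by simp at h⟩

/-- The set of edges of `G` with exactly one endpoint in `S`. -/
def edgeBoundary {V : Type*} (G : SimpleGraph V) (S : Set V) : Set (Sym2 V) :=
  {e | e ∈ G.edgeSet ∧ ∃ u v : V, e = s(u, v) ∧ u ∈ S ∧ v ∉ S}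

/-- `e` is an edge of the triangulation `t`: a side of the polygon or one of the
diagonals of `t`. -/
def EdgeOfT {n : ℕ} (t : Triangulation n) (e : Sym2 (Fin (n + 2))) : Prop :=
  IsSide e ∨ e ∈ t.val

/-- The triangle with vertices `a`, `b`, `c` is one of the `n` triangles of the
triangulation `t` (for pairwise non-crossing sets of diagonals this holds exactly
when all three chords are edges of `t`). -/
def IsTriangleOf {n : ℕ} (t : Triangulation n) (a b c : Fin (n + 2)) : Prop :=
  a ≠ b ∧ b ≠ c ∧ a ≠ c ∧ EdgeOfT t s(a, b) ∧ EdgeOfT t s(b, c) ∧ EdgeOfT t s(a, c)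

open Fin.NatCast in
/-- The oriented class `Θ_{T_p}` (w.r.t. the special side `e* = {0, n+1}`): the set of
triangulations of the convex `(n+2)`-gon having the triangle `T_p = {0, p, n+1}` as one of
their triangles. -/
def orientedClass (n p : ℕ) : Set (Triangulation n) :=
  {t | IsTriangleOf t (0 : Fin (n + 2)) ((p : ℕ) : Fin (n + 2)) (((n + 1 : ℕ)) : Fin (n + 2))}

/-- The set `E_{p,q}` of edges of `K_n` with one endpoint in `Θ_{T_p}` and the other
in `Θ_{T_q}`. -/
def edgesBetween (n p q : ℕ) : Set (Sym2 (Triangulation n)) :=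
  {e | e ∈ (assocGraph n).edgeSet ∧
    ∃ u v : Triangulation n, e = s(u, v) ∧ u ∈ orientedClass n p ∧ v ∈ orientedClass n q}

/-- The boundary set `∂_{p,q}`: triangulations in `Θ_{T_p}` having a neighbor in
`Θ_{T_q}`. -/
def boundarySet (n p q : ℕ) : Set (Triangulation n) :=
  {t | t ∈ orientedClass n p ∧
    ∃ t' : Triangulation n, t' ∈ orientedClass n q ∧ (assocGraph n).Adj t t'}

/-!
The sides of the triangle `T_p` cut the polygon into a left polygon on `0, …, p` and a right
polygon on `p, …, n + 1`. A diagonal that crosses neither `{0, p}` nor `{p, n + 1}` is a chord of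
exactly one of them, so a triangulation containing `T_p` restricts to a pair of triangulations.
Every pair arises: glue the two triangulations and the sides of `T_p`, extend the result to a
maximal dissection, and note that its restrictions contain, hence by maximality equal, the given
triangulations. Two triangulations in the class share the sides of `T_p`, so the size of their
difference is the sum of the sizes over the two subpolygons, and a flip is a flip in exactly one
factor.
-/

section UnorderedPairs

variable {α β : Type*} {a b : α} {P : α → α → Prop}

theorem forall_mk_eq_imp_iff : (∀ x y, s(a, b) = s(x, y) → P x y) ↔ P a b ∧ P b a := by
  simp only [Sym2.eq_iff]
  exact ⟨fun h => ⟨h a b (.inl ⟨rfl, rfl⟩), h b a (.inr ⟨rfl, rfl⟩)⟩, by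
    rintro ⟨hab, hba⟩ x y (⟨rfl, rfl⟩ | ⟨rfl, rfl⟩) <;> assumption⟩

theorem exists_mk_eq_and_iff : (∃ x y, s(a, b) = s(x, y) ∧ P x y) ↔ P a b ∨ P b a := by
  simpa only [not_forall, exists_prop, not_and_or, not_not] using
    (forall_mk_eq_imp_iff (P := fun x y => ¬ P x y)).not

theorem isDiag_iff_inf_eq_sup [Lattice α] {e : Sym2 α} : e.IsDiag ↔ e.inf = e.sup := by
  induction e with | _ a b => exact inf_eq_sup.symm

variable [LinearOrder α] [LinearOrder β] {f : α → β}

theorem exists_le_mk_eq (e : Sym2 α) : ∃ a b, a ≤ b ∧ s(a, b) = e :=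
  ⟨e.inf, e.sup, e.inf_le_sup, Sym2.sortEquiv.symm_apply_apply e⟩

theorem inf_sym2_map (hf : Monotone f) (e : Sym2 α) : (Sym2.map f e).inf = f e.inf := by
  induction e with | _ a b => exact (hf.map_inf a b).symm

theorem sup_sym2_map (hf : Monotone f) (e : Sym2 α) : (Sym2.map f e).sup = f e.sup := by
  induction e with | _ a b => exact (hf.map_sup a b).symm

end UnorderedPairs

section Chords

variable {m n : ℕ}

theorem isDiagonal_iff_not_isSide {e : Sym2 (Fin m)} :
    IsDiagonal e ↔ ¬ e.IsDiag ∧ ¬ IsSide e := by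
  simp [IsDiagonal, IsSide]

/-- The distinguished side `e* = {0, n+1}`. -/
def rootSide (n : ℕ) : Sym2 (Fin (n + 2)) := s(0, Fin.last (n + 1))

theorem eq_rootSide_iff {e : Sym2 (Fin (n + 2))} :
    e = rootSide n ↔ e.inf = 0 ∧ e.sup = Fin.last (n + 1) := by
  rw [← Sym2.inf_eq_inf_and_sup_eq_sup]
  simp [rootSide]

theorem polyAdj_comm {a b : Fin m} : PolyAdj a b ↔ PolyAdj b a := or_comm

theorem polyAdj_iff_of_le {a b : Fin (n + 2)} (hab : a ≤ b) :
    PolyAdj a b ↔ a ⋖ b ∨ a = 0 ∧ b = Fin.last (n + 1) := by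
  rcases hab.eq_or_lt with rfl | hlt
  · simp only [PolyAdj, sub_self, Fin.val_zero, zero_ne_one, or_self, false_iff]
    rintro (h | ⟨rfl, h⟩)
    exacts [h.lt.false, Fin.last_pos.ne h]
  · rw [PolyAdj, Fin.sub_val_of_le hab, Fin.coe_sub_iff_lt.2 hlt, Fin.covBy_iff,
      Nat.covBy_iff_add_one_eq, Fin.ext_iff, Fin.ext_iff, Fin.val_zero, Fin.val_last]
    rw [Fin.lt_def] at hlt
    omega

theorem isSide_mk_iff {a b : Fin m} : IsSide s(a, b) ↔ PolyAdj a b := by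
  rw [IsSide, exists_mk_eq_and_iff, polyAdj_comm (a := b), or_self]

theorem isSide_iff_s5 {e : Sym2 (Fin (n + 2))} :
    IsSide e ↔ e.inf ⋖ e.sup ∨ e = rootSide n := by
  obtain ⟨a, b, hab, rfl⟩ := exists_le_mk_eq e
  rw [isSide_mk_iff, polyAdj_iff_of_le hab, eq_rootSide_iff, Sym2.inf_mk, Sym2.sup_mk,
    inf_of_le_left hab, sup_of_le_right hab]

theorem isSide_rootSide : IsSide (rootSide n) :=
  isSide_iff_s5.2 (.inr rfl)

theorem isDiagonal_iff_s5 {e : Sym2 (Fin (n + 2))} :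
    IsDiagonal e ↔ ¬ e.IsDiag ∧ ¬ e.inf ⋖ e.sup ∧ e ≠ rootSide n := by
  rw [isDiagonal_iff_not_isSide, isSide_iff_s5, not_or]

theorem cycBtw_iff_of_le {a b x : Fin m} (hab : a ≤ b) : CycBtw a b x ↔ a < x ∧ x < b := by
  rw [CycBtw, Fin.sub_val_of_le hab, Fin.lt_def, Fin.lt_def]
  rw [Fin.le_def] at hab
  rcases le_or_gt a x with h | h
  · rw [Fin.sub_val_of_le h]
    omega
  · rw [Fin.coe_sub_iff_lt.2 h]
    omega

theorem cycBtw_iff_of_gt {a b x : Fin m} (hba : b < a) : CycBtw a b x ↔ a < x ∨ x < b := by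
  rw [CycBtw, Fin.coe_sub_iff_lt.2 hba, Fin.lt_def, Fin.lt_def]
  rw [Fin.lt_def] at hba
  rcases le_or_gt a x with h | h
  · rw [Fin.sub_val_of_le h]
    omega
  · rw [Fin.coe_sub_iff_lt.2 h]
    omega

theorem crosses_mk_iff {a b c d : Fin m} :
    Crosses s(a, b) s(c, d) ↔
      Xor (CycBtw a b c) (CycBtw a b d) ∧ Xor (CycBtw b a c) (CycBtw b a d) := by
  simp only [Crosses, forall_mk_eq_imp_iff, exists_mk_eq_and_iff]
  change (Xor _ _ ∨ Xor _ _) ∧ (Xor _ _ ∨ Xor _ _) ↔ _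
  rw [xor_comm (CycBtw a b d), xor_comm (CycBtw b a d), or_self, or_self]

theorem crosses_iff_s5 {e f : Sym2 (Fin m)} :
    Crosses e f ↔ (e.inf < f.inf ∧ f.inf < e.sup ∧ e.sup < f.sup) ∨
      (f.inf < e.inf ∧ e.inf < f.sup ∧ f.sup < e.sup) := by
  obtain ⟨a, b, hab, rfl⟩ := exists_le_mk_eq e
  obtain ⟨c, d, hcd, rfl⟩ := exists_le_mk_eq f
  simp only [crosses_mk_iff, Sym2.inf_mk, Sym2.sup_mk, inf_of_le_left, sup_of_le_right, hab, hcd]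
  rcases hab.eq_or_lt with rfl | hlt
  · simp only [cycBtw_iff_of_le le_rfl]
    grind [Xor]
  · rw [cycBtw_iff_of_le hab, cycBtw_iff_of_le hab, cycBtw_iff_of_gt hlt, cycBtw_iff_of_gt hlt]
    grind [Xor]

theorem crosses_comm {e f : Sym2 (Fin m)} : Crosses e f ↔ Crosses f e := by
  rw [crosses_iff_s5, crosses_iff_s5, or_comm]

theorem not_crosses_self (e : Sym2 (Fin m)) : ¬ Crosses e e := by
  simp [crosses_iff_s5]

theorem IsSide.not_crosses {e : Sym2 (Fin (n + 2))} (he : IsSide e) (f : Sym2 (Fin (n + 2))) :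
    ¬ Crosses e f := by
  rw [crosses_iff_s5]
  rcases isSide_iff_s5.1 he with hcov | rfl
  · rintro (⟨h₁, h₂, -⟩ | ⟨-, h₁, h₂⟩)
    exacts [hcov.2 h₁ h₂, hcov.2 h₁ h₂]
  · rintro (⟨-, -, h⟩ | ⟨h, -, -⟩)
    · exact (Fin.le_last _).not_gt h
    · simp [rootSide] at h

end Chords

section Dissections

variable {m n : ℕ}

/-- A dissection of the convex `m`-gon, i.e. a partial triangulation: a set of pairwise
non-crossing diagonals. -/
def IsDissection (t : Finset (Sym2 (Fin m))) : Prop :=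
  (∀ e ∈ t, IsDiagonal e) ∧ ∀ e ∈ t, ∀ f ∈ t, ¬ Crosses e f

theorem isTriangulation_iff_maximal {t : Finset (Sym2 (Fin (n + 2)))} :
    IsTriangulation n t ↔ Maximal IsDissection t := by
  refine ⟨fun ⟨hdiag, hcross, hmax⟩ => ⟨⟨hdiag, hcross⟩, fun u hu htu e he =>
    hmax e (hu.1 e he) fun f hf => hu.2 e he f (htu hf)⟩, fun h => ⟨h.prop.1, h.prop.2, ?_⟩⟩
  intro e he hcross
  have hinsert : IsDissection (insert e t) := by
    refine ⟨(forall_mem_insert ..).2 ⟨he, h.prop.1⟩, ?_⟩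
    simp only [forall_mem_insert]
    exact ⟨⟨not_crosses_self e, hcross⟩,
      fun f hf => ⟨crosses_comm.not.2 (hcross f hf), h.prop.2 f hf⟩⟩
  exact h.le_of_ge hinsert (subset_insert e t) (mem_insert_self e t)

theorem IsTriangulation.isDissection {t : Finset (Sym2 (Fin (n + 2)))}
    (ht : IsTriangulation n t) : IsDissection t :=
  ⟨ht.1, ht.2.1⟩

theorem IsDissection.not_crosses_of_mem_insert {t : Finset (Sym2 (Fin (n + 2)))}
    (ht : IsDissection t) {e f : Sym2 (Fin (n + 2))} (he : e ∈ insert (rootSide n) t)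
    (hf : f ∈ insert (rootSide n) t) : ¬ Crosses e f := by
  rcases mem_insert.1 he with rfl | he
  · exact isSide_rootSide.not_crosses f
  rcases mem_insert.1 hf with rfl | hf
  · exact crosses_comm.not.2 (isSide_rootSide.not_crosses e)
  exact ht.2 e he f hf

theorem IsDissection.exists_triangulation_superset {t : Finset (Sym2 (Fin (n + 2)))}
    (ht : IsDissection t) : ∃ T : Triangulation n, t ⊆ T.val := by
  obtain ⟨T, htT, hT⟩ := Finite.exists_le_maximal ht
  exact ⟨⟨T, isTriangulation_iff_maximal.2 hT⟩, htT⟩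

theorem Triangulation.eq_of_subset {s t : Triangulation n} (h : s.val ⊆ t.val) : s = t :=
  Subtype.ext <| (isTriangulation_iff_maximal.1 s.2).eq_of_le
    (isTriangulation_iff_maximal.1 t.2).prop h

theorem Triangulation.card_sdiff_eq_zero_iff {s t : Triangulation n} :
    #(s.val \ t.val) = 0 ↔ s = t := by
  rw [card_eq_zero, sdiff_eq_empty_iff_subset]
  exact ⟨Triangulation.eq_of_subset, fun h => h ▸ Subset.rfl⟩

theorem EdgeOfT.not_crosses {t : Triangulation n} {e f : Sym2 (Fin (n + 2))}
    (he : EdgeOfT t e) (hf : f ∈ t.val) : ¬ Crosses e f :=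
  he.elim (fun h => h.not_crosses f) fun h => t.2.2.1 e h f hf

theorem EdgeOfT.mem {t : Triangulation n} {e : Sym2 (Fin (n + 2))}
    (he : EdgeOfT t e) (hd : IsDiagonal e) : e ∈ t.val :=
  he.resolve_left (isDiagonal_iff_not_isSide.1 hd).2

theorem edgeOfT_of_isDiagonal_imp_mem {t : Triangulation n} {e : Sym2 (Fin (n + 2))}
    (he : ¬ e.IsDiag) (h : IsDiagonal e → e ∈ t.val) : EdgeOfT t e :=
  or_iff_not_imp_left.2 fun hside => h (isDiagonal_iff_not_isSide.2 ⟨he, hside⟩)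

end Dissections

section Subpolygons

variable {m n : ℕ}

theorem crosses_map (φ : Fin m ↪o Fin n) {e f : Sym2 (Fin m)} :
    Crosses (Sym2.map φ e) (Sym2.map φ f) ↔ Crosses e f := by
  simp only [crosses_iff_s5, inf_sym2_map φ.monotone, sup_sym2_map φ.monotone, φ.lt_iff_lt]

variable {φ : Fin (m + 2) ↪o Fin (n + 2)}

theorem inf_map_rootSide : (Sym2.map φ (rootSide m)).inf = φ 0 := by
  simp [rootSide]

theorem sup_map_rootSide : (Sym2.map φ (rootSide m)).sup = φ (Fin.last (m + 1)) := by
  simp [rootSide]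

theorem not_isDiag_map_rootSide (φ : Fin (m + 2) ↪o Fin (n + 2)) :
    ¬ (Sym2.map φ (rootSide m)).IsDiag := by
  rw [Sym2.isDiag_map φ.injective]
  exact Fin.last_pos.ne

theorem IsDiagonal.map (φ : Fin (m + 2) ↪o Fin (n + 2)) {e : Sym2 (Fin (m + 2))}
    (he : IsDiagonal e) : IsDiagonal (Sym2.map φ e) := by
  rw [isDiagonal_iff_s5, ne_eq, eq_rootSide_iff] at he ⊢
  rw [Sym2.isDiag_map φ.injective, inf_sym2_map φ.monotone, sup_sym2_map φ.monotone]
  refine ⟨he.1, fun h => he.2.1 (h.of_image φ), fun ⟨hinf, hsup⟩ => he.2.2 ⟨?_, ?_⟩⟩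
  · exact Fin.le_zero_iff.1 (φ.le_iff_le.1 (hinf.trans_le (Fin.zero_le _)))
  · exact Fin.last_le_iff.1 (φ.le_iff_le.1 ((Fin.le_last _).trans_eq hsup.symm))

theorem isDiagonal_or_eq_rootSide_of_map (hφ : (Set.range φ).OrdConnected)
    {e : Sym2 (Fin (m + 2))} (he : IsDiagonal (Sym2.map φ e)) :
    IsDiagonal e ∨ e = rootSide m := by
  rw [isDiagonal_iff_s5, Sym2.isDiag_map φ.injective, inf_sym2_map φ.monotone,
    sup_sym2_map φ.monotone, hφ.apply_covBy_apply_iff] at he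
  rw [isDiagonal_iff_s5]
  tauto

theorem exists_map_eq_of_le (hφ : (Set.range φ).OrdConnected) {g : Sym2 (Fin (n + 2))}
    (hinf : φ 0 ≤ g.inf) (hsup : g.sup ≤ φ (Fin.last (m + 1))) : ∃ e, Sym2.map φ e = g := by
  have mem_range {x} (hx : φ 0 ≤ x ∧ x ≤ φ (Fin.last (m + 1))) : x ∈ Set.range φ :=
    hφ.out ⟨_, rfl⟩ ⟨_, rfl⟩ hx
  obtain ⟨a, ha⟩ := mem_range ⟨hinf, g.inf_le_sup.trans hsup⟩
  obtain ⟨b, hb⟩ := mem_range ⟨hinf.trans g.inf_le_sup, hsup⟩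
  refine ⟨s(a, b), ?_⟩
  rw [Sym2.map_mk, ha, hb]
  exact Sym2.sortEquiv.symm_apply_apply g

theorem exists_map_eq_of_crosses (hφ : (Set.range φ).OrdConnected) {e : Sym2 (Fin (m + 2))}
    {g : Sym2 (Fin (n + 2))} (hcross : Crosses (Sym2.map φ e) g)
    (hroot : ¬ Crosses (Sym2.map φ (rootSide m)) g) : ∃ f, Sym2.map φ f = g := by
  have hinf : φ 0 ≤ φ e.inf := φ.monotone (Fin.zero_le _)
  have hsup : φ e.sup ≤ φ (Fin.last (m + 1)) := φ.monotone (Fin.le_last _)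
  rw [crosses_iff_s5, inf_sym2_map φ.monotone, sup_sym2_map φ.monotone] at hcross
  rw [crosses_iff_s5, inf_map_rootSide, sup_map_rootSide] at hroot
  apply exists_map_eq_of_le hφ <;> grind

open Classical in
/-- The restriction of a set of chords to the subpolygon spanned by the vertices in the range
of `φ`. The sides of the subpolygon are left out, even those that are diagonals of the
ambient polygon. -/
noncomputable def restrictChords (φ : Fin (m + 2) ↪o Fin (n + 2))
    (t : Finset (Sym2 (Fin (n + 2)))) : Finset (Sym2 (Fin (m + 2))) :=
  {e | IsDiagonal e ∧ Sym2.map φ e ∈ t}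

theorem mem_restrictChords {t : Finset (Sym2 (Fin (n + 2)))} {e : Sym2 (Fin (m + 2))} :
    e ∈ restrictChords φ t ↔ IsDiagonal e ∧ Sym2.map φ e ∈ t := by
  simp [restrictChords]

theorem isTriangulation_restrictChords (hφ : (Set.range φ).OrdConnected) {t : Triangulation n}
    (ht : EdgeOfT t (Sym2.map φ (rootSide m))) : IsTriangulation m (restrictChords φ t.val) := by
  refine ⟨fun e he => (mem_restrictChords.1 he).1, fun e he f hf => ?_, fun e he hcross => ?_⟩
  · rw [← crosses_map φ]
    exact t.2.2.1 _ (mem_restrictChords.1 he).2 _ (mem_restrictChords.1 hf).2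
  · refine mem_restrictChords.2 ⟨he, t.2.2.2 _ (he.map φ) fun g hg hcr => ?_⟩
    obtain ⟨f, rfl⟩ := exists_map_eq_of_crosses hφ hcr (ht.not_crosses hg)
    rw [crosses_map] at hcr
    rcases isDiagonal_or_eq_rootSide_of_map hφ (t.2.1 _ hg) with hf | rfl
    · exact hcross f (mem_restrictChords.2 ⟨hf, hg⟩) hcr
    · exact isSide_rootSide.not_crosses e (crosses_comm.1 hcr)

theorem map_mem_sdiff_iff (hφ : (Set.range φ).OrdConnected) {t t' : Triangulation n}
    (ht' : EdgeOfT t' (Sym2.map φ (rootSide m))) {e : Sym2 (Fin (m + 2))} :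
    Sym2.map φ e ∈ t.val \ t'.val ↔ e ∈ restrictChords φ t.val \ restrictChords φ t'.val := by
  simp only [mem_sdiff, mem_restrictChords]
  refine ⟨fun ⟨he, he'⟩ => ?_, fun ⟨⟨hd, he⟩, he'⟩ => ⟨he, fun h => he' ⟨hd, h⟩⟩⟩
  have hd := t.2.1 _ he
  rcases isDiagonal_or_eq_rootSide_of_map hφ hd with h | rfl
  · exact ⟨⟨h, he⟩, fun h' => he' h'.2⟩
  · exact absurd (ht'.mem hd) he'

end Subpolygons

section Splitting

variable (l r : ℕ)

/-- The subpolygon on the vertices `0, …, l + 1`, to the left of the triangle `T_{l+1}`. -/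
def leftPolygon : Fin (l + 2) ↪o Fin (l + 1 + r + 2) :=
  Fin.castLEOrderEmb (by lia)

/-- The subpolygon on the vertices `l + 1, …, l + r + 2`, to the right of the triangle
`T_{l+1}`. -/
def rightPolygon : Fin (r + 2) ↪o Fin (l + 1 + r + 2) :=
  Fin.natAddOrderEmb (l + 1)

variable {l r}

theorem leftPolygon_zero : leftPolygon l r 0 = 0 := rfl

theorem leftPolygon_last : leftPolygon l r (Fin.last (l + 1)) = rightPolygon l r 0 := rfl

theorem rightPolygon_last :
    rightPolygon l r (Fin.last (r + 1)) = Fin.last (l + 1 + r + 1) := rfl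

theorem ordConnected_range_leftPolygon : (Set.range (leftPolygon l r)).OrdConnected := by
  refine ⟨?_⟩
  rintro _ - _ ⟨b, rfl⟩ x ⟨-, hxb⟩
  exact ⟨⟨x, (Fin.le_def.1 hxb).trans_lt b.2⟩, rfl⟩

theorem ordConnected_range_rightPolygon : (Set.range (rightPolygon l r)).OrdConnected := by
  refine ⟨?_⟩
  rintro _ ⟨a, rfl⟩ _ - x ⟨hax, -⟩
  have hlx : l + 1 ≤ x.val := (Nat.le_add_right _ _).trans hax
  exact ⟨⟨x - (l + 1), by lia⟩, Fin.ext (Nat.add_sub_cancel' hlx)⟩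

theorem mem_orientedClass_iff {t : Triangulation (l + 1 + r)} :
    t ∈ orientedClass (l + 1 + r) (l + 1) ↔
      EdgeOfT t (Sym2.map (leftPolygon l r) (rootSide l)) ∧
        EdgeOfT t (Sym2.map (rightPolygon l r) (rootSide r)) := by
  have hroot : EdgeOfT t s(0, Fin.last (l + 1 + r + 1)) := .inl isSide_rootSide
  have hapex : (open Fin.NatCast in ((l + 1 : ℕ) : Fin (l + 1 + r + 2))) = rightPolygon l r 0 :=
    Fin.ext (Nat.mod_eq_of_lt (by lia))
  have hlast : (open Fin.NatCast in ((l + 1 + r + 1 : ℕ) : Fin (l + 1 + r + 2))) = Fin.last _ :=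
    Fin.natCast_eq_last _
  have hzero_lt : 0 < rightPolygon l r 0 := by
    rw [← leftPolygon_last, ← leftPolygon_zero, OrderEmbedding.lt_iff_lt]
    exact Fin.last_pos
  have hlt_last : rightPolygon l r 0 < Fin.last _ := by
    rw [← rightPolygon_last, OrderEmbedding.lt_iff_lt]
    exact Fin.last_pos
  rw [orientedClass, Set.mem_ofPred_eq, IsTriangleOf, hapex, hlast]
  exact ⟨fun ⟨_, _, _, hleft, hright, _⟩ => ⟨hleft, hright⟩, fun ⟨hleft, hright⟩ =>
    ⟨hzero_lt.ne, hlt_last.ne, (hzero_lt.trans hlt_last).ne, hleft, hright, hroot⟩⟩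

theorem sup_map_leftPolygon_le (e : Sym2 (Fin (l + 2))) (f : Sym2 (Fin (r + 2))) :
    (Sym2.map (leftPolygon l r) e).sup ≤ (Sym2.map (rightPolygon l r) f).inf := by
  rw [sup_sym2_map (leftPolygon l r).monotone, inf_sym2_map (rightPolygon l r).monotone]
  calc leftPolygon l r e.sup ≤ leftPolygon l r (Fin.last _) := by gcongr; exact Fin.le_last _
    _ = rightPolygon l r 0 := leftPolygon_last
    _ ≤ rightPolygon l r f.inf := by gcongr; exact Fin.zero_le _

theorem not_crosses_leftPolygon_rightPolygon (e : Sym2 (Fin (l + 2))) (f : Sym2 (Fin (r + 2))) :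
    ¬ Crosses (Sym2.map (leftPolygon l r) e) (Sym2.map (rightPolygon l r) f) := by
  have hle := sup_map_leftPolygon_le e f
  rw [crosses_iff_s5]
  rintro (⟨-, h, -⟩ | ⟨h, -, -⟩)
  exacts [h.not_ge hle, h.not_ge ((Sym2.inf_le_sup _).trans hle)]

theorem map_leftPolygon_ne_map_rightPolygon {e : Sym2 (Fin (l + 2))} (he : ¬ e.IsDiag)
    (f : Sym2 (Fin (r + 2))) :
    Sym2.map (leftPolygon l r) e ≠ Sym2.map (rightPolygon l r) f := by
  intro h
  have hle := sup_map_leftPolygon_le e f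
  rw [← h, inf_sym2_map (leftPolygon l r).monotone, sup_sym2_map (leftPolygon l r).monotone,
    OrderEmbedding.le_iff_le] at hle
  exact he (isDiag_iff_inf_eq_sup.2 (e.inf_le_sup.antisymm hle))

theorem disjoint_map_leftPolygon_map_rightPolygon {s : Finset (Sym2 (Fin (l + 2)))}
    (hs : ∀ e ∈ s, ¬ e.IsDiag) (t : Finset (Sym2 (Fin (r + 2)))) :
    Disjoint (s.map (leftPolygon l r).toEmbedding.sym2Map)
      (t.map (rightPolygon l r).toEmbedding.sym2Map) := by
  simp only [disjoint_left, mem_map, not_exists, not_and]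
  rintro _ ⟨e, he, rfl⟩ f - h
  exact map_leftPolygon_ne_map_rightPolygon (hs e he) f h.symm

theorem exists_map_leftPolygon_or_map_rightPolygon {t : Triangulation (l + 1 + r)}
    (ht : t ∈ orientedClass (l + 1 + r) (l + 1)) {g : Sym2 (Fin (l + 1 + r + 2))}
    (hg : g ∈ t.val) :
    (∃ e, Sym2.map (leftPolygon l r) e = g) ∨ ∃ f, Sym2.map (rightPolygon l r) f = g := by
  obtain ⟨hleft, hright⟩ := mem_orientedClass_iff.1 ht
  have hcrossL := hleft.not_crosses hg
  have hcrossR := hright.not_crosses hg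
  have hne := (isDiagonal_iff_s5.1 (t.2.1 g hg)).2.2
  rw [ne_eq, eq_rootSide_iff, not_and] at hne
  rw [crosses_iff_s5, inf_map_rootSide, sup_map_rootSide, leftPolygon_zero, leftPolygon_last]
    at hcrossL
  rw [crosses_iff_s5, inf_map_rootSide, sup_map_rootSide, rightPolygon_last] at hcrossR
  have hside : g.sup ≤ rightPolygon l r 0 ∨ rightPolygon l r 0 ≤ g.inf := by
    have hzero := Fin.zero_le g.inf
    have hlast := Fin.le_last g.sup
    grind
  exact hside.imp (exists_map_eq_of_le ordConnected_range_leftPolygon (Fin.zero_le _))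
    (exists_map_eq_of_le ordConnected_range_rightPolygon · (Fin.le_last _))

/-- The triangulation of the left subpolygon induced by a triangulation containing `T_{l+1}`. -/
noncomputable def restrictLeft (t : orientedClass (l + 1 + r) (l + 1)) : Triangulation l :=
  ⟨restrictChords (leftPolygon l r) t.1.val,
    isTriangulation_restrictChords ordConnected_range_leftPolygon
      (mem_orientedClass_iff.1 t.2).1⟩

/-- The triangulation of the right subpolygon induced by a triangulation containing
`T_{l+1}`. -/
noncomputable def restrictRight (t : orientedClass (l + 1 + r) (l + 1)) : Triangulation r :=
  ⟨restrictChords (rightPolygon l r) t.1.val,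
    isTriangulation_restrictChords ordConnected_range_rightPolygon
      (mem_orientedClass_iff.1 t.2).2⟩

theorem sdiff_eq_map_union_map (t t' : orientedClass (l + 1 + r) (l + 1)) :
    t.1.val \ t'.1.val =
      ((restrictLeft t).val \ (restrictLeft t').val).map (leftPolygon l r).toEmbedding.sym2Map ∪
      ((restrictRight t).val \ (restrictRight t').val).map
        (rightPolygon l r).toEmbedding.sym2Map := by
  obtain ⟨hleft', hright'⟩ := mem_orientedClass_iff.1 t'.2
  ext g
  simp only [mem_union, mem_map, Function.Embedding.sym2Map_apply]
  constructor
  · intro hg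
    rcases exists_map_leftPolygon_or_map_rightPolygon t.2 (mem_sdiff.1 hg).1 with
      ⟨e, rfl⟩ | ⟨f, rfl⟩
    · exact .inl ⟨e, (map_mem_sdiff_iff ordConnected_range_leftPolygon hleft').1 hg, rfl⟩
    · exact .inr ⟨f, (map_mem_sdiff_iff ordConnected_range_rightPolygon hright').1 hg, rfl⟩
  · rintro (⟨e, he, rfl⟩ | ⟨f, hf, rfl⟩)
    · exact (map_mem_sdiff_iff ordConnected_range_leftPolygon hleft').2 he
    · exact (map_mem_sdiff_iff ordConnected_range_rightPolygon hright').2 hf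

theorem card_sdiff_eq_add (t t' : orientedClass (l + 1 + r) (l + 1)) :
    #(t.1.val \ t'.1.val) = #((restrictLeft t).val \ (restrictLeft t').val) +
      #((restrictRight t).val \ (restrictRight t').val) := by
  have hnd : ∀ e ∈ (restrictLeft t).val \ (restrictLeft t').val, ¬ e.IsDiag :=
    fun e he => ((restrictLeft t).2.1 e (mem_sdiff.1 he).1).1
  rw [sdiff_eq_map_union_map,
    card_union_of_disjoint (disjoint_map_leftPolygon_map_rightPolygon hnd _), card_map, card_map]

open Classical in
/-- The diagonals of the whole polygon coming from given sets of chords of the left and right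
subpolygons, together with the sides of `T_{l+1}` when these are diagonals. -/
noncomputable def glue (s : Finset (Sym2 (Fin (l + 2)))) (t : Finset (Sym2 (Fin (r + 2)))) :
    Finset (Sym2 (Fin (l + 1 + r + 2))) :=
  {g ∈ (insert (rootSide l) s).map (leftPolygon l r).toEmbedding.sym2Map ∪
    (insert (rootSide r) t).map (rightPolygon l r).toEmbedding.sym2Map | IsDiagonal g}

theorem mem_glue {s : Finset (Sym2 (Fin (l + 2)))} {t : Finset (Sym2 (Fin (r + 2)))}
    {g : Sym2 (Fin (l + 1 + r + 2))} :
    g ∈ glue s t ↔ ((∃ e ∈ insert (rootSide l) s, Sym2.map (leftPolygon l r) e = g) ∨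
      ∃ f ∈ insert (rootSide r) t, Sym2.map (rightPolygon l r) f = g) ∧ IsDiagonal g := by
  simp only [glue, mem_filter, mem_union, mem_map, Function.Embedding.sym2Map_apply]
  rfl

theorem isDissection_glue {s : Finset (Sym2 (Fin (l + 2)))} {t : Finset (Sym2 (Fin (r + 2)))}
    (hs : IsDissection s) (ht : IsDissection t) : IsDissection (glue s t) := by
  refine ⟨fun g hg => (mem_glue.1 hg).2, fun g hg g' hg' => ?_⟩
  rcases (mem_glue.1 hg).1 with ⟨e, he, rfl⟩ | ⟨e, he, rfl⟩ <;>
    rcases (mem_glue.1 hg').1 with ⟨f, hf, rfl⟩ | ⟨f, hf, rfl⟩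
  · exact (crosses_map _).not.2 (hs.not_crosses_of_mem_insert he hf)
  · exact not_crosses_leftPolygon_rightPolygon e f
  · exact crosses_comm.not.2 (not_crosses_leftPolygon_rightPolygon f e)
  · exact (crosses_map _).not.2 (ht.not_crosses_of_mem_insert he hf)

theorem exists_restrictLeft_eq_restrictRight_eq (s : Triangulation l) (t : Triangulation r) :
    ∃ T : orientedClass (l + 1 + r) (l + 1), restrictLeft T = s ∧ restrictRight T = t := by
  obtain ⟨T, hT⟩ :=
    (isDissection_glue s.2.isDissection t.2.isDissection).exists_triangulation_superset
  have hmemL {e} (he : e ∈ insert (rootSide l) s.val)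
      (hd : IsDiagonal (Sym2.map (leftPolygon l r) e)) : Sym2.map (leftPolygon l r) e ∈ T.val :=
    hT (mem_glue.2 ⟨.inl ⟨e, he, rfl⟩, hd⟩)
  have hmemR {f} (hf : f ∈ insert (rootSide r) t.val)
      (hd : IsDiagonal (Sym2.map (rightPolygon l r) f)) : Sym2.map (rightPolygon l r) f ∈ T.val :=
    hT (mem_glue.2 ⟨.inr ⟨f, hf, rfl⟩, hd⟩)
  have hclass : T ∈ orientedClass (l + 1 + r) (l + 1) := mem_orientedClass_iff.2
    ⟨edgeOfT_of_isDiagonal_imp_mem (not_isDiag_map_rootSide _) (hmemL (mem_insert_self _ _)),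
      edgeOfT_of_isDiagonal_imp_mem (not_isDiag_map_rootSide _) (hmemR (mem_insert_self _ _))⟩
  refine ⟨⟨T, hclass⟩, ?_, ?_⟩
  · refine (Triangulation.eq_of_subset fun e he => mem_restrictChords.2 ⟨s.2.1 e he, ?_⟩).symm
    exact hmemL (mem_insert_of_mem he) ((s.2.1 e he).map _)
  · refine (Triangulation.eq_of_subset fun f hf => mem_restrictChords.2 ⟨t.2.1 f hf, ?_⟩).symm
    exact hmemR (mem_insert_of_mem hf) ((t.2.1 f hf).map _)

theorem restrictLeft_prod_restrictRight_bijective :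
    Function.Bijective fun t : orientedClass (l + 1 + r) (l + 1) =>
      (restrictLeft t, restrictRight t) := by
  refine ⟨fun t t' h => ?_, fun ⟨s, t⟩ => ?_⟩
  · obtain ⟨hleft, hright⟩ := Prod.ext_iff.1 h
    rw [Subtype.ext_iff, ← Triangulation.card_sdiff_eq_zero_iff, card_sdiff_eq_add,
      Triangulation.card_sdiff_eq_zero_iff.2 hleft, Triangulation.card_sdiff_eq_zero_iff.2 hright]
  · obtain ⟨T, rfl, rfl⟩ := exists_restrictLeft_eq_restrictRight_eq s t
    exact ⟨T, rfl⟩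

theorem assocGraph_adj_iff_boxProd_adj (t t' : orientedClass (l + 1 + r) (l + 1)) :
    (assocGraph (l + 1 + r)).Adj t.1 t'.1 ↔ ((assocGraph l).boxProd (assocGraph r)).Adj
      (restrictLeft t, restrictRight t) (restrictLeft t', restrictRight t') := by
  have hleft : #((restrictLeft t').val \ (restrictLeft t).val) = 0 ↔
      #((restrictLeft t).val \ (restrictLeft t').val) = 0 := by
    rw [Triangulation.card_sdiff_eq_zero_iff, Triangulation.card_sdiff_eq_zero_iff, eq_comm]
  have hright : #((restrictRight t').val \ (restrictRight t).val) = 0 ↔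
      #((restrictRight t).val \ (restrictRight t').val) = 0 := by
    rw [Triangulation.card_sdiff_eq_zero_iff, Triangulation.card_sdiff_eq_zero_iff, eq_comm]
  simp only [SimpleGraph.boxProd_adj, assocGraph, card_sdiff_eq_add,
    ← Triangulation.card_sdiff_eq_zero_iff]
  omega

/-- The class `Θ_{T_{l+1}}` is the product of the associahedron graphs of the two subpolygons
cut off by `T_{l+1}`. -/
noncomputable def orientedClassIso (l r : ℕ) :
    (assocGraph (l + 1 + r)).induce (orientedClass (l + 1 + r) (l + 1)) ≃g
      (assocGraph l).boxProd (assocGraph r) where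
  toEquiv := .ofBijective _ restrictLeft_prod_restrictRight_bijective
  map_rel_iff' {t t'} := (assocGraph_adj_iff_boxProd_adj t t').symm

end Splitting

/-- for every `n ≥ 2` and `1 ≤ p ≤ n`, the subgraph of the associahedron
`K_n` induced by the oriented class `Θ_{T_p}` is isomorphic to the Cartesian product
`K_{p-1} □ K_{n-p}`; in particular each oriented class induces a product `K_l □ K_r`
with `l + r = n - 1`. -/
theorem orientedClass_isomorphic_boxProd (n p : ℕ) (hn : 2 ≤ n) (hp : 1 ≤ p)
    (hpn : p ≤ n) :
    Nonempty (((assocGraph n).induce (orientedClass n p)) ≃g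
      (assocGraph (p - 1)).boxProd (assocGraph (n - p))) := by
  obtain ⟨l, rfl⟩ := Nat.exists_eq_add_of_le' hp
  obtain ⟨r, rfl⟩ := Nat.exists_eq_add_of_le hpn
  rw [Nat.add_sub_cancel, Nat.add_sub_cancel_left]
  exact ⟨orientedClassIso l r⟩
end
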